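/- arXiv:0708.4258 — 10 statements merged into one kernel-verified Lean document; each statement's English description precedes it below -/
import Mathlib

section
/- Let P' denote the leading principal d×d submatrix of P (rows and columns 0,…,d−1). Then the characteristic polynomial of P over ℂ factors as charpoly(P) = (X−1)·charpoly(P'), every eigenvalue of P' has modulus strictly less than 1 (equivalently, (P')^t → 0 entrywise and the spectral radius of P' is < 1), and consequently P has the eigenvalue 1 with algebraic multiplicity exactly one while its remaining d eigenvalues (with multiplicity) all have modulus strictly less than 1. -/
open Matrix Polynomial Filter

/-!
Expanding `det (X - P)` along the last row, whose only nonzero entry is `X - 1`, gives the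
factorization `charpoly P = (X - 1) * charpoly P'`.

The eigenvalue bound for `P'` is a maximum principle. Given an eigenvector `v` for `μ`, take the
largest index `i` at which `‖v i‖` is maximal, and extend `v` by `0` at the absorbing state `d`.
Then the extended vector has strictly smaller modulus at `i + 1` than at `i`, and `P i (i+1) > 0`,
so averaging against row `i` gives `‖μ‖ * ‖v i‖ < ‖v i‖` (`norm_lt_one_of_mem_spectrum`).
Everything else follows: the spectral radius is `< 1` because the spectrum is compact, the powers
tend to `0` by Gelfand's formula (`tendsto_pow_zero_of_spectralRadius_lt_one`), and `1` is not a
root of `charpoly P'`.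
-/

theorem charpoly_eq_X_sub_one_mul (d : ℕ) (P : Matrix (Fin (d + 1)) (Fin (d + 1)) ℂ)
    (habs : ∀ j, P (Fin.last d) j = if j = Fin.last d then 1 else 0) :
    P.charpoly = (X - 1) * (P.submatrix Fin.castSucc Fin.castSucc).charpoly := by
  rw [Matrix.charpoly, Matrix.det_succ_row _ (Fin.last d), Finset.sum_eq_single (Fin.last d)]
  · have hsub : P.charmatrix.submatrix Fin.castSucc Fin.castSucc
        = (P.submatrix Fin.castSucc Fin.castSucc).charmatrix := by
      ext1 i j
      by_cases h : i = j <;> simp [h]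
    rw [Fin.succAbove_last, hsub]
    simp [habs, Matrix.charpoly, ← two_mul]
  · intro j _ hj
    simp [habs, hj, hj.symm]
  · simp

/-- Maximum principle: at the last index where an eigenvector of the transient block has maximal
modulus, some mass moves up to a state of strictly smaller modulus, so averaging contracts strictly.
-/
theorem norm_lt_one_of_mem_spectrum (d : ℕ) (P : Matrix (Fin (d + 1)) (Fin (d + 1)) ℝ)
    (hnonneg : ∀ i j, 0 ≤ P i j)
    (hrowsum : ∀ i, ∑ j, P i j = 1)
    (hsuper : ∀ i j : Fin (d + 1), (j : ℕ) = (i : ℕ) + 1 → 0 < P i j) (μ : ℂ)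
    (hμ : μ ∈ spectrum ℂ ((P.submatrix Fin.castSucc Fin.castSucc).map (algebraMap ℝ ℂ))) :
    ‖μ‖ < 1 := by
  set A := (P.submatrix Fin.castSucc Fin.castSucc).map (algebraMap ℝ ℂ) with hA
  rw [← Matrix.spectrum_toLin', ← Module.End.hasEigenvalue_iff_mem_spectrum] at hμ
  obtain ⟨v, hv⟩ := hμ.exists_hasEigenvector
  have hvμ : A *ᵥ v = μ • v := by simpa using hv.apply_eq_smul
  obtain ⟨k, hk⟩ : ∃ k, v k ≠ 0 := Function.ne_iff.mp hv.2
  -- The lexicographic order selects the last index among those of maximal modulus.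
  obtain ⟨i, -, hi⟩ := Finset.exists_max_image Finset.univ
    (fun j : Fin d => (toLex (‖v j‖, j) : ℝ ×ₗ Fin d)) ⟨k, Finset.mem_univ k⟩
  have hle : ∀ j, ‖v j‖ ≤ ‖v i‖ := fun j => by
    have := Prod.Lex.le_iff.mp (hi j (Finset.mem_univ j))
    rcases this with h | h
    · exact h.le
    · exact h.1.le
  have hlt : ∀ j, i < j → ‖v j‖ < ‖v i‖ := fun j hj => by
    have := Prod.Lex.le_iff.mp (hi j (Finset.mem_univ j))
    rcases this with h | h
    · exact h
    · exact absurd h.2 (not_le.mpr hj)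
  have hpos : 0 < ‖v i‖ := (norm_pos_iff.mpr hk).trans_le (hle k)
  let w : Fin (d + 1) → ℝ := Fin.snoc (α := fun _ => ℝ) (fun j => ‖v j‖) 0
  have hwc : ∀ j : Fin d, w j.castSucc = ‖v j‖ := fun j => by simp [w]
  have hwl : w (Fin.last d) = 0 := by simp [w]
  have hwle : ∀ j, w j ≤ ‖v i‖ := fun j => by
    induction j using Fin.lastCases with
    | last => rw [hwl]; exact hpos.le
    | cast j => rw [hwc]; exact hle j
  have hwlt : w i.succ < ‖v i‖ := by
    rcases Fin.eq_castSucc_or_eq_last i.succ with ⟨j, hj⟩ | h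
    · rw [hj, hwc]
      refine hlt j ?_
      have := congrArg Fin.val hj
      simp at this
      rw [Fin.lt_def]; omega
    · rw [h, hwl]; exact hpos
  have key : ‖μ‖ * ‖v i‖ < ‖v i‖ := calc
    ‖μ‖ * ‖v i‖ = ‖(A *ᵥ v) i‖ := by rw [hvμ]; simp
    _ ≤ ∑ j, ‖A i j * v j‖ := by
      rw [Matrix.mulVec, dotProduct]
      exact norm_sum_le _ _
    _ = ∑ j : Fin d, P i.castSucc j.castSucc * w j.castSucc := by
      refine Finset.sum_congr rfl fun j _ => ?_
      simp [hA, hwc, abs_of_nonneg (hnonneg _ _)]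
    _ = ∑ j, P i.castSucc j * w j := by rw [Fin.sum_univ_castSucc, hwl]; simp
    _ < ∑ j, P i.castSucc j * ‖v i‖ :=
      Finset.sum_lt_sum (fun j _ => mul_le_mul_of_nonneg_left (hwle j) (hnonneg _ _))
        ⟨i.succ, Finset.mem_univ _, mul_lt_mul_of_pos_left hwlt (hsuper _ _ (by simp))⟩
    _ = ‖v i‖ := by rw [← Finset.sum_mul, hrowsum, one_mul]
  by_contra! h
  nlinarith

theorem tendsto_pow_zero_of_spectralRadius_lt_one {A : Type*} [NormedRing A] [NormedAlgebra ℂ A]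
    [CompleteSpace A] (a : A) (h : spectralRadius ℂ a < 1) :
    Tendsto (fun t : ℕ => a ^ t) atTop (nhds 0) := by
  obtain ⟨s, hs, hs1⟩ := exists_between h
  have hG := spectrum.pow_nnnorm_pow_one_div_tendsto_nhds_spectralRadius a
  have hev : ∀ᶠ n : ℕ in atTop, (‖a ^ n‖₊ : ENNReal) ≤ s ^ n := by
    filter_upwards [hG.eventually_lt_const hs, eventually_gt_atTop 0] with n hn hn0
    have := ENNReal.rpow_le_rpow hn.le (Nat.cast_nonneg (α := ℝ) n)
    rwa [← ENNReal.rpow_mul, one_div_mul_cancel (by positivity), ENNReal.rpow_one,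
      ENNReal.rpow_natCast] at this
  have h0 : Tendsto (fun n : ℕ => (‖a ^ n‖₊ : ENNReal)) atTop (nhds 0) :=
    tendsto_of_tendsto_of_tendsto_of_le_of_le' tendsto_const_nhds
      (ENNReal.tendsto_pow_atTop_nhds_zero_of_lt_one hs1)
      (Eventually.of_forall fun _ => zero_le) hev
  rw [tendsto_zero_iff_norm_tendsto_zero]
  have h1 : Tendsto (fun n : ℕ => ‖a ^ n‖₊) atTop (nhds 0) :=
    ENNReal.tendsto_coe.mp h0
  exact NNReal.tendsto_coe.mpr h1

section

attribute [local instance] Matrix.linftyOpNormedRing Matrix.linftyOpNormedAlgebra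

theorem matrix_spectralRadius_lt_one (d : ℕ) (hd : 1 ≤ d) (A : Matrix (Fin d) (Fin d) ℂ)
    (h : ∀ μ ∈ spectrum ℂ A, ‖μ‖ < 1) : spectralRadius ℂ A < 1 := by
  have : Nonempty (Fin d) := ⟨⟨0, hd⟩⟩
  have := spectrum.spectralRadius_lt_of_forall_lt A (r := 1) (fun μ hμ => h μ hμ)
  exact_mod_cast this

theorem matrix_tendsto_pow_zero (d : ℕ) (A : Matrix (Fin d) (Fin d) ℂ)
    (h : spectralRadius ℂ A < 1) : Tendsto (fun t : ℕ => A ^ t) atTop (nhds 0) :=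
  tendsto_pow_zero_of_spectralRadius_lt_one A h

end

/-- For an upward skip-free stochastic matrix `P` on `{0,…,d}` with positive
superdiagonal entries and absorbing state `d`, letting `P'` be the leading principal `d×d`
submatrix: the characteristic polynomial of `P` (over `ℂ`) factors as `(X-1)·charpoly P'`,
every eigenvalue of `P'` has modulus `< 1` (equivalently `(P')^t → 0` and the spectral radius
of `P'` is `< 1`), and consequently `1` is a root of `charpoly P` of multiplicity exactly one
while all other roots have modulus `< 1`. -/
theorem stmt0 (d : ℕ) (hd : 1 ≤ d)
    (P : Matrix (Fin (d + 1)) (Fin (d + 1)) ℝ)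
    (hnonneg : ∀ i j, 0 ≤ P i j)
    (hrowsum : ∀ i, ∑ j, P i j = 1)
    (hskipfree : ∀ i j : Fin (d + 1), (i : ℕ) + 1 < (j : ℕ) → P i j = 0)
    (hsuper : ∀ i j : Fin (d + 1), (j : ℕ) = (i : ℕ) + 1 → 0 < P i j)
    (habs : ∀ j, P (Fin.last d) j = if j = Fin.last d then 1 else 0) :
    (P.map (algebraMap ℝ ℂ)).charpoly
        = (X - 1) * ((P.submatrix Fin.castSucc Fin.castSucc).map (algebraMap ℝ ℂ)).charpoly
    ∧ (∀ μ ∈ spectrum ℂ ((P.submatrix Fin.castSucc Fin.castSucc).map (algebraMap ℝ ℂ)),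
        ‖μ‖ < 1)
    ∧ Tendsto (fun t : ℕ => (P.submatrix Fin.castSucc Fin.castSucc) ^ t) atTop (nhds 0)
    ∧ spectralRadius ℂ ((P.submatrix Fin.castSucc Fin.castSucc).map (algebraMap ℝ ℂ)) < 1
    ∧ (P.map (algebraMap ℝ ℂ)).charpoly.rootMultiplicity 1 = 1
    ∧ ∀ μ : ℂ, (P.map (algebraMap ℝ ℂ)).charpoly.IsRoot μ → μ ≠ 1 → ‖μ‖ < 1 := by
  have hfac := charpoly_eq_X_sub_one_mul d (P.map (algebraMap ℝ ℂ))
    (fun j => by simp [habs, apply_ite])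
  rw [Matrix.submatrix_map] at hfac
  have hspec := norm_lt_one_of_mem_spectrum d P hnonneg hrowsum hsuper
  have hrad := matrix_spectralRadius_lt_one d hd _ hspec
  set A := (P.submatrix Fin.castSucc Fin.castSucc).map (algebraMap ℝ ℂ) with hA
  refine ⟨hfac, hspec, ?_, hrad, ?_, ?_⟩
  · -- The real powers are the entrywise real parts of the complex ones.
    have hre : (fun t : ℕ => (P.submatrix Fin.castSucc Fin.castSucc) ^ t)
        = fun t : ℕ => (A ^ t).map Complex.re := by
      funext t
      have : A ^ t = ((P.submatrix Fin.castSucc Fin.castSucc) ^ t).map (algebraMap ℝ ℂ) :=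
        (Matrix.map_pow _ (algebraMap ℝ ℂ) t).symm
      rw [this]
      ext i j
      simp
    have hc : Continuous fun M : Matrix (Fin d) (Fin d) ℂ => M.map Complex.re :=
      continuous_id.matrix_map Complex.continuous_re
    have := (hc.tendsto 0).comp (matrix_tendsto_pow_zero d A hrad)
    rw [hre]
    simpa [Function.comp_def] using this
  · have hne : A.charpoly ≠ 0 := A.charpoly_monic.ne_zero
    have h1 : ¬ A.charpoly.IsRoot 1 := fun h => by
      have := hspec 1 (Matrix.mem_spectrum_of_isRoot_charpoly h)
      simp at this
    have hX : (X - 1 : ℂ[X]) = X - C 1 := by simp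
    rw [hfac, hX, Polynomial.rootMultiplicity_mul (mul_ne_zero (X_sub_C_ne_zero 1) hne),
      Polynomial.rootMultiplicity_X_sub_C_self, Polynomial.rootMultiplicity_eq_zero h1]
  · intro μ hμ hμ1
    rw [hfac, Polynomial.root_mul] at hμ
    rcases hμ with h | h
    · exact absurd (by simpa [sub_eq_zero] using h) hμ1
    · exact hspec μ (Matrix.mem_spectrum_of_isRoot_charpoly h)
end

section
/- The matrix Λ defined by Λ(i,j) := Q_i(0,j) satisfies: (i) Λ is lower triangular, i.e. Λ(i,j) = 0 whenever j > i; (ii) each row of Λ sums to 1; and (iii) Λ·P = P̂·Λ. -/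
open Matrix Polynomial

/-!
The intertwining `Λ P = P̂ Λ` is the zeroth row of the matrix identities
`Q_i P = θ_i Q_i + (1 - θ_i) Q_{i+1}` for `i < d` and `Q_d P = Q_d`. The first kind is the
recursion defining `Q`, once `θ_i ≠ 1` is known. The last one is Cayley–Hamilton
(`mul_self_of_charpoly`): `Q_d` is a multiple of `∏ (P - θ_j)`, so `Q_d (P - 1)` is a multiple of
the characteristic polynomial evaluated at `P`.

That no `θ_i` with `i < d` equals `1` (`theta_ne_one`) is a maximum principle. Since `d` is
absorbing, the characteristic polynomial of `P` is `X - 1` times that of the block `T` on the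
transient states, so the `θ_i` are the eigenvalues of `T`. A fixed vector of `T`, extended by `0`
to `d`, has subharmonic modulus; its maximum propagates upward along the positive entries
`P(i, i+1)` to the state `d`, where the value is `0`.

Triangularity and the row sums follow by induction on the row index, from upward skip-freeness and
from `P 1 = 1` respectively.
-/

/-- Maximum principle: a subharmonic function of an upward skip-free chain attains its maximum at
the top state, because a maximum at `i` forces a maximum at `i + 1`. -/
lemma subharmonic_le_last {d : ℕ} {P : Matrix (Fin (d + 1)) (Fin (d + 1)) ℝ}
    (hnonneg : ∀ i j, 0 ≤ P i j)
    (hrowsum : ∀ i, ∑ j, P i j = 1)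
    (hsuper : ∀ i j : Fin (d + 1), (j : ℕ) = (i : ℕ) + 1 → 0 < P i j)
    (f : Fin (d + 1) → ℝ) (hf : ∀ i, f i ≤ ∑ j, P i j * f j) (i : Fin (d + 1)) :
    f i ≤ f (Fin.last d) := by
  obtain ⟨m, hm⟩ := Finite.exists_max f
  have key : ∀ k : Fin (d + 1), f k = f m → f (Fin.last d) = f m := by
    intro k
    induction k using Fin.reverseInduction with
    | last => exact id
    | cast k ih =>
      intro hk
      apply ih
      have hterm : ∀ j ∈ Finset.univ, 0 ≤ P k.castSucc j * (f m - f j) := fun j _ =>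
        mul_nonneg (hnonneg _ _) (sub_nonneg.2 (hm j))
      have hsum : ∑ j, P k.castSucc j * (f m - f j) = 0 := by
        apply le_antisymm _ (Finset.sum_nonneg hterm)
        have h1 := hf k.castSucc
        simp only [mul_sub, Finset.sum_sub_distrib, ← Finset.sum_mul, hrowsum]
        linarith
      have h2 := (Finset.sum_eq_zero_iff_of_nonneg hterm).1 hsum k.succ (Finset.mem_univ _)
      have h3 := hsuper k.castSucc k.succ (by simp)
      rcases mul_eq_zero.1 h2 with h | h
      · exact absurd h h3.ne'
      · linarith
  rw [key m rfl]
  exact hm i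

/-- An absorbing last state contributes exactly a factor `X - 1` to the characteristic
polynomial. -/
lemma charpoly_of_absorbing {d : ℕ} {A : Matrix (Fin (d + 1)) (Fin (d + 1)) ℂ}
    (habs : ∀ j, A (Fin.last d) j = if j = Fin.last d then 1 else 0) :
    A.charpoly = (X - 1) * (A.submatrix Fin.castSucc Fin.castSucc).charpoly := by
  rw [Matrix.charpoly, Matrix.det_succ_row _ (Fin.last d), Fin.sum_univ_castSucc]
  have h0 : ∀ j : Fin d, A.charmatrix (Fin.last d) j.castSucc = 0 := by
    intro j
    rw [Matrix.charmatrix_apply_ne _ _ _ (Fin.castSucc_lt_last j).ne', habs,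
      if_neg (Fin.castSucc_lt_last j).ne]
    simp
  have h1 : A.charmatrix.submatrix (Fin.last d).succAbove (Fin.last d).succAbove
      = (A.submatrix Fin.castSucc Fin.castSucc).charmatrix := by
    ext i j : 2
    simp [Matrix.charmatrix_apply, Matrix.diagonal_apply, Fin.succAbove_last]
  have hsign : ((-1 : ℂ[X]) ^ (d + d)) = 1 := Even.neg_one_pow ⟨d, rfl⟩
  rw [h1]
  simp [h0, Matrix.charpoly, Matrix.charmatrix_apply_eq, habs, hsign]

lemma theta_ne_one {d : ℕ} {P : Matrix (Fin (d + 1)) (Fin (d + 1)) ℝ}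
    (hnonneg : ∀ i j, 0 ≤ P i j)
    (hrowsum : ∀ i, ∑ j, P i j = 1)
    (hsuper : ∀ i j : Fin (d + 1), (j : ℕ) = (i : ℕ) + 1 → 0 < P i j)
    (habs : ∀ j, P (Fin.last d) j = if j = Fin.last d then 1 else 0)
    {θ : Fin (d + 1) → ℂ}
    (hcharpoly : (P.map (algebraMap ℝ ℂ)).charpoly
        = (X - 1) * ∏ j : Fin d, (X - C (θ j.castSucc)))
    (k : Fin d) : θ k.castSucc ≠ 1 := by
  intro hk
  set T := (P.map (algebraMap ℝ ℂ)).submatrix Fin.castSucc Fin.castSucc with hT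
  have hchar : T.charpoly = ∏ j : Fin d, (X - C (θ j.castSucc)) := by
    have h := charpoly_of_absorbing (A := P.map (algebraMap ℝ ℂ)) (by
      intro j
      rw [Matrix.map_apply, habs]
      split_ifs <;> simp)
    rw [hcharpoly] at h
    have hX : (X - 1 : ℂ[X]) ≠ 0 := by simpa using X_sub_C_ne_zero (1 : ℂ)
    exact (mul_left_cancel₀ hX h).symm
  have hdet : (Matrix.scalar (Fin d) (1 : ℂ) - T).det = 0 := by
    rw [← Matrix.eval_charpoly, hchar, eval_prod]
    exact Finset.prod_eq_zero (Finset.mem_univ k) (by simp [hk])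
  obtain ⟨v, hv0, hv⟩ := Matrix.exists_mulVec_eq_zero_iff.2 hdet
  have hfix : ∀ i, v i = ∑ j, (P i.castSucc j.castSucc : ℂ) * v j := by
    intro i
    have h := congrFun hv i
    rw [Matrix.sub_mulVec, map_one, Matrix.one_mulVec] at h
    have h' := sub_eq_zero.1 h
    rw [h']
    rfl
  have hmax := subharmonic_le_last hnonneg hrowsum hsuper
    (Fin.snoc (α := fun _ => ℝ) (fun i => ‖v i‖) 0) (by
      intro i
      rw [Fin.sum_univ_castSucc]
      refine Fin.lastCases ?_ (fun i => ?_) i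
      · simp [habs, (Fin.castSucc_lt_last _).ne]
      · simp only [Fin.snoc_castSucc, Fin.snoc_last, mul_zero, add_zero]
        calc ‖v i‖ = ‖∑ j, (P i.castSucc j.castSucc : ℂ) * v j‖ := by rw [← hfix i]
          _ ≤ ∑ j, ‖(P i.castSucc j.castSucc : ℂ) * v j‖ := norm_sum_le _ _
          _ = ∑ j, P i.castSucc j.castSucc * ‖v j‖ := by
            simp only [norm_mul, Complex.norm_real, Real.norm_of_nonneg (hnonneg _ _)])
  apply hv0
  ext i
  have h := hmax i.castSucc
  simp only [Fin.snoc_castSucc, Fin.snoc_last] at h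
  simpa using h

/-- Each `Q_i` is a scalar multiple of `∏_{j<i} (A - θ_j)`, so at `i = d` the Cayley–Hamilton
theorem gives `Q_d (A - 1) = 0`. -/
lemma mul_self_of_charpoly {d : ℕ} {A : Matrix (Fin (d + 1)) (Fin (d + 1)) ℂ}
    {θ : Fin (d + 1) → ℂ}
    (hcharpoly : A.charpoly = (X - 1) * ∏ j : Fin d, (X - C (θ j.castSucc)))
    {Q : Fin (d + 1) → Matrix (Fin (d + 1)) (Fin (d + 1)) ℂ}
    (hQ0 : Q 0 = 1)
    (hQsucc : ∀ k : Fin d, Q k.succ = Q k.castSucc *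
        ((1 - θ k.castSucc)⁻¹ • (A - θ k.castSucc • 1))) :
    Q (Fin.last d) * A = Q (Fin.last d) := by
  have hpoly : ∀ i : Fin (d + 1), ∃ c : ℂ, Q i = c • aeval A
      (∏ j ∈ Finset.univ.filter (fun j : Fin d => (j : ℕ) < i), (X - C (θ j.castSucc))) := by
    intro i
    induction i using Fin.induction with
    | zero => exact ⟨1, by simp [hQ0]⟩
    | succ k ih =>
      obtain ⟨c, hc⟩ := ih
      refine ⟨c * (1 - θ k.castSucc)⁻¹, ?_⟩
      have hins : Finset.univ.filter (fun j : Fin d => (j : ℕ) < k.succ)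
          = insert k (Finset.univ.filter (fun j : Fin d => (j : ℕ) < k.castSucc)) := by
        ext j
        simp only [Finset.mem_filter, Finset.mem_univ, true_and, Finset.mem_insert, Fin.ext_iff,
          Fin.val_succ, Fin.val_castSucc]
        omega
      rw [hins, Finset.prod_insert (by simp), mul_comm (X - _), map_mul, hQsucc, hc]
      simp only [map_sub, aeval_X, aeval_C, Algebra.algebraMap_eq_smul_one, smul_mul_assoc,
        mul_smul_comm, smul_smul, mul_comm c]
  obtain ⟨c, hc⟩ := hpoly (Fin.last d)
  have hCH := Matrix.aeval_self_charpoly A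
  rw [hcharpoly, mul_comm, map_mul] at hCH
  have hfull : Finset.univ.filter (fun j : Fin d => (j : ℕ) < Fin.last d) = Finset.univ := by
    ext j
    simp
  rw [hfull] at hc
  rw [← sub_eq_zero]
  have h1 : Q (Fin.last d) * A - Q (Fin.last d) = Q (Fin.last d) * (A - 1) := by
    rw [mul_sub, mul_one]
  rw [h1, hc, smul_mul_assoc]
  simp only [map_sub, aeval_X, map_one] at hCH ⊢
  rw [hCH, smul_zero]

/-- With `Q_k := ∏_{r<k} (1-θ_r)⁻¹(P - θ_r I)` and `Λ(i,j) := Q_i(0,j)`: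
`Λ` is lower triangular, each row of `Λ` sums to `1`, and `Λ·P = P̂·Λ`. -/
theorem stmt1 (d : ℕ) (hd : 1 ≤ d)
    (P : Matrix (Fin (d + 1)) (Fin (d + 1)) ℝ)
    (hnonneg : ∀ i j, 0 ≤ P i j)
    (hrowsum : ∀ i, ∑ j, P i j = 1)
    (hskipfree : ∀ i j : Fin (d + 1), (i : ℕ) + 1 < (j : ℕ) → P i j = 0)
    (hsuper : ∀ i j : Fin (d + 1), (j : ℕ) = (i : ℕ) + 1 → 0 < P i j)
    (habs : ∀ j, P (Fin.last d) j = if j = Fin.last d then 1 else 0)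
    -- the non-unit eigenvalues θ_0,…,θ_{d-1}, with θ_d := 1
    (θ : Fin (d + 1) → ℂ)
    (hθlast : θ (Fin.last d) = 1)
    (hcharpoly : (P.map (algebraMap ℝ ℂ)).charpoly
        = (X - 1) * ∏ j : Fin d, (X - C (θ j.castSucc)))
    -- the pure-birth "spectral" kernel P̂
    (Phat : Matrix (Fin (d + 1)) (Fin (d + 1)) ℂ)
    (hPhat : ∀ i j, Phat i j =
        if j = i then θ i else if (j : ℕ) = (i : ℕ) + 1 then 1 - θ i else 0)
    -- the normalized spectral polynomials Q_0 = I, Q_{k+1} = Q_k · (1-θ_k)⁻¹(P - θ_k I)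
    (Q : Fin (d + 1) → Matrix (Fin (d + 1)) (Fin (d + 1)) ℂ)
    (hQ0 : Q 0 = 1)
    (hQsucc : ∀ k : Fin d, Q k.succ = Q k.castSucc *
        ((1 - θ k.castSucc)⁻¹ • (P.map (algebraMap ℝ ℂ) - θ k.castSucc • 1)))
    (Λ : Matrix (Fin (d + 1)) (Fin (d + 1)) ℂ)
    (hΛ : ∀ i j, Λ i j = Q i 0 j) :
    (∀ i j : Fin (d + 1), (i : ℕ) < (j : ℕ) → Λ i j = 0)
    ∧ (∀ i, ∑ j, Λ i j = 1)
    ∧ Λ * P.map (algebraMap ℝ ℂ) = Phat * Λ := by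
  have hne := theta_ne_one hnonneg hrowsum hsuper habs hcharpoly
  have hlast := mul_self_of_charpoly hcharpoly hQ0 hQsucc
  set A := P.map (algebraMap ℝ ℂ) with hA
  have hA1 : A *ᵥ 1 = 1 := by
    ext i
    have h := congrArg (algebraMap ℝ ℂ) (hrowsum i)
    rw [map_sum, map_one] at h
    simpa [Matrix.mulVec, dotProduct, hA] using h
  refine ⟨?_, ?_, ?_⟩
  · intro i
    induction i using Fin.induction with
    | zero =>
      intro j hj
      rw [hΛ, hQ0, Matrix.one_apply_ne]
      rintro rfl
      exact lt_irrefl _ hj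
    | succ k ih =>
      intro j hj
      rw [Fin.val_succ] at hj
      rw [hΛ, hQsucc, Matrix.mul_apply]
      refine Finset.sum_eq_zero fun l _ => ?_
      by_cases hl : (k : ℕ) < l
      · rw [← hΛ, ih l (by simpa using hl), zero_mul]
      · have hlj : l ≠ j := by
          rintro rfl
          omega
        have hP := hskipfree l j (by omega)
        simp [hA, hP, Matrix.one_apply_ne hlj]
  · have hQ1 : ∀ i, Q i *ᵥ 1 = 1 := by
      intro i
      induction i using Fin.induction with
      | zero => rw [hQ0, Matrix.one_mulVec]
      | succ k ih =>
        have h : (1 - θ k.castSucc) ≠ 0 := sub_ne_zero.2 (hne k).symm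
        rw [hQsucc, ← Matrix.mulVec_mulVec, Matrix.smul_mulVec, Matrix.sub_mulVec, hA1,
          Matrix.smul_mulVec, Matrix.one_mulVec]
        have h2 : (1 - θ k.castSucc)⁻¹ • ((1 : Fin (d + 1) → ℂ) - θ k.castSucc • 1) = 1 := by
          ext
          simp [h]
        rw [h2, ih]
    intro i
    have h := congrFun (hQ1 i) 0
    simpa [Matrix.mulVec, dotProduct, hΛ] using h
  · ext i j
    have hL : (Λ * A) i j = (Q i * A) 0 j := by
      simp only [Matrix.mul_apply, hΛ]
    rw [hL]
    induction i using Fin.lastCases with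
    | last =>
      rw [hlast, Matrix.mul_apply, Finset.sum_eq_single (Fin.last d)]
      · simp [hPhat, hθlast, hΛ]
      · intro l _ hl
        have : (l : ℕ) ≠ d + 1 := l.isLt.ne
        simp [hPhat, hl, this]
      · simp
    | cast k =>
      have h : (1 - θ k.castSucc) ≠ 0 := sub_ne_zero.2 (hne k).symm
      have hrec : Q k.castSucc * A
          = θ k.castSucc • Q k.castSucc + (1 - θ k.castSucc) • Q k.succ := by
        rw [hQsucc, mul_smul_comm, smul_smul, mul_inv_cancel₀ h, one_smul, mul_sub,
          mul_smul_comm, mul_one]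
        abel
      have hks : k.succ ≠ k.castSucc := (Fin.castSucc_lt_succ).ne'
      rw [hrec, Matrix.mul_apply, Finset.sum_eq_add k.castSucc k.succ hks.symm]
      · simp [hPhat, hΛ, hks]
      · rintro l _ ⟨h1, h2⟩
        have : (l : ℕ) ≠ k + 1 := fun h => h2 (Fin.ext (by simpa using h))
        simp [hPhat, h1, this]
      · simp
      · simp
end

section
/- For every integer t ≥ 0, P^t(0,d) = P̂^t(0,d); equivalently, the hitting time T of state d for the chain started at state 0 satisfies P(T ≤ t) = P̂^t(0,d) for all t ≥ 0. -/
/-!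
Both `P` and `P̂` are upward skip-free matrices with unit row sums, nonzero superdiagonal and
absorbing last state, and both have characteristic polynomial `(X - 1) * g`, where
`g = ∏ j, (X - θ j)`. For any such matrix `Q`, the entry `Q ^ t (0, d)` is determined by `g` alone
(`pow_apply_eq`):

* By Cayley-Hamilton, row `0` of `g(Q)` is a left fixed vector of `Q`. Reading the equation
  `v Q = v` from the last column backwards shows that every left fixed vector is a multiple of `e_d`
  (`fixed_eq_zero`); as `g(Q)` has all row sums equal to `g(1)`, row `0` of `g(Q)` is `g(1) e_d`.
* Dividing with remainder, `X ^ t = s + g * h` with `deg s < d`. Skip-freeness gives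
  `s(Q)(0, d) = 0`, and `e_d h(Q) = h(1) e_d`, so that `Q ^ t (0, d) = g(1) h(1)`.

The superdiagonal `1 - θ i` of `P̂` does not vanish because `g(1) = g(P)(0, d) = P ^ d (0, d) ≠ 0`
(`eval_one_ne_zero`).
-/

open Matrix Polynomial

/-- The properties of the transition matrix (nonnegativity excluded) that are used for both `P` and
`P̂`, over the complex numbers. The superdiagonal condition is kept separate. -/
structure SkipFree {d : ℕ} (Q : Matrix (Fin (d + 1)) (Fin (d + 1)) ℂ) : Prop where
  rowsum : ∀ i, ∑ j, Q i j = 1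
  skip : ∀ i j : Fin (d + 1), (i : ℕ) + 1 < (j : ℕ) → Q i j = 0
  absorb : ∀ j, Q (Fin.last d) j = if j = Fin.last d then 1 else 0

namespace SkipFree

variable {d : ℕ} {Q : Matrix (Fin (d + 1)) (Fin (d + 1)) ℂ}

lemma pow_zero_apply (h : SkipFree Q) (k : ℕ) (j : Fin (d + 1)) (hj : k < (j : ℕ)) :
    (Q ^ k) 0 j = 0 := by
  induction k generalizing j with
  | zero =>
    rw [pow_zero, Matrix.one_apply_ne]
    rintro rfl
    simp at hj
  | succ k ih =>
    rw [pow_succ, Matrix.mul_apply]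
    refine Finset.sum_eq_zero fun i _ => ?_
    by_cases hi : k < (i : ℕ)
    · rw [ih i hi, zero_mul]
    · rw [h.skip i j (by omega), mul_zero]

lemma pow_zero_self_ne (h : SkipFree Q)
    (hs : ∀ i j : Fin (d + 1), (j : ℕ) = (i : ℕ) + 1 → Q i j ≠ 0) (k : ℕ) (hk : k < d + 1) :
    (Q ^ k) 0 ⟨k, hk⟩ ≠ 0 := by
  induction k with
  | zero => simp
  | succ k ih =>
    have hk' : k < d + 1 := by omega
    rw [pow_succ, Matrix.mul_apply, Finset.sum_eq_single (⟨k, hk'⟩ : Fin (d + 1))]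
    · exact mul_ne_zero (ih hk') (hs _ _ rfl)
    · intro i _ hi
      have hi' : (i : ℕ) ≠ k := fun e => hi (Fin.ext e)
      by_cases hik : k < (i : ℕ)
      · rw [h.pow_zero_apply k i hik, zero_mul]
      · rw [h.skip i _ (by simp only; omega), mul_zero]
    · simp

lemma aeval_rowsum (h : SkipFree Q) (p : ℂ[X]) (i : Fin (d + 1)) :
    ∑ j, (aeval Q p) i j = p.eval 1 := by
  have hpow : ∀ k : ℕ, (Q ^ k) *ᵥ (1 : Fin (d + 1) → ℂ) = 1 := by
    intro k
    induction k with
    | zero => simp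
    | succ k ih =>
      have h1 : Q *ᵥ (1 : Fin (d + 1) → ℂ) = 1 := by
        ext i
        simpa [Matrix.mulVec, dotProduct] using h.rowsum i
      rw [pow_succ, ← Matrix.mulVec_mulVec, h1, ih]
  have hmul : (aeval Q p) *ᵥ (1 : Fin (d + 1) → ℂ) = fun _ => p.eval 1 := by
    rw [aeval_eq_sum_range, Matrix.sum_mulVec, eval_eq_sum_range]
    ext i
    simp [Matrix.smul_mulVec, hpow]
  simpa [Matrix.mulVec, dotProduct] using congrFun hmul i

lemma pow_last (h : SkipFree Q) (k : ℕ) :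
    (Q ^ k) (Fin.last d) (Fin.last d) = 1 := by
  induction k with
  | zero => simp
  | succ k ih =>
    rw [pow_succ', Matrix.mul_apply]
    simp [h.absorb, ih]

lemma aeval_last (h : SkipFree Q) (p : ℂ[X]) :
    (aeval Q p) (Fin.last d) (Fin.last d) = p.eval 1 := by
  rw [aeval_eq_sum_range, eval_eq_sum_range, Matrix.sum_apply]
  simp [h.pow_last]

/-- A left fixed vector of `Q` is supported at the absorbing state: column `j + 1` of `v Q = v`
reads `v j * Q j (j + 1) = 0` once `v` is known to vanish strictly between `j` and `d`.
The induction is on a bound `n` for the distance from `i` to `d`. -/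
lemma fixed_eq_zero (h : SkipFree Q)
    (hs : ∀ i j : Fin (d + 1), (j : ℕ) = (i : ℕ) + 1 → Q i j ≠ 0)
    (v : Fin (d + 1) → ℂ) (hv : ∀ j, ∑ i, v i * Q i j = v j)
    (n : ℕ) (i : Fin (d + 1)) (hi : (i : ℕ) < d) (hn : d ≤ (i : ℕ) + n) : v i = 0 := by
  induction n generalizing i with
  | zero => omega
  | succ n ih =>
    by_cases hin : d ≤ (i : ℕ) + n
    · exact ih i hi hin
    let j : Fin (d + 1) := ⟨(i : ℕ) + 1, by omega⟩
    have hij : i ≠ j := fun e => by simpa [j] using congrArg Fin.val e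
    have hsum : ∑ k, v k * Q k j = v i * Q i j + v j := by
      -- apart from `k = i`, the only term that can survive is `k = d`, and only if `j = d`
      rw [← Finset.add_sum_erase _ _ (Finset.mem_univ i)]
      congr 1
      have hk : ∀ k ∈ Finset.univ.erase i, v k * Q k j = if k = j then v j else 0 := by
        intro k hk
        have hki : (k : ℕ) ≠ i := fun e => by
          simp at hk
          exact hk (Fin.ext e)
        rcases lt_or_gt_of_ne hki with hlt | hgt
        · rw [h.skip k j (by simp only [j]; omega), mul_zero, if_neg]
          rintro rfl
          simp [j] at hlt
        · by_cases hkd : (k : ℕ) < d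
          · have hk0 : v k = 0 := ih k hkd (by omega)
            rw [hk0, zero_mul]
            split_ifs with hkj
            · rw [← hkj, hk0]
            · rfl
          · have hkl : k = Fin.last d := Fin.ext (by simp only [Fin.val_last]; omega)
            subst hkl
            rw [h.absorb]
            by_cases hj : j = Fin.last d
            · simp [hj]
            · simp [hj, Ne.symm hj]
      rw [Finset.sum_congr rfl hk, Finset.sum_ite_eq', if_pos]
      simpa using Ne.symm hij
    have hz : v i * Q i j = 0 := by
      have := hv j
      rw [hsum] at this
      simpa using this
    exact (mul_eq_zero.mp hz).resolve_right (hs i j rfl)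

lemma row_zero_aeval (h : SkipFree Q)
    (hs : ∀ i j : Fin (d + 1), (j : ℕ) = (i : ℕ) + 1 → Q i j ≠ 0)
    {g : ℂ[X]} (hg : Q.charpoly = (X - 1) * g) (j : Fin (d + 1)) :
    (aeval Q g) 0 j = if j = Fin.last d then g.eval 1 else 0 := by
  have hfix : aeval Q g * Q = aeval Q g := by
    have hCH := Matrix.aeval_self_charpoly Q
    rw [hg, mul_comm, map_mul, map_sub, aeval_X, map_one, mul_sub, mul_one, sub_eq_zero] at hCH
    exact hCH
  have hzero : ∀ i : Fin (d + 1), i ≠ Fin.last d → (aeval Q g) 0 i = 0 := by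
    intro i hi
    have hid : (i : ℕ) < d := by
      have : (i : ℕ) ≠ d := fun e => hi (Fin.ext e)
      omega
    refine h.fixed_eq_zero hs (fun i => (aeval Q g) 0 i) (fun j => ?_) d i hid (by omega)
    rw [← Matrix.mul_apply, hfix]
  by_cases hj : j = Fin.last d
  · rw [if_pos hj, hj, ← h.aeval_rowsum g 0, Finset.sum_eq_single (Fin.last d)]
    · exact fun i _ hi => hzero i hi
    · simp
  · rw [if_neg hj, hzero j hj]

lemma aeval_zero_last_of_degree_lt (h : SkipFree Q) {s : ℂ[X]} (hsd : s.degree < d) :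
    (aeval Q s) 0 (Fin.last d) = 0 := by
  rw [aeval_eq_sum_range, Matrix.sum_apply]
  refine Finset.sum_eq_zero fun k _ => ?_
  rw [Matrix.smul_apply]
  by_cases hk : k < d
  · rw [h.pow_zero_apply k _ (by simpa using hk), smul_zero]
  · rw [coeff_eq_zero_of_degree_lt (hsd.trans_le (by exact_mod_cast not_lt.mp hk)), zero_smul]

lemma eval_one_ne_zero (h : SkipFree Q)
    (hs : ∀ i j : Fin (d + 1), (j : ℕ) = (i : ℕ) + 1 → Q i j ≠ 0)
    {g : ℂ[X]} (hgm : g.Monic) (hgd : g.degree = d) (hg : Q.charpoly = (X - 1) * g) :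
    g.eval 1 ≠ 0 := by
  have h1 := h.row_zero_aeval hs hg (Fin.last d)
  rw [if_pos rfl] at h1
  have hlt : (g - X ^ d).degree < (d : WithBot ℕ) := by
    rw [← hgd]
    refine degree_sub_lt_left ?_ hgm.ne_zero ?_
    · rw [hgd, degree_X_pow]
    · rw [hgm.leadingCoeff, leadingCoeff_X_pow]
  have h2 := h.aeval_zero_last_of_degree_lt hlt
  rw [map_sub, Matrix.sub_apply, h1, map_pow, aeval_X, sub_eq_zero] at h2
  rw [h2]
  exact h.pow_zero_self_ne hs d (Nat.lt_succ_self d)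

/-- The right-hand side depends on `Q` only through its characteristic polynomial. -/
lemma pow_apply_eq (h : SkipFree Q)
    (hs : ∀ i j : Fin (d + 1), (j : ℕ) = (i : ℕ) + 1 → Q i j ≠ 0)
    {g : ℂ[X]} (hgm : g.Monic) (hgd : g.degree = d) (hg : Q.charpoly = (X - 1) * g) (t : ℕ) :
    (Q ^ t) 0 (Fin.last d) = g.eval 1 * (X ^ t /ₘ g).eval 1 := by
  have hdiv := congrArg (aeval Q) (modByMonic_add_div (X ^ t : ℂ[X]) g)
  rw [map_add, map_mul, map_pow, aeval_X] at hdiv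
  rw [← hdiv, Matrix.add_apply,
    h.aeval_zero_last_of_degree_lt (hgd ▸ degree_modByMonic_lt _ hgm), zero_add, Matrix.mul_apply]
  simp [h.row_zero_aeval hs hg, h.aeval_last]

end SkipFree

/-- For every `t ≥ 0`, `P^t(0,d) = P̂^t(0,d)`; equivalently, the hitting time
`T` of state `d` started from `0` (whose CDF is `F t = P^t(0,d)`) satisfies
`P(T ≤ t) = P̂^t(0,d)`. -/
theorem stmt3 (d : ℕ) (hd : 1 ≤ d)
    (P : Matrix (Fin (d + 1)) (Fin (d + 1)) ℝ)
    (hnonneg : ∀ i j, 0 ≤ P i j)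
    (hrowsum : ∀ i, ∑ j, P i j = 1)
    (hskipfree : ∀ i j : Fin (d + 1), (i : ℕ) + 1 < (j : ℕ) → P i j = 0)
    (hsuper : ∀ i j : Fin (d + 1), (j : ℕ) = (i : ℕ) + 1 → 0 < P i j)
    (habs : ∀ j, P (Fin.last d) j = if j = Fin.last d then 1 else 0)
    (θ : Fin (d + 1) → ℂ)
    (hθlast : θ (Fin.last d) = 1)
    (hcharpoly : (P.map (algebraMap ℝ ℂ)).charpoly
        = (X - 1) * ∏ j : Fin d, (X - C (θ j.castSucc)))
    (Phat : Matrix (Fin (d + 1)) (Fin (d + 1)) ℂ)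
    (hPhat : ∀ i j, Phat i j =
        if j = i then θ i else if (j : ℕ) = (i : ℕ) + 1 then 1 - θ i else 0)
    -- `F t = P(T ≤ t)` is the CDF of the hitting time `T` of state `d` started from `0`
    (F : ℕ → ℝ)
    (hF : ∀ t : ℕ, F t = (P ^ t) 0 (Fin.last d)) :
    ∀ t : ℕ, (((P ^ t) 0 (Fin.last d) : ℝ) : ℂ) = (Phat ^ t) 0 (Fin.last d)
      ∧ ((F t : ℝ) : ℂ) = (Phat ^ t) 0 (Fin.last d) := by
  set g : ℂ[X] := ∏ j : Fin d, (X - C (θ j.castSucc)) with hgdef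
  have hgm : g.Monic := monic_prod_of_monic _ _ fun j _ => monic_X_sub_C _
  have hgd : g.degree = d := by
    rw [hgdef, degree_prod]
    simp
  have hP : SkipFree (P.map (algebraMap ℝ ℂ)) :=
    { rowsum := fun i => by
        simp only [Matrix.map_apply]
        rw [← map_sum, hrowsum, map_one]
      skip := fun i j hij => by rw [Matrix.map_apply, hskipfree i j hij, map_zero]
      absorb := fun j => by
        rw [Matrix.map_apply, habs]
        split_ifs <;> simp }
  have hPs : ∀ i j : Fin (d + 1), (j : ℕ) = (i : ℕ) + 1 → (P.map (algebraMap ℝ ℂ)) i j ≠ 0 := by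
    intro i j hij
    rw [Matrix.map_apply]
    simpa using (hsuper i j hij).ne'
  have hg1 : g.eval 1 ≠ 0 := hP.eval_one_ne_zero hPs hgm hgd hcharpoly
  have hθ : ∀ j : Fin d, 1 - θ j.castSucc ≠ 0 := by
    rw [hgdef, eval_prod, Finset.prod_ne_zero_iff] at hg1
    intro j
    simpa using hg1 j (Finset.mem_univ j)
  have hH : SkipFree Phat :=
    { rowsum := fun i => by
        induction i using Fin.lastCases with
        | last =>
          rw [Finset.sum_eq_single (Fin.last d)]
          · rw [hPhat, if_pos rfl, hθlast]
          · intro j _ hj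
            have := j.isLt
            rw [hPhat, if_neg hj, if_neg (by simp only [Fin.val_last]; omega)]
          · simp
        | cast i =>
          have hne : i.castSucc ≠ i.succ := i.castSucc_lt_succ.ne
          rw [Finset.sum_eq_add (a := i.castSucc) (b := i.succ) hne]
          · rw [hPhat, hPhat, if_pos rfl, if_neg hne.symm, if_pos (by simp)]
            ring
          · rintro j _ ⟨hj1, hj2⟩
            rw [hPhat, if_neg hj1, if_neg]
            exact fun e => hj2 (Fin.ext (by simpa using e))
          · simp
          · simp
      skip := fun i j hij => by
        rw [hPhat, if_neg, if_neg (by omega)]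
        rintro rfl
        omega
      absorb := fun j => by
        have := j.isLt
        rw [hPhat, hθlast, if_neg (c := (j : ℕ) = _) (by simp only [Fin.val_last]; omega)] }
  have hHs : ∀ i j : Fin (d + 1), (j : ℕ) = (i : ℕ) + 1 → Phat i j ≠ 0 := by
    intro i j hij
    have hi : (i : ℕ) < d := by omega
    rw [hPhat, if_neg (by rintro rfl; omega), if_pos hij]
    exact hθ ⟨i, hi⟩
  have hHc : Phat.charpoly = (X - 1) * g := by
    have htri : Phat.BlockTriangular id := by
      intro i j hij
      have hij' : (j : ℕ) < i := hij
      rw [hPhat, if_neg (by rintro rfl; omega), if_neg (by omega)]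
    rw [Matrix.charpoly_of_isUpperTriangular _ htri, Fin.prod_univ_castSucc, mul_comm]
    simp [hPhat, hθlast, hgdef]
  intro t
  have key : (((P ^ t) 0 (Fin.last d) : ℝ) : ℂ) = (Phat ^ t) 0 (Fin.last d) := by
    rw [hH.pow_apply_eq hHs hgm hgd hHc t, ← hP.pow_apply_eq hPs hgm hgd hcharpoly t,
      ← Matrix.map_pow]
    rfl
  exact ⟨key, by rw [hF, key]⟩
end

section
/- Let u ∈ ℂ satisfy θ_r·u ≠ 1 for every r = 0,…,d. Then the matrix I − u·P̂ is invertible, its inverse is upper triangular, and for all indices 0 ≤ i ≤ j ≤ d, (I − u·P̂)^{−1}(i,j) = ((1−θ_i)(1−θ_{i+1})⋯(1−θ_{j−1})) · u^{j−i} / ((1−θ_i u)(1−θ_{i+1} u)⋯(1−θ_j u)). -/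
/-!
The matrix `1 - u • P̂` is upper bidiagonal, with diagonal entries `1 - θ i * u` and superdiagonal
entries `-u * (1 - θ i)`. Let `M` be the upper triangular matrix whose entries on and above the
diagonal are the claimed closed form. Row `i` of `(1 - u • P̂) * M = 1` is the recursion
`(1 - θ i * u) * M i j - u * (1 - θ i) * M (i + 1) j = δ i j`, which `M` satisfies because passing
from `i + 1` to `i` adds one factor to each of the two products and one to the power of `u`.
A one-sided inverse of a square matrix is its inverse, which gives all three conclusions.
-/

open Matrix Finset

/-- The candidate for the inverse of `1 - u • P̂`: the closed form on and above the diagonal, and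
`0` below it. -/
noncomputable def resolventEntry {d : ℕ} (θ : Fin (d + 1) → ℂ) (u : ℂ) :
    Matrix (Fin (d + 1)) (Fin (d + 1)) ℂ := fun i j =>
  if i ≤ j then
    (∏ r ∈ Finset.Ico i j, (1 - θ r)) * u ^ ((j : ℕ) - (i : ℕ))
      / ∏ r ∈ Finset.Icc i j, (1 - θ r * u)
  else 0

lemma resolventEntry_self {d : ℕ} (θ : Fin (d + 1) → ℂ) (u : ℂ)
    (hu : ∀ r : Fin (d + 1), θ r * u ≠ 1) (i : Fin (d + 1)) :
    (1 - θ i * u) * resolventEntry θ u i i = 1 := by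
  have h : 1 - θ i * u ≠ 0 := sub_ne_zero.2 (hu i).symm
  simp [resolventEntry, h]

lemma resolventEntry_of_lt {d : ℕ} (θ : Fin (d + 1) → ℂ) (u : ℂ) {i j : Fin (d + 1)}
    (h : j < i) : resolventEntry θ u i j = 0 := by
  simp [resolventEntry, not_le.2 h]

/-- The recursion along a column strictly above the diagonal; `k` is the successor of `i`. -/
lemma resolventEntry_step {d : ℕ} (θ : Fin (d + 1) → ℂ) (u : ℂ)
    (hu : ∀ r : Fin (d + 1), θ r * u ≠ 1) {i k j : Fin (d + 1)}
    (hk : (k : ℕ) = (i : ℕ) + 1) (hij : i < j) :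
    (1 - θ i * u) * resolventEntry θ u i j = u * (1 - θ i) * resolventEntry θ u k j := by
  have h : ∀ r, 1 - θ r * u ≠ 0 := fun r => sub_ne_zero.2 (hu r).symm
  have hkj : k ≤ j := by rw [Fin.le_def]; rw [Fin.lt_def] at hij; omega
  have hIco : Finset.Ico i j = insert i (Finset.Ico k j) := by
    ext r
    simp only [Finset.mem_Ico, Finset.mem_insert, Fin.le_def, Fin.lt_def, Fin.ext_iff] at *
    omega
  have hIcc : Finset.Icc i j = insert i (Finset.Icc k j) := by
    ext r
    simp only [Finset.mem_Icc, Finset.mem_insert, Fin.le_def, Fin.lt_def, Fin.ext_iff] at *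
    omega
  have hpow : (j : ℕ) - (i : ℕ) = ((j : ℕ) - (k : ℕ)) + 1 := by
    rw [Fin.lt_def] at hij; omega
  have hprod : ∏ r ∈ Finset.Icc k j, (1 - θ r * u) ≠ 0 := Finset.prod_ne_zero_iff.2 fun r _ => h r
  have hi := h i
  have hn1 : i ∉ Finset.Ico k j := by rw [Finset.mem_Ico, Fin.le_def]; omega
  have hn2 : i ∉ Finset.Icc k j := by rw [Finset.mem_Icc, Fin.le_def]; omega
  simp only [resolventEntry, if_pos hij.le, if_pos hkj]
  rw [hIco, hIcc, Finset.prod_insert hn1, Finset.prod_insert hn2, hpow, pow_succ]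
  field_simp

lemma one_sub_smul_mul_resolventEntry {d : ℕ} (θ : Fin (d + 1) → ℂ)
    (Phat : Matrix (Fin (d + 1)) (Fin (d + 1)) ℂ)
    (hPhat : ∀ i j, Phat i j =
        if j = i then θ i else if (j : ℕ) = (i : ℕ) + 1 then 1 - θ i else 0)
    (u : ℂ) (hu : ∀ r : Fin (d + 1), θ r * u ≠ 1) :
    (1 - u • Phat) * resolventEntry θ u = 1 := by
  ext i j
  have hA : ∀ k, (1 - u • Phat) i k = (if k = i then 1 - θ i * u else 0)
      - (if (k : ℕ) = (i : ℕ) + 1 then u * (1 - θ i) else 0) := by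
    intro k
    rw [Matrix.sub_apply, Matrix.smul_apply, hPhat, Matrix.one_apply, smul_eq_mul]
    by_cases h1 : k = i
    · subst h1; simp [mul_comm]
    · simp [h1, Ne.symm h1]
  rw [Matrix.mul_apply]
  simp only [hA, sub_mul, Finset.sum_sub_distrib, ite_mul, zero_mul, Finset.sum_ite_eq',
    Finset.mem_univ, if_true]
  by_cases hi : (i : ℕ) + 1 < d + 1
  · obtain ⟨k, hk⟩ : ∃ k : Fin (d + 1), (k : ℕ) = (i : ℕ) + 1 := ⟨⟨_, hi⟩, rfl⟩
    simp only [← hk, ← Fin.ext_iff, Finset.sum_ite_eq', Finset.mem_univ, if_true]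
    rcases lt_trichotomy i j with h | h | h
    · rw [Matrix.one_apply_ne h.ne]
      linear_combination resolventEntry_step θ u hu hk h
    · subst h
      have hik : i < k := by rw [Fin.lt_def]; omega
      rw [resolventEntry_of_lt θ u hik, Matrix.one_apply_eq]
      linear_combination resolventEntry_self θ u hu i
    · have hjk : j < k := by rw [Fin.lt_def] at *; omega
      rw [resolventEntry_of_lt θ u h, resolventEntry_of_lt θ u hjk, Matrix.one_apply_ne h.ne']
      simp
  · -- The last row has no superdiagonal entry, so the second sum is empty.
    have h0 : ∀ k : Fin (d + 1), (k : ℕ) ≠ (i : ℕ) + 1 := fun k => by have := k.2; omega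
    simp only [h0, if_false, Finset.sum_const_zero, sub_zero]
    rcases lt_trichotomy i j with h | h | h
    · exact absurd j.2 (by rw [Fin.lt_def] at h; omega)
    · subst h
      rw [← sub_mul, resolventEntry_self θ u hu, Matrix.one_apply_eq]
    · rw [resolventEntry_of_lt θ u h, Matrix.one_apply_ne h.ne']
      simp

/-- If `θ_r·u ≠ 1` for all `r`, then `I - u·P̂` is invertible, its inverse
is upper triangular, and `(I - u·P̂)⁻¹(i,j)
= (1-θ_i)⋯(1-θ_{j-1}) · u^{j-i} / ((1-θ_i u)⋯(1-θ_j u))` for `i ≤ j`. -/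
theorem stmt5 (d : ℕ) (hd : 1 ≤ d)
    (θ : Fin (d + 1) → ℂ)
    (Phat : Matrix (Fin (d + 1)) (Fin (d + 1)) ℂ)
    (hPhat : ∀ i j, Phat i j =
        if j = i then θ i else if (j : ℕ) = (i : ℕ) + 1 then 1 - θ i else 0)
    (u : ℂ)
    (hu : ∀ r : Fin (d + 1), θ r * u ≠ 1) :
    IsUnit (1 - u • Phat).det
    ∧ (∀ i j : Fin (d + 1), (j : ℕ) < (i : ℕ) → (1 - u • Phat)⁻¹ i j = 0)
    ∧ ∀ i j : Fin (d + 1), i ≤ j →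
        (1 - u • Phat)⁻¹ i j =
          (∏ r ∈ Finset.Ico i j, (1 - θ r)) * u ^ ((j : ℕ) - (i : ℕ))
            / ∏ r ∈ Finset.Icc i j, (1 - θ r * u) := by
  have hmul := one_sub_smul_mul_resolventEntry θ Phat hPhat u hu
  rw [Matrix.inv_eq_right_inv hmul]
  refine ⟨Matrix.isUnit_det_of_right_inverse hmul, fun i j h => resolventEntry_of_lt θ u h,
    fun i j h => ?_⟩
  simp only [resolventEntry, if_pos h]
end

section
/- (Brown–Shao theorem, discrete time.) For every complex u with |u| < 1, the matrix I − u·P is invertible and (1−u)·((I − u·P)^{−1})(0,d) = ∏_{j=0}^{d−1} (1−θ_j)u / (1−θ_j u). Equivalently, the hitting time T of state d for the chain started at state 0 has probability generating function E[u^T] = ∏_{j=0}^{d−1} (1−θ_j)u / (1−θ_j u). -/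
open Matrix Polynomial

/-!
Write `A = 1 - u P`. Cramer's rule gives `A⁻¹(0,d) = adj A (0,d) / det A`.

* `adj_zero_last`: by the skip-free property, deleting row `d` and column `0` of `A` leaves a
  lower triangular matrix with diagonal `-u P(i,i+1)`, so `adj A (0,d) = u ^ d ∏ P(i,i+1)`.
* `det_one_sub_smul`: the factorization of the characteristic polynomial gives
  `det A = (1 - u) ∏ (1 - θ_j u)`.
* `prod_super_eq`: `∏ P(i,i+1) = ∏ (1 - θ_j)`. Since the rows of `P` sum to one, applying
  `adj (X - P) (X - P) = χ(X)` to the all-ones vector and cancelling `X - 1` shows that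
  row `0` of `adj (X - P)` sums to `∏ (X - θ_j)`. At `X = 1` the last row of `1 - P` vanishes, so
  the only surviving cofactor in that sum is the `(0,d)` one, computed by `adj_zero_last`.

Invertibility of `A` for `|u| < 1` is strict diagonal dominance, and the generating function
identity follows from the geometric series `∑ (uP)^t = A⁻¹`, which converges in the
`ℓ^∞` operator norm.
-/

/-- The `(0,d)` cofactor of `1 - u P` for an upward skip-free `P`. -/
lemma adj_zero_last {d : ℕ} (P : Matrix (Fin (d + 1)) (Fin (d + 1)) ℂ)
    (hskip : ∀ i j : Fin (d + 1), (i : ℕ) + 1 < (j : ℕ) → P i j = 0) (u : ℂ) :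
    (1 - u • P).adjugate 0 (Fin.last d) = u ^ d * ∏ i : Fin d, P i.castSucc i.succ := by
  rw [Matrix.adjugate_fin_succ_eq_det_submatrix, Matrix.det_of_isLowerTriangular]
  · have h : ∀ i : Fin d, (1 - u • P).submatrix (Fin.last d).succAbove (Fin.succAbove 0) i i
        = (-1) * (u * P i.castSucc i.succ) := by
      intro i
      have : i.castSucc ≠ i.succ := Fin.castSucc_lt_succ.ne
      simp [Matrix.one_apply_ne this]
    simp_rw [h, Finset.prod_mul_distrib]
    simp only [Finset.prod_const, Finset.card_univ, Fintype.card_fin, Fin.val_last, Fin.val_zero,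
      add_zero]
    rw [← mul_assoc, ← mul_pow]
    simp
  · intro i j hij
    have hij' : (i : ℕ) < j := hij
    have hne : i.castSucc ≠ j.succ := by
      intro h
      have := congrArg Fin.val h
      simp at this
      omega
    have h0 : P i.castSucc j.succ = 0 := hskip _ _ (by simpa using hij')
    simp [Matrix.one_apply_ne hne, h0]

lemma det_one_sub_smul {d : ℕ} (P : Matrix (Fin (d + 1)) (Fin (d + 1)) ℂ) (θ : Fin d → ℂ)
    (hχ : P.charpoly = (X - 1) * ∏ j : Fin d, (X - C (θ j))) (u : ℂ) :
    (1 - u • P).det = (1 - u) * ∏ j : Fin d, (1 - θ j * u) := by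
  rcases eq_or_ne u 0 with rfl | hu
  · simp
  have h1 : 1 - u • P = u • (Matrix.scalar (Fin (d + 1)) u⁻¹ - P) := by
    ext i j
    by_cases hij : i = j
    · subst hij
      simp [mul_sub, hu]
    · simp [hij]
  have h2 : ∀ j : Fin d, 1 - θ j * u = u * (u⁻¹ - θ j) := fun j => by field_simp
  rw [h1, Matrix.det_smul, ← Matrix.eval_charpoly, hχ]
  simp_rw [h2, Finset.prod_mul_distrib]
  simp only [eval_mul, eval_sub, eval_X, eval_one, eval_prod, eval_C, Fintype.card_fin,
    Finset.prod_const, Finset.card_univ]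
  rw [show 1 - u = u * (u⁻¹ - 1) by field_simp]
  ring

/-- The product of the upward transition probabilities equals `∏ (1 - θ_j)`. -/
lemma prod_super_eq {d : ℕ} (P : Matrix (Fin (d + 1)) (Fin (d + 1)) ℂ) (θ : Fin d → ℂ)
    (hrow : ∀ i, ∑ j, P i j = 1)
    (hskip : ∀ i j : Fin (d + 1), (i : ℕ) + 1 < (j : ℕ) → P i j = 0)
    (habs : ∀ j, P (Fin.last d) j = if j = Fin.last d then 1 else 0)
    (hχ : P.charpoly = (X - 1) * ∏ j : Fin d, (X - C (θ j))) :
    ∏ i : Fin d, P i.castSucc i.succ = ∏ j : Fin d, (1 - θ j) := by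
  have hones : P.charmatrix *ᵥ (fun _ => 1) = fun _ => (X - 1 : ℂ[X]) := by
    ext1 i
    simp only [Matrix.mulVec, dotProduct, mul_one, Matrix.charmatrix, Matrix.sub_apply,
      Finset.sum_sub_distrib, Matrix.scalar_apply, Matrix.diagonal_apply]
    simp [← map_sum, hrow]
  have hadj : ∑ j, P.charmatrix.adjugate 0 j = ∏ j : Fin d, (X - C (θ j)) := by
    have h := congrArg (fun v => (P.charmatrix.adjugate *ᵥ v) 0) hones
    simp only [Matrix.mulVec_mulVec, Matrix.adjugate_mul] at h
    rw [show P.charmatrix.det = P.charpoly from rfl, hχ] at h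
    rw [Matrix.smul_mulVec, Matrix.one_mulVec] at h
    simp only [Pi.smul_apply, smul_eq_mul, mul_one, Matrix.mulVec, dotProduct,
      ← Finset.sum_mul] at h
    have hX : (X - 1 : ℂ[X]) ≠ 0 := by simpa using Polynomial.X_sub_C_ne_zero (1 : ℂ)
    apply mul_left_cancel₀ hX
    rw [mul_comm]
    exact h.symm
  have hmap : (Polynomial.evalRingHom (1 : ℂ)).mapMatrix P.charmatrix = 1 - (1 : ℂ) • P := by
    ext i j
    by_cases hij : i = j
    · subst hij
      simp
    · simp [hij]
  have hev := congrArg (Polynomial.evalRingHom (1 : ℂ)) hadj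
  have hent : ∀ j, Polynomial.evalRingHom (1 : ℂ) (P.charmatrix.adjugate 0 j)
      = (1 - (1 : ℂ) • P).adjugate 0 j := by
    intro j
    rw [← hmap, ← RingHom.map_adjugate]
    rfl
  rw [map_sum] at hev
  simp_rw [hent] at hev
  rw [Finset.sum_eq_single (Fin.last d), adj_zero_last P hskip] at hev
  · simpa [eval_prod] using hev
  · -- a cofactor not deleting the last row contains that row, which is zero at `X = 1`
    intro j _ hj
    rw [Matrix.adjugate_apply]
    apply Matrix.det_eq_zero_of_row_eq_zero (Fin.last d)
    intro k
    rw [Matrix.updateRow_ne hj.symm]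
    simp [Matrix.one_apply, habs, eq_comm]
  · simp

section GeometricSeries

attribute [local instance] Matrix.linftyOpNormedRing Matrix.linftyOpNormedAlgebra

lemma hasSum_pow_apply {n : ℕ} (A : Matrix (Fin n) (Fin n) ℂ) {r : ℝ} (hr : r < 1)
    (hr0 : 0 ≤ r) (hA : ∀ i, ∑ j, ‖A i j‖ ≤ r) (i j : Fin n) :
    HasSum (fun t : ℕ => (A ^ t) i j) ((1 - A)⁻¹ i j) := by
  have hn : ‖A‖ < 1 := by
    refine lt_of_le_of_lt ?_ hr
    lift r to NNReal using hr0
    rw [Matrix.linfty_opNorm_def, NNReal.coe_le_coe]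
    refine Finset.sup_le fun i _ => ?_
    rw [← NNReal.coe_le_coe]
    simpa using hA i
  have hs : Summable (fun t : ℕ => A ^ t) := by
    have : CompleteSpace (Matrix (Fin n) (Fin n) ℂ) := FiniteDimensional.complete ℂ _
    exact summable_geometric_of_norm_lt_one hn
  have hinv : (1 - A)⁻¹ = ∑' t : ℕ, A ^ t := by
    apply Matrix.inv_eq_left_inv
    exact hs.tsum_pow_mul_one_sub
  rw [hinv]
  exact Pi.hasSum.mp (Pi.hasSum.mp hs.hasSum i) j

end GeometricSeries

/-- Brown–Shao, discrete time. For `|u| < 1`, `I - u·P` is invertible and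
`(1-u)·(I - u·P)⁻¹(0,d) = ∏_{j<d} (1-θ_j)u/(1-θ_j u)`; equivalently, the hitting time `T` of
`d` from `0` (with `P(T ≤ t) = P^t(0,d)`, so `P(T = t+1) = P^{t+1}(0,d) - P^t(0,d)`) has
probability generating function `E[u^T] = ∏_{j<d} (1-θ_j)u/(1-θ_j u)`. -/
theorem stmt6 (d : ℕ) (hd : 1 ≤ d)
    (P : Matrix (Fin (d + 1)) (Fin (d + 1)) ℝ)
    (hnonneg : ∀ i j, 0 ≤ P i j)
    (hrowsum : ∀ i, ∑ j, P i j = 1)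
    (hskipfree : ∀ i j : Fin (d + 1), (i : ℕ) + 1 < (j : ℕ) → P i j = 0)
    (hsuper : ∀ i j : Fin (d + 1), (j : ℕ) = (i : ℕ) + 1 → 0 < P i j)
    (habs : ∀ j, P (Fin.last d) j = if j = Fin.last d then 1 else 0)
    (θ : Fin d → ℂ)
    (hcharpoly : (P.map (algebraMap ℝ ℂ)).charpoly
        = (X - 1) * ∏ j : Fin d, (X - C (θ j))) :
    ∀ u : ℂ, ‖u‖ < 1 →
      IsUnit (1 - u • P.map (algebraMap ℝ ℂ)).det
      ∧ (1 - u) * (1 - u • P.map (algebraMap ℝ ℂ))⁻¹ 0 (Fin.last d)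
          = ∏ j : Fin d, ((1 - θ j) * u / (1 - θ j * u))
      ∧ ∑' t : ℕ, (((P ^ (t + 1)) 0 (Fin.last d) - (P ^ t) 0 (Fin.last d) : ℝ) : ℂ) * u ^ (t + 1)
          = ∏ j : Fin d, ((1 - θ j) * u / (1 - θ j * u)) := by
  intro u hu
  set Q : Matrix (Fin (d + 1)) (Fin (d + 1)) ℂ := P.map (algebraMap ℝ ℂ) with hQ
  have hQa : ∀ i j, Q i j = (P i j : ℂ) := fun i j => rfl
  have hQrow : ∀ i, ∑ j, Q i j = 1 := fun i => by
    simp_rw [hQa]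
    exact_mod_cast congrArg (fun x : ℝ => (x : ℂ)) (hrowsum i)
  have hQskip : ∀ i j : Fin (d + 1), (i : ℕ) + 1 < (j : ℕ) → Q i j = 0 := fun i j h => by
    simp [hQa, hskipfree i j h]
  have hQabs : ∀ j, Q (Fin.last d) j = if j = Fin.last d then 1 else 0 := fun j => by
    rw [hQa, habs]
    split_ifs <;> simp
  have hnorm : ∀ i j, ‖(u • Q) i j‖ = ‖u‖ * P i j := fun i j => by
    simp [hQa, abs_of_nonneg (hnonneg i j)]
  have hdet : (1 - u • Q).det ≠ 0 := by
    apply det_ne_zero_of_sum_row_lt_diag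
    intro k
    have h1 : ∑ j ∈ Finset.univ.erase k, ‖(1 - u • Q) k j‖ = ‖u‖ * (1 - P k k) := by
      rw [← hrowsum k, ← Finset.sum_erase_add _ _ (Finset.mem_univ k), add_sub_cancel_right,
        Finset.mul_sum]
      refine Finset.sum_congr rfl fun j hj => ?_
      rw [Matrix.sub_apply, Matrix.one_apply_ne (Finset.ne_of_mem_erase hj).symm, zero_sub,
        norm_neg, hnorm]
    have h2 : 1 - ‖u‖ * P k k ≤ ‖(1 - u • Q) k k‖ := by
      rw [Matrix.sub_apply, Matrix.one_apply_eq, ← hnorm]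
      simpa using norm_sub_norm_le (1 : ℂ) ((u • Q) k k)
    rw [h1]
    linarith
  have hdet' := det_one_sub_smul Q θ hcharpoly u
  have hu1 : 1 - u ≠ 0 := fun h => by
    rw [h, zero_mul] at hdet'
    exact hdet hdet'
  have hres : (1 - u) * (1 - u • Q)⁻¹ 0 (Fin.last d)
      = ∏ j : Fin d, ((1 - θ j) * u / (1 - θ j * u)) := by
    have hprod : ∏ j : Fin d, (1 - θ j * u) ≠ 0 := fun h => by
      rw [h, mul_zero] at hdet'
      exact hdet hdet'
    rw [Matrix.inv_def, Matrix.smul_apply, Ring.inverse_eq_inv', adj_zero_last Q hQskip,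
      prod_super_eq Q θ hQrow hQskip hQabs hcharpoly, hdet', Finset.prod_div_distrib,
      Finset.prod_mul_distrib]
    simp only [Finset.prod_const, Finset.card_univ, Fintype.card_fin, smul_eq_mul]
    field_simp
  refine ⟨hdet.isUnit, hres, ?_⟩
  have hS := hasSum_pow_apply (u • Q) hu (norm_nonneg u)
    (fun i => by simp_rw [hnorm, ← Finset.mul_sum, hrowsum, mul_one]; rfl) 0 (Fin.last d)
  have hpow : ∀ t : ℕ, ((u • Q) ^ t) 0 (Fin.last d)
      = (((P ^ t) 0 (Fin.last d) : ℝ) : ℂ) * u ^ t := by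
    intro t
    have : Q ^ t = (P ^ t).map (algebraMap ℝ ℂ) := by
      rw [hQ]
      exact (map_pow (algebraMap ℝ ℂ).mapMatrix P t).symm
    rw [_root_.smul_pow, this, Matrix.smul_apply, smul_eq_mul, mul_comm]
    rfl
  simp_rw [hpow] at hS
  -- the `t = 0` term vanishes because `0 ≠ d`, so the shifted series has the same sum
  have h0 : (P ^ 0) 0 (Fin.last d) = 0 := by
    rw [pow_zero, Matrix.one_apply_ne]
    intro h
    have := congrArg Fin.val h
    simp at this
    omega
  have hS1 := (hasSum_nat_add_iff' 1).mpr hS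
  simp only [Finset.sum_range_one, h0, Complex.ofReal_zero, zero_mul, sub_zero] at hS1
  have hfin := hS1.sub (hS.mul_left u)
  rw [← hres, sub_mul, one_mul, ← hfin.tsum_eq]
  refine tsum_congr fun t => ?_
  push_cast
  ring
end

section
/- The characteristic polynomial of −G over ℂ factors as X·∏_{j=0}^{d−1}(X−ν_j) where each ν_j has strictly positive real part; that is, 0 is an eigenvalue of −G of algebraic multiplicity exactly one, and the remaining d eigenvalues of −G (with multiplicity) all have strictly positive real part. -/
/-!
The last row of `-G` vanishes, so its characteristic polynomial is `X` times the characteristic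
polynomial of the block `B` of `-G` on the transient states `{0,…,d-1}`
(`charpoly_eq_X_mul_of_last_row_zero`). It remains to see that every eigenvalue `μ` of `B` has
positive real part; in particular `0` is not one, which gives the multiplicity statement.

This is a strict Gershgorin argument (`re_pos_of_eigenvector`). Extend an eigenvector of `B` by `0`
at the absorbing state, let `M > 0` be the maximal modulus of an entry, and let `i` be the
*largest* index where `M` is attained. Writing `q = -G i i = ∑_{j ≠ i} G i j`, the eigenvector
equation reads `(q - μ) w i = ∑_{j ≠ i} G i j * w j`. As `G i (i+1) > 0` and `|w (i+1)| < M`, the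
right-hand side has modulus strictly less than `q M`, so `|q - μ| < q`, whence `Re μ > 0`.
-/

open Matrix Polynomial

/-- An eigenvector of `-G` off the absorbing state that vanishes at the absorbing state has
eigenvalue of positive real part. -/
lemma re_pos_of_eigenvector (d : ℕ) (G : Matrix (Fin (d + 1)) (Fin (d + 1)) ℝ)
    (hoffdiag : ∀ i j, i ≠ j → 0 ≤ G i j)
    (hrowsum : ∀ i, ∑ j, G i j = 0)
    (hsuper : ∀ i j : Fin (d + 1), (j : ℕ) = (i : ℕ) + 1 → 0 < G i j)
    (μ : ℂ) (w : Fin (d + 1) → ℂ) (hw : w ≠ 0) (hlast : w (Fin.last d) = 0)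
    (heig : ∀ i, i ≠ Fin.last d → ∑ j, (G i j : ℂ) * w j = -μ * w i) : 0 < μ.re := by
  -- The lexicographic order picks the largest index among those of maximal modulus.
  obtain ⟨i, -, hi⟩ := Finset.exists_max_image (Finset.univ : Finset (Fin (d + 1)))
    (fun i => toLex (‖w i‖, i)) ⟨0, Finset.mem_univ _⟩
  have hi' : ∀ j, ‖w j‖ < ‖w i‖ ∨ ‖w j‖ = ‖w i‖ ∧ j ≤ i := fun j => by
    simpa [Prod.Lex.toLex_le_toLex] using hi j (Finset.mem_univ _)
  have hle : ∀ j, ‖w j‖ ≤ ‖w i‖ := fun j => (hi' j).elim le_of_lt fun h => h.1.le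
  have hpos : 0 < ‖w i‖ := by
    obtain ⟨k, hk⟩ := Function.ne_iff.mp hw
    exact (norm_pos_iff.mpr hk).trans_le (hle k)
  have hil : i ≠ Fin.last d := fun h => by
    rw [h, hlast, norm_zero] at hpos
    exact lt_irrefl _ hpos
  have hid : (i : ℕ) < d := Fin.val_lt_last hil
  let k : Fin (d + 1) := ⟨i + 1, by omega⟩
  have hki : k ≠ i := fun h => by simpa [k] using congrArg Fin.val h
  have hk : ‖w k‖ < ‖w i‖ := by
    refine (hi' k).resolve_right fun h => ?_
    have := Fin.le_def.mp h.2
    simp [k] at this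
  have hGk : 0 < G i k := hsuper i k rfl
  have hq : ∑ j ∈ Finset.univ.erase i, G i j = -G i i := by
    have := Finset.add_sum_erase Finset.univ (G i) (Finset.mem_univ i)
    rw [hrowsum] at this
    linarith
  have hsum : ∑ j ∈ Finset.univ.erase i, (G i j : ℂ) * w j = (-(G i i : ℂ) - μ) * w i := by
    have := Finset.add_sum_erase Finset.univ (fun j => (G i j : ℂ) * w j) (Finset.mem_univ i)
    rw [heig i hil] at this
    linear_combination this
  have hlt : ‖-(G i i : ℂ) - μ‖ * ‖w i‖ < -G i i * ‖w i‖ := by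
    rw [← norm_mul, ← hsum, ← hq, Finset.sum_mul]
    refine (norm_sum_le _ _).trans_lt (Finset.sum_lt_sum (fun j hj => ?_)
      ⟨k, Finset.mem_erase.mpr ⟨hki, Finset.mem_univ _⟩, ?_⟩)
    · have h0 := hoffdiag i j (Finset.ne_of_mem_erase hj).symm
      rw [norm_mul, Complex.norm_of_nonneg h0]
      exact mul_le_mul_of_nonneg_left (hle j) h0
    · rw [norm_mul, Complex.norm_of_nonneg hGk.le]
      exact mul_lt_mul_of_pos_left hk hGk
  have h1 := lt_of_mul_lt_mul_right hlt hpos.le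
  have h2 := Complex.re_le_norm (-(G i i : ℂ) - μ)
  simp only [Complex.sub_re, Complex.neg_re, Complex.ofReal_re] at h2
  linarith

lemma charpoly_eq_X_mul_of_last_row_zero {R : Type*} [CommRing R] (d : ℕ)
    (A : Matrix (Fin (d + 1)) (Fin (d + 1)) R) (h : ∀ j, A (Fin.last d) j = 0) :
    A.charpoly = X * (A.submatrix Fin.castSucc Fin.castSucc).charpoly := by
  rw [Matrix.charpoly, Matrix.det_succ_row _ (Fin.last d), Finset.sum_eq_single (Fin.last d)]
  · rw [charmatrix_apply_eq, h, map_zero, sub_zero, ← two_mul, pow_mul, neg_one_sq, one_pow,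
      one_mul, Matrix.charpoly]
    congr 2
    ext1 i j
    simp [charmatrix_apply, Matrix.diagonal_apply]
  · intro j _ hj
    rw [charmatrix_apply_ne _ _ _ hj.symm, h]
    simp
  · simp

/-- For an upward skip-free Markov generator `G` on `{0,…,d}` with positive
superdiagonal entries and absorbing state `d`, the characteristic polynomial of `-G` over `ℂ`
factors as `X·∏_{j<d}(X - ν_j)` with each `Re(ν_j) > 0`; that is, `0` is an eigenvalue of
`-G` of algebraic multiplicity exactly one and the remaining `d` eigenvalues have strictly
positive real part. -/
theorem stmt8 (d : ℕ) (hd : 1 ≤ d)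
    (G : Matrix (Fin (d + 1)) (Fin (d + 1)) ℝ)
    (hoffdiag : ∀ i j, i ≠ j → 0 ≤ G i j)
    (hrowsum : ∀ i, ∑ j, G i j = 0)
    (hskipfree : ∀ i j : Fin (d + 1), (i : ℕ) + 1 < (j : ℕ) → G i j = 0)
    (hsuper : ∀ i j : Fin (d + 1), (j : ℕ) = (i : ℕ) + 1 → 0 < G i j)
    (habs : ∀ j, G (Fin.last d) j = 0) :
    ∃ ν : Fin d → ℂ,
      (-(G.map (algebraMap ℝ ℂ))).charpoly = X * ∏ j : Fin d, (X - C (ν j))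
      ∧ (∀ j, 0 < (ν j).re)
      ∧ ((-(G.map (algebraMap ℝ ℂ))).charpoly).rootMultiplicity 0 = 1 := by
  have hfac := charpoly_eq_X_mul_of_last_row_zero d (-(G.map (algebraMap ℝ ℂ)))
    (fun j => by simp [habs])
  set B := (-(G.map (algebraMap ℝ ℂ))).submatrix (Fin.castSucc (n := d)) Fin.castSucc with hB
  have hre : ∀ μ ∈ B.charpoly.roots, 0 < μ.re := by
    intro μ hμ
    have hdet : (Matrix.scalar (Fin d) μ - B).det = 0 := by
      rw [← Matrix.eval_charpoly]
      exact isRoot_of_mem_roots hμ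
    obtain ⟨v, hv, hBv⟩ := Matrix.exists_mulVec_eq_zero_iff.mpr hdet
    rw [Matrix.sub_mulVec, sub_eq_zero] at hBv
    refine re_pos_of_eigenvector d G hoffdiag hrowsum hsuper μ (Fin.snoc v 0) ?_ (by simp) ?_
    · intro h
      apply hv
      ext i
      simpa using congrFun h i.castSucc
    · intro i hi
      obtain ⟨i, rfl⟩ := Fin.exists_castSucc_eq.mpr hi
      have := congrFun hBv i
      simp only [Matrix.scalar_apply, Matrix.mulVec_diagonal] at this
      simp only [Fin.sum_univ_castSucc, Fin.snoc_castSucc, Fin.snoc_last, mul_zero, add_zero,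
        neg_mul, this]
      simp [hB, Matrix.mulVec, dotProduct]
  have hcard : B.charpoly.roots.card = d := by
    rw [IsAlgClosed.card_roots_eq_natDegree, Matrix.charpoly_natDegree_eq_dim, Fintype.card_fin]
  have hprod := (IsAlgClosed.splits B.charpoly).eq_prod_roots_of_monic B.charpoly_monic
  have hlen : B.charpoly.roots.toList.length = d := by simpa using hcard
  refine ⟨fun j => B.charpoly.roots.toList.get (j.cast hlen.symm), ?_, ?_, ?_⟩
  · rw [hfac]
    congr 1
    conv_lhs => rw [hprod, ← Multiset.coe_toList B.charpoly.roots, Multiset.map_coe,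
      Multiset.prod_coe]
    rw [← Fin.prod_univ_fun_getElem]
    exact (Fintype.prod_equiv (finCongr hlen) _ _ fun j => rfl)
  · intro j
    exact hre _ (Multiset.mem_toList.mp (List.get_mem _ _))
  · have h0 : B.charpoly.rootMultiplicity 0 = 0 := by
      refine rootMultiplicity_eq_zero fun h => ?_
      simpa using hre 0 ((mem_roots B.charpoly_monic.ne_zero).mpr h)
    rw [hfac, rootMultiplicity_mul (mul_ne_zero X_ne_zero B.charpoly_monic.ne_zero), h0, add_zero]
    simpa using rootMultiplicity_X_sub_C_self (x := (0 : ℂ))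
end

section
/- For every k = 0,…,d, the spectral polynomial (P−θ_0·I)(P−θ_1·I)⋯(P−θ_{k−1}·I) is a nonnegative matrix; equivalently, each matrix Q_k := ∏_{r=0}^{k−1}(1−θ_r)^{−1}(P−θ_r·I) is a stochastic matrix. -/
/-!
This is the Micchelli–Willoughby argument, for a nonnegative tridiagonal matrix `P` of size
`n = d + 1` with characteristic polynomial `χ`.

List the eigenvalues in decreasing order, `τ 0 ≥ τ 1 ≥ ⋯ ≥ τ (n - 1)`, and let
`N_k = ∏_{r < k} (X - τ r)` be the Newton basis at these nodes. By Cayley–Hamilton a telescoping sum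
gives `adj (X - P) = ∑_{k < n} N_k • ∏_{k < r < n} (P - τ r)`, so that the entries of the spectral
polynomials of `P` are the Newton coefficients (divided differences at the largest eigenvalues)
of the entries of `adj (X - P)`; this is `newtonCoeff_adjugate_charmatrix`. It remains to see that
these coefficients are nonnegative.

* A product `∏_{s < m} (X - μ s)` with `μ s ≤ τ s` for all `s` has nonnegative Newton coefficients
  (`newtonCoeff_prod_nonneg`): write `X - μ 0 = (X - τ 0) + (τ 0 - μ 0)` and induct.
* The characteristic polynomial of every principal submatrix of `P` has this form. `P` and its
  symmetrization `√(P i j * P j i)` have the same characteristic polynomials of principal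
  submatrices (`charpoly_submatrix_symmetrization`): when the off-diagonal entries are positive the
  two matrices are conjugate by a diagonal matrix, and the general case is a limit. For the
  symmetric matrix the inequality `μ s ≤ τ s` is one half of Cauchy interlacing
  (`eigenvalues_le_of_compression`).
* The diagonal entries of the adjugate are such characteristic polynomials, and the off-diagonal
  ones are combinations, with nonnegative coefficients `P i l`, of adjugate entries of a principal
  submatrix of size one less (`adjugate_off_diag`). Induction on the size concludes
  (`newtonCoeff_adjugate_nonneg`).
-/

open Matrix Polynomial

/-! ### Newton expansions -/

/-- The `k`-th coefficient of `f` in its Newton expansion at the nodes `τ 0, τ 1, …`, that is, the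
divided difference `f[τ 0, …, τ k]`; it is obtained by dividing successively by `X - τ 0`,
`X - τ 1`, … and evaluating the last quotient at `τ k`. -/
noncomputable def newtonCoeff : ℕ → (ℕ → ℝ) → ℝ[X] → ℝ
  | 0, τ, f => f.eval (τ 0)
  | k + 1, τ, f => newtonCoeff k (fun r => τ (r + 1)) (f /ₘ (X - C (τ 0)))

/-- The Newton basis polynomial `∏_{r < k} (X - τ r)`. -/
noncomputable def newtonPoly (τ : ℕ → ℝ) (k : ℕ) : ℝ[X] := ∏ r ∈ Finset.range k, (X - C (τ r))

lemma add_divByMonic_X_sub_C (a : ℝ) (f g : ℝ[X]) :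
    (f + g) /ₘ (X - C a) = f /ₘ (X - C a) + g /ₘ (X - C a) := by
  refine (div_modByMonic_unique _ ((f + g) %ₘ (X - C a)) (monic_X_sub_C a) ⟨?_, ?_⟩).1
  · rw [add_modByMonic]
    linear_combination modByMonic_add_div f (X - C a) + modByMonic_add_div g (X - C a)
  · exact degree_modByMonic_lt _ (monic_X_sub_C a)

lemma smul_divByMonic_X_sub_C (a c : ℝ) (f : ℝ[X]) :
    (c • f) /ₘ (X - C a) = c • (f /ₘ (X - C a)) := by
  refine (div_modByMonic_unique _ ((c • f) %ₘ (X - C a)) (monic_X_sub_C a) ⟨?_, ?_⟩).1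
  · rw [smul_modByMonic]
    simp only [smul_eq_C_mul]
    linear_combination C c * modByMonic_add_div f (X - C a)
  · exact degree_modByMonic_lt _ (monic_X_sub_C a)

lemma newtonCoeff_add (k : ℕ) (τ : ℕ → ℝ) (f g : ℝ[X]) :
    newtonCoeff k τ (f + g) = newtonCoeff k τ f + newtonCoeff k τ g := by
  induction k generalizing τ f g with
  | zero => simp [newtonCoeff]
  | succ k ih => simp only [newtonCoeff, add_divByMonic_X_sub_C, ih]

lemma newtonCoeff_smul (k : ℕ) (τ : ℕ → ℝ) (c : ℝ) (f : ℝ[X]) :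
    newtonCoeff k τ (c • f) = c * newtonCoeff k τ f := by
  induction k generalizing τ f with
  | zero => simp [newtonCoeff]
  | succ k ih => simp only [newtonCoeff, smul_divByMonic_X_sub_C, ih]

lemma newtonCoeff_sum {ι : Type*} (k : ℕ) (τ : ℕ → ℝ) (s : Finset ι) (f : ι → ℝ[X]) :
    newtonCoeff k τ (∑ i ∈ s, f i) = ∑ i ∈ s, newtonCoeff k τ (f i) :=
  map_sum (⟨⟨newtonCoeff k τ, by simpa using newtonCoeff_smul k τ 0 0⟩,
    newtonCoeff_add k τ⟩ : ℝ[X] →+ ℝ) f s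

lemma newtonCoeff_one_nonneg (k : ℕ) (τ : ℕ → ℝ) : 0 ≤ newtonCoeff k τ 1 := by
  cases k with
  | zero => simp [newtonCoeff]
  | succ k =>
    have h : (1 : ℝ[X]) /ₘ (X - C (τ 0)) = 0 := by
      rw [divByMonic_eq_zero_iff (monic_X_sub_C _)]
      simp
    have := newtonCoeff_smul k (fun r => τ (r + 1)) 0 0
    simp only [newtonCoeff, h]
    simp only [zero_smul, zero_mul] at this
    exact this.ge

lemma newtonCoeff_mul_zero (τ : ℕ → ℝ) (f : ℝ[X]) :
    newtonCoeff 0 τ ((X - C (τ 0)) * f) = 0 := by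
  simp [newtonCoeff]

lemma newtonCoeff_mul_succ (k : ℕ) (τ : ℕ → ℝ) (f : ℝ[X]) :
    newtonCoeff (k + 1) τ ((X - C (τ 0)) * f) = newtonCoeff k (fun r => τ (r + 1)) f := by
  simp only [newtonCoeff, mul_divByMonic_cancel_left f (monic_X_sub_C (τ 0))]

lemma newtonPoly_succ' (τ : ℕ → ℝ) (k : ℕ) :
    newtonPoly τ (k + 1) = (X - C (τ 0)) * newtonPoly (fun r => τ (r + 1)) k := by
  rw [newtonPoly, Finset.prod_range_succ', mul_comm, newtonPoly]

lemma newtonCoeff_newtonPoly (k j : ℕ) (τ : ℕ → ℝ) :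
    newtonCoeff k τ (newtonPoly τ j) = if k = j then 1 else 0 := by
  induction j generalizing τ k with
  | zero =>
    cases k with
    | zero => simp [newtonCoeff, newtonPoly]
    | succ k =>
      have h : (1 : ℝ[X]) /ₘ (X - C (τ 0)) = 0 := by
        rw [divByMonic_eq_zero_iff (monic_X_sub_C _)]
        simp
      have := newtonCoeff_smul k (fun r => τ (r + 1)) 0 0
      simpa [newtonCoeff, newtonPoly, h] using this
  | succ j ih =>
    rw [newtonPoly_succ']
    cases k with
    | zero => simp [newtonCoeff_mul_zero]
    | succ k => simp [newtonCoeff_mul_succ, ih]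

/-- A monic polynomial whose roots are dominated one by one by decreasing nodes has nonnegative
Newton coefficients at these nodes. -/
lemma newtonCoeff_prod_nonneg (m k : ℕ) (τ μ : ℕ → ℝ) (hτ : Antitone τ)
    (h : ∀ s < m, μ s ≤ τ s) :
    0 ≤ newtonCoeff k τ (∏ s ∈ Finset.range m, (X - C (μ s))) := by
  induction m generalizing k τ μ with
  | zero => simpa using newtonCoeff_one_nonneg k τ
  | succ m ih =>
    rw [Finset.prod_range_succ']
    set g : ℝ[X] := ∏ s ∈ Finset.range m, (X - C (μ (s + 1))) with hg
    have e : g * (X - C (μ 0)) = (X - C (τ 0)) * g + (τ 0 - μ 0) • g := by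
      rw [smul_eq_C_mul, C_sub]; ring
    rw [e, newtonCoeff_add, newtonCoeff_smul]
    have h1 : 0 ≤ newtonCoeff k τ g := ih k τ (fun s => μ (s + 1)) hτ fun s hs =>
      (h (s + 1) (by omega)).trans (hτ (Nat.le_succ s))
    have h2 : 0 ≤ newtonCoeff k τ ((X - C (τ 0)) * g) := by
      cases k with
      | zero => rw [newtonCoeff_mul_zero]
      | succ k =>
        rw [newtonCoeff_mul_succ]
        exact ih k _ (fun s => μ (s + 1)) (fun a b hab => hτ (by omega))
          fun s hs => h (s + 1) (by omega)
    have h3 : 0 ≤ τ 0 - μ 0 := sub_nonneg.2 (h 0 (by omega))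
    positivity

/-! ### Adjugates of characteristic matrices -/

lemma charmatrix_submatrix_embedding {m n : ℕ} (P : Matrix (Fin n) (Fin n) ℝ) (e : Fin m → Fin n)
    (he : Function.Injective e) :
    (P.submatrix e e).charmatrix = P.charmatrix.submatrix e e := by
  ext1 i j
  simp [charmatrix_apply, diagonal_apply, he.eq_iff]

lemma adjugate_diag {R : Type*} [CommRing R] {m : ℕ} (A : Matrix (Fin (m + 1)) (Fin (m + 1)) R)
    (i : Fin (m + 1)) :
    A.adjugate i i = (A.submatrix i.succAbove i.succAbove).det := by
  rw [adjugate_fin_succ_eq_det_submatrix, Even.neg_one_pow (by simp), one_mul]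

/-- The off-diagonal part of row `i` of the adjugate, in terms of the adjugate of the matrix `D` with
row and column `i` removed. It follows from `adj A * A = det A • 1` by multiplying with `adj D` and
cancelling `det D`. -/
lemma adjugate_off_diag {R : Type*} [CommRing R] [IsDomain R] {m : ℕ}
    (A : Matrix (Fin (m + 1)) (Fin (m + 1)) R) (i : Fin (m + 1)) (j : Fin m)
    (hD : (A.submatrix i.succAbove i.succAbove).det ≠ 0) :
    A.adjugate i (i.succAbove j) =
      -∑ l, A i (i.succAbove l) * (A.submatrix i.succAbove i.succAbove).adjugate l j := by
  set D := A.submatrix i.succAbove i.succAbove with hDdef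
  have h1 : (fun l => A.adjugate i (i.succAbove l)) ᵥ* D =
      -(D.det • fun l => A i (i.succAbove l)) := by
    ext l
    have h := congrFun (congrFun (adjugate_mul A) i) (i.succAbove l)
    rw [mul_apply, Fin.sum_univ_succAbove _ i, adjugate_diag] at h
    simp only [Matrix.smul_apply, one_apply_ne (Fin.succAbove_ne i l).symm, smul_zero] at h
    simp only [vecMul, dotProduct, Pi.neg_apply, Pi.smul_apply, smul_eq_mul]
    rw [eq_neg_iff_add_eq_zero, add_comm]
    exact h
  have h2 := congrArg (fun v => (v ᵥ* D.adjugate) j) h1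
  simp only [vecMul_vecMul, mul_adjugate, neg_vecMul, smul_vecMul, vecMul_smul, vecMul_one,
    Pi.smul_apply, Pi.neg_apply, smul_eq_mul] at h2
  apply mul_left_cancel₀ hD
  rw [h2]
  simp [vecMul, dotProduct]

/-! ### Interlacing for principal submatrices of symmetric matrices -/

/-- One half of Cauchy interlacing: the eigenvalues, in decreasing order, of a compression `U` of a
symmetric operator `T` along an isometry `J` are dominated by those of `T`. -/
lemma eigenvalues_le_of_compression {E F : Type*} [NormedAddCommGroup E] [InnerProductSpace ℝ E]
    [FiniteDimensional ℝ E] [NormedAddCommGroup F] [InnerProductSpace ℝ F] [FiniteDimensional ℝ F]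
    {T : E →ₗ[ℝ] E} {U : F →ₗ[ℝ] F} (hT : T.IsSymmetric) (hU : U.IsSymmetric) {n m : ℕ}
    (hn : Module.finrank ℝ E = n) (hm : Module.finrank ℝ F = m)
    (J : F →ₗᵢ[ℝ] E) (hJ : ∀ v, inner ℝ (J v) (T (J v)) = inner ℝ v (U v))
    (s : Fin m) (t : Fin n) (hst : (s : ℕ) = t) :
    hU.eigenvalues hm s ≤ hT.eigenvalues hn t := by
  set u := hU.eigenvectorBasis hm with hu
  set e := hT.eigenvectorBasis hn with he
  have hs := s.2
  have ht := t.2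
  -- A nonzero `v` spanned by the eigenvectors of `U` of index at most `s`, with `J v` spanned by the
  -- eigenvectors of `T` of index at least `t = s`, exists because these are fewer than `m`
  -- linear conditions; both eigenvalues are then compared with the Rayleigh quotient at `v`.
  let L : F →ₗ[ℝ] ({r : Fin n // r < t} ⊕ {r : Fin m // s < r} → ℝ) :=
    LinearMap.pi (Sum.elim (fun r => (innerₛₗ ℝ (e r.1)).comp J.toLinearMap)
      (fun r => innerₛₗ ℝ (u r.1)))
  have hlt : Module.finrank ℝ ({r : Fin n // r < t} ⊕ {r : Fin m // s < r} → ℝ)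
      < Module.finrank ℝ F := by
    rw [Module.finrank_fintype_fun_eq_card, Fintype.card_sum, hm, Fintype.card_subtype,
      Fintype.card_subtype, Finset.filter_gt_eq_Iio, Finset.filter_lt_eq_Ioi, Fin.card_Iio,
      Fin.card_Ioi]
    omega
  obtain ⟨v, hv, hv0⟩ := Submodule.exists_mem_ne_zero_of_ne_bot (L.ker_ne_bot_of_finrank_lt hlt)
  have hL : L v = 0 := hv
  have h1 : ∀ r < t, inner ℝ (e r) (J v) = 0 := fun r hr => congrFun hL (Sum.inl ⟨r, hr⟩)
  have h2 : ∀ r, s < r → inner ℝ (u r) v = 0 := fun r hr => congrFun hL (Sum.inr ⟨r, hr⟩)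
  have hUq : inner ℝ v (U v) = ∑ r, hU.eigenvalues hm r * inner ℝ (u r) v ^ 2 := by
    rw [← u.sum_inner_mul_inner]
    refine Finset.sum_congr rfl fun r _ => ?_
    rw [← hU, hu, hU.apply_eigenvectorBasis, ← hu, real_inner_comm]
    simp [inner_smul_left]; ring
  have hTq : inner ℝ (J v) (T (J v)) = ∑ r, hT.eigenvalues hn r * inner ℝ (e r) (J v) ^ 2 := by
    rw [← e.sum_inner_mul_inner]
    refine Finset.sum_congr rfl fun r _ => ?_
    rw [← hT, he, hT.apply_eigenvectorBasis, ← he, real_inner_comm]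
    simp [inner_smul_left]; ring
  have hle1 : hU.eigenvalues hm s * ‖v‖ ^ 2 ≤ inner ℝ v (U v) := by
    rw [hUq, ← u.sum_sq_norm_inner_right, Finset.mul_sum]
    refine Finset.sum_le_sum fun r _ => ?_
    rw [Real.norm_eq_abs, sq_abs]
    rcases lt_or_ge s r with h | h
    · simp [h2 r h]
    · exact mul_le_mul_of_nonneg_right (hU.eigenvalues_antitone hm h) (sq_nonneg _)
  have hle2 : inner ℝ (J v) (T (J v)) ≤ hT.eigenvalues hn t * ‖v‖ ^ 2 := by
    rw [hTq, ← J.norm_map, ← e.sum_sq_norm_inner_right, Finset.mul_sum]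
    refine Finset.sum_le_sum fun r _ => ?_
    rw [Real.norm_eq_abs, sq_abs]
    rcases lt_or_ge r t with h | h
    · simp [h1 r h]
    · exact mul_le_mul_of_nonneg_right (hT.eigenvalues_antitone hn h) (sq_nonneg _)
  have hpos : 0 < ‖v‖ ^ 2 := by positivity
  exact le_of_mul_le_mul_right (hle1.trans ((hJ v).ge.trans hle2)) hpos

lemma inner_extend {m n : ℕ} {e : Fin m → Fin n} (he : Function.Injective e)
    (v : Fin m → ℝ) (w : Fin n → ℝ) :
    ∑ a, Function.extend e v 0 a * w a = ∑ i, v i * w (e i) := by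
  symm
  refine Fintype.sum_of_injective e he _ _ (fun a ha => ?_) (fun i => ?_)
  · rw [Function.extend_apply' _ _ _ (by simpa using ha)]; simp
  · rw [he.extend_apply]

lemma eigenvalues₀_submatrix_le {m n : ℕ} {A : Matrix (Fin n) (Fin n) ℝ} (hA : A.IsHermitian)
    {e : Fin m → Fin n} (he : Function.Injective e) (s : Fin (Fintype.card (Fin m)))
    (t : Fin (Fintype.card (Fin n))) (hst : (s : ℕ) = t) :
    (hA.submatrix e).eigenvalues₀ s ≤ hA.eigenvalues₀ t := by
  let L : EuclideanSpace ℝ (Fin m) →ₗ[ℝ] EuclideanSpace ℝ (Fin n) :=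
    (WithLp.linearEquiv 2 ℝ (Fin n → ℝ)).symm.toLinearMap ∘ₗ
      Function.ExtendByZero.linearMap ℝ e ∘ₗ (WithLp.linearEquiv 2 ℝ (Fin m → ℝ)).toLinearMap
  have hL : ∀ v a, L v a = Function.extend e v.ofLp 0 a := fun v a => rfl
  have hin : ∀ v w, inner ℝ (L v) w = ∑ i, v i * w (e i) := by
    intro v w
    rw [PiLp.inner_apply, ← inner_extend he]
    simp [hL, mul_comm]
  let J : EuclideanSpace ℝ (Fin m) →ₗᵢ[ℝ] EuclideanSpace ℝ (Fin n) :=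
    L.isometryOfInner fun v w => by
      rw [hin, PiLp.inner_apply]
      simp [hL, he.extend_apply, mul_comm]
  refine eigenvalues_le_of_compression _ _ _ _ J (fun v => ?_) s t hst
  change inner ℝ (L v) _ = _
  rw [hin, PiLp.inner_apply]
  refine Finset.sum_congr rfl fun i _ => ?_
  simp only [toLpLin_apply, mulVec, dotProduct, submatrix_apply, RCLike.inner_apply, conj_trivial]
  rw [mul_comm]
  congr 1
  change ∑ a, A (e i) a * L v a = _
  simp only [hL]
  simp only [mul_comm (A _ _)]
  exact inner_extend he v.ofLp (fun a => A (e i) a)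

/-- The characteristic polynomial of a principal submatrix of a symmetric matrix has nonnegative
Newton coefficients at the eigenvalues of the full matrix in decreasing order. -/
lemma newtonCoeff_charpoly_submatrix_nonneg {m n : ℕ} {A : Matrix (Fin n) (Fin n) ℝ}
    (hA : A.IsHermitian) {e : Fin m → Fin n} (he : Function.Injective e) {τ : ℕ → ℝ}
    (hτ : Antitone τ) (hχ : A.charpoly = newtonPoly τ n) (k : ℕ) :
    0 ≤ newtonCoeff k τ (A.submatrix e e).charpoly := by
  -- Both sides are the decreasing list of the roots of the characteristic polynomial.
  have hev : ∀ t : Fin (Fintype.card (Fin n)), hA.eigenvalues₀ t = τ t := by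
    have h := hA.sort_roots_charpoly_eq_eigenvalues₀
    have hr : A.charpoly.roots.map RCLike.re
        = (List.ofFn fun t : Fin (Fintype.card (Fin n)) => τ t : Multiset ℝ) := by
      rw [hχ, newtonPoly, roots_prod _ _ (by
        simp [Finset.prod_ne_zero_iff, X_sub_C_ne_zero])]
      simp [List.ofFn_eq_map, Multiset.range, ← List.map_coe_finRange_eq_range, Function.comp_def]
    have hp : (List.ofFn fun t : Fin (Fintype.card (Fin n)) => τ t).Pairwise (· ≥ ·) := by
      rw [← List.sortedGE_iff_pairwise]
      exact Antitone.sortedGE_ofFn fun a b hab => hτ hab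
    rw [hr, Multiset.coe_sort, List.mergeSort_of_pairwise (by simpa using hp)] at h
    intro t
    exact (congrFun (List.ofFn_injective h) t).symm
  set hB := hA.submatrix e
  let μ : ℕ → ℝ := fun s =>
    if h : s < Fintype.card (Fin m) then hB.eigenvalues₀ ⟨s, h⟩ else 0
  have hcp : (A.submatrix e e).charpoly
      = ∏ s ∈ Finset.range (Fintype.card (Fin m)), (X - C (μ s)) := by
    rw [hB.charpoly_eq, Finset.prod_range]
    refine Fintype.prod_equiv (Fintype.equivOfCardEq (Fintype.card_fin _)).symm _ _ fun i => ?_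
    simp only [μ, IsHermitian.eigenvalues, Fin.is_lt, dif_pos, Fin.eta]
    rfl
  rw [hcp]
  refine newtonCoeff_prod_nonneg _ _ _ _ hτ fun s hs => ?_
  have hmn : m ≤ n := by simpa using Fintype.card_le_of_injective e he
  have hs' : s < Fintype.card (Fin n) := by simp at hs ⊢; omega
  simp only [μ, hs, dif_pos]
  exact (eigenvalues₀_submatrix_le hA he ⟨s, hs⟩ ⟨s, hs'⟩ rfl).trans (hev _).le

/-! ### Symmetrization of a tridiagonal matrix -/

/-- The symmetric matrix with entries `√(P i j * P j i)`. For a nonnegative tridiagonal `P` it has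
the same diagonal as `P` and the same products of opposite off-diagonal entries. -/
noncomputable def symmetrization {n : ℕ} (P : Matrix (Fin n) (Fin n) ℝ) :
    Matrix (Fin n) (Fin n) ℝ :=
  Matrix.of fun i j => √(P i j * P j i)

lemma symmetrization_isHermitian {n : ℕ} (P : Matrix (Fin n) (Fin n) ℝ) :
    (symmetrization P).IsHermitian := by
  ext i j
  simp [symmetrization, mul_comm]

/-- A nonnegative tridiagonal matrix with positive entries next to the diagonal is conjugate to its
symmetrization by the diagonal matrix with entries `∏_{l < i} √(P l (l + 1) / P (l + 1) l)`. -/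
lemma exists_diagonal_conj {n : ℕ} (P : Matrix (Fin n) (Fin n) ℝ) (hP : ∀ i j, 0 ≤ P i j)
    (htri : ∀ i j : Fin n, ((i : ℕ) + 1 < j ∨ (j : ℕ) + 1 < i) → P i j = 0)
    (hpos : ∀ i j : Fin n, ((i : ℕ) + 1 = j ∨ (j : ℕ) + 1 = i) → 0 < P i j) :
    ∃ D : Fin n → ℝ, (∀ i, D i ≠ 0) ∧ ∀ i j, D i * P i j = symmetrization P i j * D j := by
  let w : ℕ → ℝ := fun l =>
    if h : l + 1 < n then √(P ⟨l, by omega⟩ ⟨l + 1, h⟩) / √(P ⟨l + 1, h⟩ ⟨l, by omega⟩) else 1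
  have hw : ∀ l, w l ≠ 0 := by
    intro l
    by_cases h : l + 1 < n
    · simp only [w, h, dif_pos]
      have h1 := hpos ⟨l, by omega⟩ ⟨l + 1, h⟩ (Or.inl rfl)
      have h2 := hpos ⟨l + 1, h⟩ ⟨l, by omega⟩ (Or.inr rfl)
      positivity
    · simp [w, h]
  refine ⟨fun i => ∏ l ∈ Finset.range i, w l,
    fun i => Finset.prod_ne_zero_iff.2 fun l _ => hw l, ?_⟩
  intro i j
  simp only [symmetrization, of_apply]
  rcases lt_trichotomy ((i : ℕ) + 1) j with h | h | h
  · simp [htri i j (Or.inl h)]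
  · have h1 := hpos i j (Or.inl h)
    have h2 := hpos j i (Or.inr h)
    have hwi : w i = √(P i j) / √(P j i) := by
      have hlt : (i : ℕ) + 1 < n := h ▸ j.2
      have hj : (⟨(i : ℕ) + 1, hlt⟩ : Fin n) = j := Fin.ext h
      simp only [w, hlt, dif_pos, hj]
    rw [← h, Finset.prod_range_succ, hwi, Real.sqrt_mul h1.le]
    have h3 : √(P j i) ≠ 0 := by positivity
    field_simp
    rw [Real.sq_sqrt h1.le]
  · rcases lt_trichotomy ((j : ℕ) + 1) i with h' | h' | h'
    · simp [htri i j (Or.inr h')]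
    · have h1 := hpos i j (Or.inr h')
      have h2 := hpos j i (Or.inl h')
      have hwj : w j = √(P j i) / √(P i j) := by
        have hlt : (j : ℕ) + 1 < n := h' ▸ i.2
        have hj : (⟨(j : ℕ) + 1, hlt⟩ : Fin n) = i := Fin.ext h'
        simp only [w, hlt, dif_pos, hj]
      rw [← h', Finset.prod_range_succ, hwj, Real.sqrt_mul h1.le]
      have h3 : √(P i j) ≠ 0 := by positivity
      field_simp
      rw [Real.sq_sqrt h1.le]
    · have : i = j := Fin.ext (by omega)
      subst this
      rw [Real.sqrt_mul_self (hP i i), mul_comm]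

lemma charpoly_submatrix_of_diagonal_conj {m n : ℕ} {P A : Matrix (Fin n) (Fin n) ℝ}
    {D : Fin n → ℝ} (hD : ∀ i, D i ≠ 0) (h : ∀ i j, D i * P i j = A i j * D j)
    (e : Fin m → Fin n) :
    (P.submatrix e e).charpoly = (A.submatrix e e).charpoly := by
  have h1 : P.submatrix e e =
      diagonal (fun i => (D (e i))⁻¹) * (A.submatrix e e * diagonal (fun i => D (e i))) := by
    ext i j
    rw [diagonal_mul, mul_diagonal, submatrix_apply, submatrix_apply, ← h]
    field_simp [hD]
  rw [h1, charpoly_mul_comm, mul_assoc, diagonal_mul_diagonal]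
  have : (fun i => D (e i) * (D (e i))⁻¹) = fun _ => 1 := by
    ext i; exact mul_inv_cancel₀ (hD _)
  rw [this, diagonal_one, mul_one]

/-- The entries next to the diagonal may vanish here, so that no conjugation need exist; the
identity is the limit `ε → 0` of the one for `P` with `ε` added to these entries. -/
lemma charpoly_submatrix_symmetrization {m n : ℕ} (P : Matrix (Fin n) (Fin n) ℝ)
    (hP : ∀ i j, 0 ≤ P i j)
    (htri : ∀ i j : Fin n, ((i : ℕ) + 1 < j ∨ (j : ℕ) + 1 < i) → P i j = 0)
    (e : Fin m → Fin n) :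
    (P.submatrix e e).charpoly = ((symmetrization P).submatrix e e).charpoly := by
  let N : Matrix (Fin n) (Fin n) ℝ :=
    Matrix.of fun i j => if (i : ℕ) + 1 = j ∨ (j : ℕ) + 1 = i then 1 else 0
  have hN : ∀ i j, 0 ≤ N i j := fun i j => by simp only [N, of_apply]; split_ifs <;> norm_num
  have hε : ∀ ε : ℝ, 0 < ε → ((P + ε • N).submatrix e e).charpoly
      = ((symmetrization (P + ε • N)).submatrix e e).charpoly := by
    intro ε hε
    obtain ⟨D, hD, h⟩ := exists_diagonal_conj (P + ε • N)
      (fun i j => add_nonneg (hP i j) (mul_nonneg hε.le (hN i j)))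
      (fun i j hij => by
        have : ¬ ((i : ℕ) + 1 = j ∨ (j : ℕ) + 1 = i) := by omega
        simp [htri i j hij, N, this])
      (fun i j hij => by
        have := hP i j
        simp only [Matrix.add_apply, Matrix.smul_apply, N, of_apply, hij, if_true, smul_eq_mul]
        linarith)
    exact charpoly_submatrix_of_diagonal_conj hD h e
  refine Polynomial.funext fun x => ?_
  simp only [eval_charpoly] at *
  have c1 : Continuous fun ε : ℝ => (scalar (Fin m) x - (P + ε • N).submatrix e e).det := by
    refine Continuous.matrix_det (continuous_const.sub (Continuous.matrix_submatrix ?_ e e))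
    fun_prop
  have c2 : Continuous fun ε : ℝ =>
      (scalar (Fin m) x - (symmetrization (P + ε • N)).submatrix e e).det := by
    refine Continuous.matrix_det (continuous_const.sub (Continuous.matrix_submatrix ?_ e e))
    refine continuous_matrix fun i j => ?_
    simp only [symmetrization, of_apply, Matrix.add_apply, Matrix.smul_apply]
    fun_prop
  have t1 := (c1.tendsto 0).mono_left (nhdsWithin_le_nhds (s := Set.Ioi (0 : ℝ)))
  have t2 := (c2.tendsto 0).mono_left (nhdsWithin_le_nhds (s := Set.Ioi (0 : ℝ)))
  have heq : (fun ε : ℝ => (scalar (Fin m) x - (P + ε • N).submatrix e e).det)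
      =ᶠ[nhdsWithin 0 (Set.Ioi 0)]
      fun ε : ℝ => (scalar (Fin m) x - (symmetrization (P + ε • N)).submatrix e e).det := by
    filter_upwards [self_mem_nhdsWithin] with ε hpos
    rw [← eval_charpoly, ← eval_charpoly, hε ε hpos]
  simpa using tendsto_nhds_unique t1 (t2.congr' heq.symm)

/-! ### Nonnegativity of the spectral polynomials -/

/-- Nonnegativity of the Newton coefficients passes from the characteristic polynomials of the
principal submatrices of a nonnegative matrix to all entries of the adjugates of their
characteristic matrices. -/
lemma newtonCoeff_adjugate_nonneg {n : ℕ} {P : Matrix (Fin n) (Fin n) ℝ}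
    (hP : ∀ i j, 0 ≤ P i j) {τ : ℕ → ℝ} {k : ℕ}
    (H : ∀ (m : ℕ) (e : Fin m → Fin n), Function.Injective e →
      0 ≤ newtonCoeff k τ (P.submatrix e e).charpoly)
    (m : ℕ) (e : Fin m → Fin n) (he : Function.Injective e) (i j : Fin m) :
    0 ≤ newtonCoeff k τ ((P.submatrix e e).charmatrix.adjugate i j) := by
  induction m with
  | zero => exact i.elim0
  | succ m ih =>
    have he' : Function.Injective (e ∘ i.succAbove) := he.comp i.succAbove_right_injective
    have hsub : (P.submatrix e e).charmatrix.submatrix i.succAbove i.succAbove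
        = (P.submatrix (e ∘ i.succAbove) (e ∘ i.succAbove)).charmatrix := by
      rw [charmatrix_submatrix_embedding P e he, charmatrix_submatrix_embedding P _ he',
        submatrix_submatrix]
    rcases eq_or_ne j i with rfl | hij
    · rw [adjugate_diag, hsub]
      exact H m _ he'
    · obtain ⟨l, rfl⟩ := Fin.exists_succAbove_eq hij
      rw [adjugate_off_diag _ _ _ (by rw [hsub]; exact (charpoly_monic _).ne_zero), hsub,
        ← Finset.sum_neg_distrib, newtonCoeff_sum]
      refine Finset.sum_nonneg fun r _ => ?_
      rw [charmatrix_apply_ne _ _ _ (Fin.succAbove_ne i r).symm, neg_mul, neg_neg,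
        ← smul_eq_C_mul, newtonCoeff_smul]
      exact mul_nonneg (hP _ _) (ih _ he' r l)

/-- The Newton coefficients of `adj (X - P)` at the eigenvalues are the partial products
`H (k + 1) = ∏_{k < r < n} (P - τ r)`. The condition `H 0 = 0` is the Cayley–Hamilton theorem. -/
lemma newtonCoeff_adjugate_charmatrix {n : ℕ} (P : Matrix (Fin n) (Fin n) ℝ) (τ : ℕ → ℝ)
    (hχ : P.charpoly = newtonPoly τ n) (H : ℕ → Matrix (Fin n) (Fin n) ℝ)
    (H0 : H 0 = 0) (Hn : H n = 1) (Hs : ∀ k < n, H k = (P - τ k • 1) * H (k + 1))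
    (k : ℕ) (hk : k < n) (i j : Fin n) :
    newtonCoeff k τ (P.charmatrix.adjugate i j) = H (k + 1) i j := by
  have hstep : ∀ k < n, P.charmatrix * (newtonPoly τ k • (H (k + 1)).map C)
      = newtonPoly τ (k + 1) • (H (k + 1)).map C - newtonPoly τ k • (H k).map C := by
    intro k hk
    have h1 : P.charmatrix = (X - C (τ k)) • 1 - (P - τ k • 1).map C := by
      ext1 a b
      by_cases hab : a = b
      · subst hab; simp
      · simp [hab, charmatrix_apply_ne]
    have h2 : (H k).map C = (P - τ k • 1).map C * (H (k + 1)).map C := by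
      rw [Hs k hk, Matrix.map_mul]
    rw [h2, h1, newtonPoly, newtonPoly, Finset.prod_range_succ, sub_mul, smul_mul_assoc, one_mul,
      mul_smul_comm, smul_smul, mul_comm (X - C (τ k))]
  have hM : P.charmatrix * ∑ k ∈ Finset.range n, newtonPoly τ k • (H (k + 1)).map C
      = P.charpoly • 1 := by
    rw [Finset.mul_sum, Finset.sum_congr rfl fun k hk => hstep k (Finset.mem_range.1 hk),
      Finset.sum_range_sub (fun k => newtonPoly τ k • (H k).map C), H0, Hn, hχ]
    simp
  have hadj : P.charmatrix.adjugate
      = ∑ k ∈ Finset.range n, newtonPoly τ k • (H (k + 1)).map C := by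
    have h3 := congrArg (fun M => P.charmatrix.adjugate * M) hM
    simp only [← mul_assoc, adjugate_mul, smul_mul_assoc, one_mul, mul_smul_comm, mul_one] at h3
    exact (smul_right_injective _ (charpoly_monic P).ne_zero h3).symm
  rw [hadj, Matrix.sum_apply, newtonCoeff_sum]
  have : ∀ l ∈ Finset.range n, newtonCoeff k τ ((newtonPoly τ l • (H (l + 1)).map C) i j)
      = if k = l then H (l + 1) i j else 0 := by
    intro l _
    rw [Matrix.smul_apply, map_apply, smul_eq_mul, mul_comm, ← smul_eq_C_mul, newtonCoeff_smul,
      newtonCoeff_newtonPoly]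
    simp
  rw [Finset.sum_congr rfl this]
  simp [hk]

/-- Here `H (k + 1) = ∏_{k < r < n} (P - τ r)` is the spectral polynomial of the `n - 1 - k` smallest
eigenvalues. -/
lemma spectral_polynomial_nonneg {n : ℕ} {P : Matrix (Fin n) (Fin n) ℝ}
    (hP : ∀ i j, 0 ≤ P i j)
    (htri : ∀ i j : Fin n, ((i : ℕ) + 1 < j ∨ (j : ℕ) + 1 < i) → P i j = 0)
    {τ : ℕ → ℝ} (hτ : Antitone τ) (hχ : P.charpoly = newtonPoly τ n)
    (H : ℕ → Matrix (Fin n) (Fin n) ℝ)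
    (H0 : H 0 = 0) (Hn : H n = 1) (Hs : ∀ k < n, H k = (P - τ k • 1) * H (k + 1))
    (k : ℕ) (hk : k < n) (i j : Fin n) : 0 ≤ H (k + 1) i j := by
  rw [← newtonCoeff_adjugate_charmatrix P τ hχ H H0 Hn Hs k hk i j]
  have hA : (symmetrization P).charpoly = newtonPoly τ n := by
    rw [← hχ]
    simpa using (charpoly_submatrix_symmetrization P hP htri id).symm
  have := newtonCoeff_adjugate_nonneg hP (τ := τ) (k := k) (fun m e he => by
    rw [charpoly_submatrix_symmetrization P hP htri e]
    exact newtonCoeff_charpoly_submatrix_nonneg (symmetrization_isHermitian P) he hτ hA k)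
    n id Function.injective_id i j
  simpa using this

/-- For an absorbing birth-and-death kernel `P` with nonnegative real
non-unit eigenvalues `0 ≤ θ_0 ≤ ⋯ ≤ θ_{d-1} < 1 = θ_d`, every spectral polynomial
`(P-θ_0 I)⋯(P-θ_{k-1} I)` is a nonnegative matrix; equivalently, each normalized spectral
polynomial `Q_k = ∏_{r<k}(1-θ_r)⁻¹(P-θ_r I)` is a stochastic matrix. -/
theorem stmt12 (d : ℕ) (hd : 1 ≤ d)
    (P : Matrix (Fin (d + 1)) (Fin (d + 1)) ℝ)
    (hnonneg : ∀ i j, 0 ≤ P i j)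
    (hrowsum : ∀ i, ∑ j, P i j = 1)
    (htridiag : ∀ i j : Fin (d + 1), ((i : ℕ) + 1 < (j : ℕ) ∨ (j : ℕ) + 1 < (i : ℕ)) →
        P i j = 0)
    (hsuper : ∀ i j : Fin (d + 1), (j : ℕ) = (i : ℕ) + 1 → 0 < P i j)
    (habs : ∀ j, P (Fin.last d) j = if j = Fin.last d then 1 else 0)
    (θ : Fin (d + 1) → ℝ)
    (hmono : Monotone θ)
    (hθ0 : ∀ j : Fin d, 0 ≤ θ j.castSucc)
    (hθ1 : ∀ j : Fin d, θ j.castSucc < 1)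
    (hθlast : θ (Fin.last d) = 1)
    (hcharpoly : P.charpoly = (X - 1) * ∏ j : Fin d, (X - C (θ j.castSucc)))
    -- the spectral polynomials S_k = (P-θ_0 I)⋯(P-θ_{k-1} I)
    (S : Fin (d + 1) → Matrix (Fin (d + 1)) (Fin (d + 1)) ℝ)
    (hS0 : S 0 = 1)
    (hSsucc : ∀ k : Fin d, S k.succ = S k.castSucc * (P - θ k.castSucc • 1))
    -- the normalized spectral polynomials Q_k = ∏_{r<k}(1-θ_r)⁻¹(P-θ_r I)
    (Q : Fin (d + 1) → Matrix (Fin (d + 1)) (Fin (d + 1)) ℝ)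
    (hQ0 : Q 0 = 1)
    (hQsucc : ∀ k : Fin d, Q k.succ = Q k.castSucc *
        ((1 - θ k.castSucc)⁻¹ • (P - θ k.castSucc • 1))) :
    ∀ k : Fin (d + 1),
      (∀ i j, 0 ≤ S k i j)
      ∧ (∀ i j, 0 ≤ Q k i j) ∧ (∀ i, ∑ j, Q k i j = 1) := by
  -- `θ` extended to all of `ℕ` by the value `θ d = 1`
  let θ' : ℕ → ℝ := fun r => θ ⟨min r d, by omega⟩
  have hθ' : ∀ r : Fin (d + 1), θ' r = θ r := fun r => by
    have hr := r.2
    exact congrArg θ (Fin.ext (by simp; omega))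
  have hmono' : Monotone θ' := fun a b hab => hmono (by
    rw [Fin.mk_le_mk]; omega)
  -- `W k = S k` for `k ≤ d`, and `W (d + 1) = χ(P)`
  let W : ℕ → Matrix (Fin (d + 1)) (Fin (d + 1)) ℝ := fun k => aeval P (newtonPoly θ' k)
  have hWsucc : ∀ k, W (k + 1) = W k * (P - θ' k • 1) := fun k => by
    simp only [W, newtonPoly, Finset.prod_range_succ, map_mul, map_sub, aeval_X, aeval_C,
      Algebra.algebraMap_eq_smul_one]
  have hWsucc' : ∀ k, W (k + 1) = (P - θ' k • 1) * W k := fun k => by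
    have : newtonPoly θ' (k + 1) = (X - C (θ' k)) * newtonPoly θ' k := by
      rw [newtonPoly, Finset.prod_range_succ, mul_comm, newtonPoly]
    simp only [W, this, map_mul, map_sub, aeval_X, aeval_C, Algebra.algebraMap_eq_smul_one]
  have hχ : P.charpoly = newtonPoly θ' (d + 1) := by
    rw [hcharpoly, newtonPoly, Finset.prod_range, Fin.prod_univ_castSucc, mul_comm]
    simp only [hθ', hθlast, map_one]
  have hS : ∀ k : Fin (d + 1), S k = W k := fun k => by
    induction k using Fin.induction with
    | zero => simp [hS0, W, newtonPoly]
    | succ k ih =>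
      rw [hSsucc, ih, Fin.val_succ, hWsucc, ← hθ' k.castSucc]
      rfl
  have hSnn : ∀ k i j, 0 ≤ S k i j := by
    intro k i j
    have hk := k.2
    have h := spectral_polynomial_nonneg hnonneg htridiag (τ := fun r => θ' (d - r))
      (fun a b hab => hmono' (by omega))
      (by
        rw [hχ, newtonPoly, newtonPoly, ← Finset.prod_range_reflect]
        exact Finset.prod_congr rfl fun r _ => by simp)
      (fun r => W (d + 1 - r))
      (by simp only [W, Nat.sub_zero, ← hχ]; exact aeval_self_charpoly P)
      (by simp [W, newtonPoly])
      (fun r hr => by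
        have h1 : d + 1 - r = (d - r) + 1 := by omega
        have h2 : d + 1 - (r + 1) = d - r := by omega
        simp only [h1, h2, hWsucc'])
      (d - k) (by omega) i j
    have h3 : d + 1 - (d - (k : ℕ) + 1) = k := by omega
    rw [hS]
    simpa only [h3] using h
  have hQS : ∀ k, ∃ c : ℝ, 0 ≤ c ∧ Q k = c • S k := fun k => by
    induction k using Fin.induction with
    | zero => exact ⟨1, zero_le_one, by simp [hQ0, hS0]⟩
    | succ k ih =>
      obtain ⟨c, hc, h⟩ := ih
      refine ⟨c * (1 - θ k.castSucc)⁻¹,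
        mul_nonneg hc (inv_nonneg.2 (sub_nonneg.2 (hθ1 k).le)), ?_⟩
      rw [hQsucc, h, hSsucc, smul_mul_smul_comm]
  have hP1 : P *ᵥ 1 = 1 := by
    ext i; simp [mulVec, dotProduct, hrowsum]
  have hQ1 : ∀ k, Q k *ᵥ 1 = 1 := fun k => by
    induction k using Fin.induction with
    | zero => simp [hQ0]
    | succ k ih =>
      have hne : 1 - θ k.castSucc ≠ 0 := (sub_pos.2 (hθ1 k)).ne'
      have h1 : ((1 - θ k.castSucc)⁻¹ • (P - θ k.castSucc • 1)) *ᵥ (1 : Fin (d + 1) → ℝ) = 1 := by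
        rw [smul_mulVec, sub_mulVec, hP1, smul_mulVec, one_mulVec]
        ext i
        simp [hne]
      rw [hQsucc, ← mulVec_mulVec, h1, ih]
  intro k
  refine ⟨hSnn k, fun i j => ?_, fun i => ?_⟩
  · obtain ⟨c, hc, h⟩ := hQS k
    rw [h]
    exact mul_nonneg hc (hSnn k i j)
  · simpa [mulVec, dotProduct] using congrFun (hQ1 k) i
end

section
/- For every integer t ≥ 0 and every m ∈ {0,…,d}, Σ_{j=m}^{d} P^t(0,j) ≤ Σ_{j=m}^{d} P̂^t(0,j); that is, the row distribution P̂^t(0,·) stochastically dominates P^t(0,·) at every epoch t, so among all such absorbing birth-and-death chains started at 0 with the given eigenvalues, the pure-birth spectral kernel P̂ is stochastically maximal at every epoch. -/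
open Matrix Polynomial Finset

/-!
The proof is by intertwining. Put `v_i = e_0 (P - θ_0) ⋯ (P - θ_{i-1})` and let `Λ` have rows
`Λ_i = v_i / ∏_{l<i} (1 - θ_l)`. Then `Λ P = P̂ Λ`: this is `v_i P = v_{i+1} + θ_i v_i`, together
with `v_{d+1} = 0` (Cayley–Hamilton). Since `P` is tridiagonal and stochastic, `Λ` is lower
triangular with row sums one and first row `e_0`. If `Λ` is also nonnegative, then
`P^t(0,·) = ∑_i P̂^t(0,i) Λ_i` is a mixture of laws `Λ_i` carried by `{0,…,i}`, and the domination
follows (`tail_le_of_link`).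

The substance is the nonnegativity of `v_i` (`spectralProd_nonneg`), a tridiagonal case of a theorem
of Micchelli and Willoughby. Let `x_k = θ_{d-k}` be the eigenvalues in decreasing order and
`N_k = ∏_{l<k} (X - x_l)`. The polynomial row `w = ∑_k v_{d-k} N_k` satisfies
`w (X - P) = χ_P e_0`; solving this three-term recurrence from the last column gives
`w_j = P(0,1) ⋯ P(j-1,j) R_j`, where `R_j` is the characteristic polynomial of the block of `P` on
the indices `j+1,…,d`. So `v_{d-k}(j)` is, up to a positive factor, the `k`-th Newton coefficient of
`R_j` at the nodes `x`. Characteristic polynomials of tridiagonal blocks depend only on the diagonal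
entries and on the products of opposite off-diagonal entries, so `P` may be replaced by a symmetric
matrix; Cauchy interlacing then gives that the `l`-th largest root of `R_j` is at most `x_l`, and
this forces nonnegative Newton coefficients (`newton_expansion_nonneg`).
-/

/-! ### Cauchy interlacing -/

/-- Spectral theorem for a real symmetric matrix, with eigenvalues in decreasing order. -/
theorem exists_sorted_diagonalization {n : ℕ} (A : Matrix (Fin n) (Fin n) ℝ) (hA : Aᵀ = A) :
    ∃ (U : Matrix (Fin n) (Fin n) ℝ) (x : Fin n → ℝ), Antitone x ∧ Uᵀ * U = 1 ∧
      A = U * diagonal x * Uᵀ := by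
  have hH : A.IsHermitian := by
    rw [Matrix.IsHermitian, conjTranspose_eq_transpose_of_trivial, hA]
  set V : Matrix (Fin n) (Fin n) ℝ := (hH.eigenvectorUnitary : Matrix (Fin n) (Fin n) ℝ) with hV
  have hVV : Vᵀ * V = 1 := by
    have := Unitary.coe_star_mul_self hH.eigenvectorUnitary
    rwa [star_eq_conjTranspose, conjTranspose_eq_transpose_of_trivial] at this
  have hspec : A = V * diagonal hH.eigenvalues * Vᵀ := by
    have := hH.spectral_theorem
    rw [Unitary.conjStarAlgAut_apply] at this
    rw [star_eq_conjTranspose, conjTranspose_eq_transpose_of_trivial] at this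
    exact this
  let e : Fin n ≃ Fin n := (Fin.revPerm).trans (Tuple.sort hH.eigenvalues)
  refine ⟨V.submatrix id e, hH.eigenvalues ∘ e, ?_, ?_, ?_⟩
  · intro i j hij
    exact Tuple.monotone_sort hH.eigenvalues (Fin.rev_le_rev.mpr hij)
  · rw [transpose_submatrix, submatrix_mul _ _ e id e Function.bijective_id |>.symm, hVV,
      submatrix_one_equiv]
  · have hd : diagonal (hH.eigenvalues ∘ e) = (diagonal hH.eigenvalues).submatrix e e := by
      rw [submatrix_diagonal_equiv]
    rw [hd, transpose_submatrix, submatrix_mul_equiv, submatrix_mul_equiv, ← hspec, submatrix_id_id]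

/-- The Courant–Fischer step of Cauchy interlacing in diagonalized form: if an isometry `T`
compresses `diagonal x` to `diagonal y`, then the `l`-th largest entry of `y` is at most the `l`-th
largest entry of `x`. By dimension count there is a nonzero `u` supported on the coordinates `≤ l`
with `T u` vanishing on the coordinates `< l`; compare the two quadratic forms at `u`. -/
theorem diag_compression_le {n m : ℕ} (T : Matrix (Fin n) (Fin m) ℝ) (x : Fin n → ℝ)
    (y : Fin m → ℝ) (hx : Antitone x) (hy : Antitone y) (hT : Tᵀ * T = 1)
    (hTd : Tᵀ * diagonal x * T = diagonal y) (l : ℕ) (hn : l < n) (hm : l < m) :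
    y ⟨l, hm⟩ ≤ x ⟨l, hn⟩ := by
  -- `ι` includes the vectors supported on the first `l + 1` coordinates; `f` reads the first `l`
  -- coordinates of their image under `T`
  let ι : (Fin (l + 1) → ℝ) →ₗ[ℝ] (Fin m → ℝ) :=
    { toFun := fun c k => if h : (k : ℕ) < l + 1 then c ⟨k, h⟩ else 0
      map_add' := by intro a b; ext k; simp only [Pi.add_apply]; split_ifs <;> simp
      map_smul' := by intro a b; ext k; simp only [Pi.smul_apply]; split_ifs <;> simp }
  let f : (Fin (l + 1) → ℝ) →ₗ[ℝ] (Fin l → ℝ) :=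
    (LinearMap.funLeft ℝ ℝ (Fin.castLE hn.le)).comp (T.mulVecLin.comp ι)
  have hker : LinearMap.ker f ≠ ⊥ := LinearMap.ker_ne_bot_of_finrank_lt (by simp)
  obtain ⟨c, hc, hc0⟩ := (Submodule.ne_bot_iff _).1 hker
  set u := ι c with hu
  have hulow : ∀ k : Fin m, l < (k : ℕ) → u k = 0 := by
    intro k hk
    simp [hu, ι]
    intro h; omega
  have hTlow : ∀ i : Fin n, (i : ℕ) < l → (T *ᵥ u) i = 0 := by
    intro i hi
    have := congrFun (LinearMap.mem_ker.1 hc) ⟨i, hi⟩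
    simpa [f] using this
  have hupos : 0 < u ⬝ᵥ u := by
    obtain ⟨k, hk⟩ := Function.ne_iff.1 hc0
    have hk' : u ⟨k, by omega⟩ ≠ 0 := by
      have hkl : (k : ℕ) ≤ l := by omega
      simpa [hu, ι, hkl] using hk
    refine Finset.sum_pos' (fun i _ => mul_self_nonneg _) ⟨⟨k, by omega⟩, mem_univ _, ?_⟩
    exact mul_self_pos.2 hk'
  have h1 : (T *ᵥ u) ⬝ᵥ (T *ᵥ u) = u ⬝ᵥ u := by
    rw [dotProduct_mulVec, vecMul_mulVec, ← mulVec_transpose, transpose_mul, transpose_transpose,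
      hT, one_mulVec]
  have h2 : (T *ᵥ u) ⬝ᵥ (diagonal x *ᵥ (T *ᵥ u)) = u ⬝ᵥ (diagonal y *ᵥ u) := by
    rw [← hTd, ← mulVec_mulVec, ← mulVec_mulVec, dotProduct_mulVec u, vecMul_transpose]
  have h3 : (T *ᵥ u) ⬝ᵥ (diagonal x *ᵥ (T *ᵥ u)) ≤ x ⟨l, hn⟩ * (u ⬝ᵥ u) := by
    rw [← h1, dotProduct, dotProduct, Finset.mul_sum]
    refine Finset.sum_le_sum fun i _ => ?_
    rw [mulVec_diagonal]
    by_cases hi : (i : ℕ) < l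
    · simp [hTlow i hi]
    · have : x i ≤ x ⟨l, hn⟩ := hx (by rw [Fin.le_def]; simp; omega)
      nlinarith [mul_self_nonneg ((T *ᵥ u) i)]
  have h4 : y ⟨l, hm⟩ * (u ⬝ᵥ u) ≤ u ⬝ᵥ (diagonal y *ᵥ u) := by
    rw [dotProduct, dotProduct, Finset.mul_sum]
    refine Finset.sum_le_sum fun i _ => ?_
    rw [mulVec_diagonal]
    by_cases hi : l < (i : ℕ)
    · simp [hulow i hi]
    · have : y ⟨l, hm⟩ ≤ y i := hy (by rw [Fin.le_def]; simp; omega)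
      nlinarith [mul_self_nonneg (u i)]
  rw [h2] at h3
  exact le_of_mul_le_mul_right (h4.trans h3) hupos

theorem charpoly_of_diagonalization {n : ℕ} (A U : Matrix (Fin n) (Fin n) ℝ) (x : Fin n → ℝ)
    (hU : Uᵀ * U = 1) (hA : A = U * diagonal x * Uᵀ) : A.charpoly = ∏ i, (X - C (x i)) := by
  rw [hA, charpoly_mul_comm, ← mul_assoc, hU, one_mul, charpoly_diagonal]

theorem antitone_eq_of_prod_eq {n : ℕ} (x y : Fin n → ℝ) (hx : Antitone x) (hy : Antitone y)
    (h : ∏ i, (X - C (x i)) = ∏ i, (X - C (y i))) : x = y := by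
  have hm : Finset.univ.val.map x = Finset.univ.val.map y := by
    have key : ∀ z : Fin n → ℝ, (∏ i, (X - C (z i))).roots = Finset.univ.val.map z := by
      intro z
      rw [← Polynomial.roots_multiset_prod_X_sub_C (Finset.univ.val.map z), Multiset.map_map]
      rfl
    rw [← key, ← key, h]
  have hperm : (List.ofFn x).Perm (List.ofFn y) := by
    rw [← Multiset.coe_eq_coe]
    simpa [List.ofFn_eq_map, Finset.univ, Fintype.elems] using hm
  have := hperm.eq_of_pairwise' (r := (· ≥ ·)) (List.sortedGE_ofFn_iff.2 hx).pairwise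
    (List.sortedGE_ofFn_iff.2 hy).pairwise
  exact List.ofFn_injective this

/-- One half of Cauchy interlacing: the `l`-th largest eigenvalue of a principal submatrix is at
most the `l`-th largest eigenvalue of the whole symmetric matrix. -/
theorem cauchy_interlacing {n m : ℕ} (A : Matrix (Fin n) (Fin n) ℝ) (hA : Aᵀ = A)
    (e : Fin m → Fin n) (he : Function.Injective e)
    (x : Fin n → ℝ) (hx : Antitone x) (hchar : A.charpoly = ∏ i, (X - C (x i))) :
    ∃ y : Fin m → ℝ, (A.submatrix e e).charpoly = ∏ i, (X - C (y i)) ∧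
      ∀ (l : ℕ) (hn : l < n) (hm : l < m), y ⟨l, hm⟩ ≤ x ⟨l, hn⟩ := by
  obtain ⟨U, x', hx', hU, hAU⟩ := exists_sorted_diagonalization A hA
  obtain ⟨V, y, hy, hV, hBV⟩ := exists_sorted_diagonalization (A.submatrix e e)
    (by rw [transpose_submatrix, hA])
  have hxx : x' = x := antitone_eq_of_prod_eq _ _ hx' hx
    (by rw [← hchar, charpoly_of_diagonalization A U x' hU hAU])
  subst hxx
  refine ⟨y, charpoly_of_diagonalization _ V y hV hBV, fun l hn hm => ?_⟩
  -- the coordinate embedding of `ℝ^m` in `ℝ^n`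
  set E : Matrix (Fin n) (Fin m) ℝ := (1 : Matrix (Fin n) (Fin n) ℝ).submatrix id e with hE
  have hEE : Eᵀ * E = 1 := by
    rw [hE, transpose_submatrix, ← submatrix_mul _ _ e id e Function.bijective_id,
      transpose_one, one_mul, submatrix_one _ he]
  have hEA : Eᵀ * A * E = A.submatrix e e := by
    have : A = A.submatrix id id := (submatrix_id_id A).symm
    rw [hE, transpose_submatrix, this, ← submatrix_mul _ _ e id id Function.bijective_id,
      ← submatrix_mul _ _ e id e Function.bijective_id]
    simp
  have hU' : U * Uᵀ = 1 := mul_eq_one_comm.1 hU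
  refine diag_compression_le (Uᵀ * E * V) x' y hx' hy ?_ ?_ l hn hm
  · calc (Uᵀ * E * V)ᵀ * (Uᵀ * E * V) = Vᵀ * (Eᵀ * (U * Uᵀ) * E) * V := by
          simp only [transpose_mul, transpose_transpose, Matrix.mul_assoc]
      _ = 1 := by rw [hU', Matrix.mul_one, hEE, Matrix.mul_one, hV]
  · calc (Uᵀ * E * V)ᵀ * diagonal x' * (Uᵀ * E * V)
          = Vᵀ * (Eᵀ * (U * diagonal x' * Uᵀ) * E) * V := by
          simp only [transpose_mul, transpose_transpose, Matrix.mul_assoc]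
      _ = (Vᵀ * V) * diagonal y * (Vᵀ * V) := by
          rw [← hAU, hEA, hBV]; simp only [Matrix.mul_assoc]
      _ = diagonal y := by rw [hV, Matrix.one_mul, Matrix.mul_one]

/-! ### Characteristic polynomials of tridiagonal blocks -/

/-- The characteristic polynomial, by its three-term recurrence, of the `m × m` tridiagonal block
occupying the indices `s, …, s + m - 1`. Here `a k` is the `k`-th diagonal entry and `b k` the
product of the `(k, k + 1)` and `(k + 1, k)` entries. -/
noncomputable def continuant (a b : ℕ → ℝ) : ℕ → ℕ → ℝ[X]
  | 0, _ => 1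
  | 1, s => X - C (a s)
  | m + 2, s => (X - C (a s)) * continuant a b (m + 1) (s + 1)
      - C (b s) * continuant a b m (s + 2)

theorem det_tridiagonal_succ_succ {R : Type*} [CommRing R] {m : ℕ}
    (M : Matrix (Fin (m + 2)) (Fin (m + 2)) R)
    (htri : ∀ i j : Fin (m + 2), ((i : ℕ) + 1 < j ∨ (j : ℕ) + 1 < i) → M i j = 0) :
    M.det = M 0 0 * (M.submatrix Fin.succ Fin.succ).det
      - M 0 1 * M 1 0 * (M.submatrix (fun i : Fin m => i.succ.succ) fun i => i.succ.succ).det := by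
  have hrow : ∀ j : Fin m, M 0 j.succ.succ = 0 := fun j => htri _ _ (Or.inl (by simp))
  have hcol : ∀ j : Fin m, M j.succ.succ 0 = 0 := fun j => htri _ _ (Or.inr (by simp))
  rw [det_succ_row_zero, Fin.sum_univ_succ, Fin.sum_univ_succ]
  have hz : ∑ i : Fin m, (-1) ^ ((i.succ.succ : Fin (m + 2)) : ℕ) * M 0 i.succ.succ *
      (M.submatrix Fin.succ i.succ.succ.succAbove).det = 0 :=
    Finset.sum_eq_zero fun j _ => by simp [hrow]
  rw [hz]
  have h1 : (M.submatrix Fin.succ (Fin.succ (0 : Fin (m + 1))).succAbove).det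
      = M 1 0 * (M.submatrix (fun i : Fin m => i.succ.succ) fun i => i.succ.succ).det := by
    rw [det_succ_column_zero, Fin.sum_univ_succ]
    rw [Finset.sum_eq_zero]
    · have hsub : (Fin.succAbove (1 : Fin (m + 2)) ∘ Fin.succ) = fun i : Fin m => i.succ.succ := by
        funext i
        exact Fin.succ_succAbove_succ 0 i
      simp [hsub]
      rfl
    · intro j _
      simp [hcol]
  rw [h1]
  simp
  ring

theorem det_eq_continuant (a b : ℕ → ℝ) : ∀ (m s : ℕ) (M : Matrix (Fin m) (Fin m) ℝ[X]),
    (∀ i j : Fin m, ((i : ℕ) + 1 < j ∨ (j : ℕ) + 1 < i) → M i j = 0) →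
    (∀ i, M i i = X - C (a (s + i))) →
    (∀ i j : Fin m, (j : ℕ) = i + 1 → M i j * M j i = C (b (s + i))) →
    M.det = continuant a b m s
  | 0, s, M, _, _, _ => by simp [continuant]
  | 1, s, M, _, h, _ => by simp [continuant, h]
  | m + 2, s, M, htri, hdiag, hoff => by
    rw [det_tridiagonal_succ_succ M htri, continuant,
      det_eq_continuant a b (m + 1) (s + 1) (M.submatrix Fin.succ Fin.succ),
      det_eq_continuant a b m (s + 2)
        (M.submatrix (fun i : Fin m => i.succ.succ) fun i => i.succ.succ),
      hdiag, hoff 0 1 (by simp)]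
    · simp
    · intro i j h
      exact htri _ _ (by simpa using h)
    · intro i
      simp only [submatrix_apply, hdiag, Fin.val_succ]; congr 3; omega
    · intro i j h
      simp only [submatrix_apply]
      rw [hoff _ _ (by simp; omega)]; simp only [Fin.val_succ]; congr 2; omega
    · intro i j h
      exact htri _ _ (by simpa using h)
    · intro i
      simp only [submatrix_apply, hdiag, Fin.val_succ]; congr 3; omega
    · intro i j h
      simp only [submatrix_apply]
      rw [hoff _ _ (by simp; omega)]; simp only [Fin.val_succ]; congr 2; omega

theorem charpoly_eq_continuant (a b : ℕ → ℝ) (m s : ℕ) (A : Matrix (Fin m) (Fin m) ℝ)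
    (htri : ∀ i j : Fin m, ((i : ℕ) + 1 < j ∨ (j : ℕ) + 1 < i) → A i j = 0)
    (hdiag : ∀ i, A i i = a (s + i))
    (hoff : ∀ i j : Fin m, (j : ℕ) = i + 1 → A i j * A j i = b (s + i)) :
    A.charpoly = continuant a b m s := by
  refine det_eq_continuant a b m s _ ?_ ?_ ?_
  · intro i j h
    have hij : i ≠ j := by rintro rfl; omega
    rw [charmatrix_apply_ne _ _ _ hij, htri i j h]; simp
  · intro i
    rw [charmatrix_apply_eq, hdiag]
  · intro i j h
    have hij : i ≠ j := by rintro rfl; omega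
    rw [charmatrix_apply_ne _ _ _ hij, charmatrix_apply_ne _ _ _ hij.symm, ← hoff i j h]
    simp

/-- The symmetric tridiagonal block on the indices `s, …, s + m - 1` with diagonal entries `a k`
and off-diagonal entries `√(b k)`; it has the same characteristic polynomial as any tridiagonal
block with the data `a`, `b`. -/
noncomputable def jacobi (a b : ℕ → ℝ) (m s : ℕ) : Matrix (Fin m) (Fin m) ℝ := fun i j =>
  if (i : ℕ) = j then a (s + i)
  else if (j : ℕ) = i + 1 then √(b (s + i))
  else if (i : ℕ) = j + 1 then √(b (s + j))
  else 0

theorem jacobi_transpose (a b : ℕ → ℝ) (m s : ℕ) : (jacobi a b m s)ᵀ = jacobi a b m s := by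
  ext i j
  simp only [transpose_apply, jacobi]
  split_ifs <;> first | rfl | omega | simp_all

theorem charpoly_jacobi (a b : ℕ → ℝ) (hb : ∀ k, 0 ≤ b k) (m s : ℕ) :
    (jacobi a b m s).charpoly = continuant a b m s := by
  refine charpoly_eq_continuant a b m s _ ?_ ?_ ?_
  · intro i j h
    simp only [jacobi]
    split_ifs <;> first | rfl | omega
  · intro i; simp [jacobi]
  · intro i j h
    have h1 : ¬ ((i : ℕ) = j) := by omega
    have h2 : ¬ ((j : ℕ) = i) := by omega
    have h3 : ¬ ((i : ℕ) = j + 1) := by omega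
    rw [jacobi, jacobi, if_neg h1, if_pos h, if_neg h2, if_neg h3, if_pos h,
      Real.mul_self_sqrt (hb _)]

/-! ### Newton expansions -/

/-- The Newton polynomial `∏_{l < k} (X - x l)`. -/
noncomputable def newton (x : ℕ → ℝ) (k : ℕ) : ℝ[X] := ∏ l ∈ range k, (X - C (x l))

theorem newton_succ (x : ℕ → ℝ) (k : ℕ) : newton x (k + 1) = newton x k * (X - C (x k)) :=
  prod_range_succ _ _

/-- If the nodes `x` are decreasing and dominate the roots `y` termwise, then `∏ (X - y l)` has
nonnegative coefficients in the Newton basis at `x`. Each new factor acts by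
`(X - y r) N_k = N_{k+1} + (x k - y r) N_k`, where `k ≤ r` gives `y r ≤ x r ≤ x k`. -/
theorem newton_expansion_nonneg (x y : ℕ → ℝ) (hx : Antitone x) (r : ℕ)
    (hyx : ∀ l < r, y l ≤ x l) :
    ∃ a : ℕ → ℝ, (∀ k, 0 ≤ a k) ∧ (∀ k, r < k → a k = 0) ∧
      newton y r = ∑ k ∈ range (r + 1), C (a k) * newton x k := by
  induction r with
  | zero => exact ⟨fun k => if k = 0 then 1 else 0, fun k => by positivity,
      fun k hk => by simp; omega, by simp [newton]⟩
  | succ r ih =>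
    obtain ⟨a, ha, har, hsum⟩ := ih fun l hl => hyx l (by omega)
    refine ⟨fun k => (if k = 0 then 0 else a (k - 1)) + (x k - y r) * a k, ?_, ?_, ?_⟩
    · intro k
      have h1 : 0 ≤ if k = 0 then 0 else a (k - 1) := by split_ifs <;> simp [ha]
      have h2 : 0 ≤ (x k - y r) * a k := by
        by_cases hk : r < k
        · simp [har k hk]
        · exact mul_nonneg (by linarith [hx (not_lt.1 hk), hyx r (by omega)]) (ha k)
      positivity
    · intro k hk
      have : k ≠ 0 := by omega
      simp [this, har k (by omega), har (k - 1) (by omega)]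
    · have h1 : ∀ k, C (a k) * newton x k * (X - C (y r))
          = C (a k) * newton x (k + 1) + C ((x k - y r) * a k) * newton x k := by
        intro k
        rw [newton_succ]; simp only [C_mul, C_sub]; ring
      rw [newton_succ, hsum, Finset.sum_mul, Finset.sum_congr rfl fun k _ => h1 k,
        Finset.sum_add_distrib]
      simp only [C_add, add_mul, Finset.sum_add_distrib]
      congr 1
      · rw [Finset.sum_range_succ' _ (r + 1)]; simp
      · rw [Finset.sum_range_succ _ (r + 1)]; simp [har (r + 1) (by omega)]

theorem newton_coeff_unique (x : ℕ → ℝ) (n : ℕ) (a b : ℕ → ℝ)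
    (h : ∑ k ∈ range n, C (a k) * newton x k = ∑ k ∈ range n, C (b k) * newton x k) :
    ∀ k < n, a k = b k := by
  let S : Polynomial.Sequence ℝ := ⟨newton x, fun k => by
    rw [newton, degree_prod]; simp⟩
  have hli := S.linearIndependent
  rw [linearIndependent_iff'] at hli
  intro k hk
  have := hli (range n) (fun k => a k - b k) (by
    simp only [sub_smul, Finset.sum_sub_distrib, smul_eq_C_mul]
    exact sub_eq_zero.2 h) k (by simpa using hk)
  linarith

/-- If the full tridiagonal matrix has eigenvalues `x 0 ≥ x 1 ≥ ⋯`, the characteristic polynomial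
of each trailing block has nonnegative coefficients in the Newton basis at `x`. -/
theorem continuant_newton_nonneg (a b : ℕ → ℝ) (hb : ∀ k, 0 ≤ b k) (n : ℕ) (x : ℕ → ℝ)
    (hx : Antitone x) (hn : continuant a b n 0 = newton x n) (m s : ℕ) (hms : s + m = n) :
    ∃ c : ℕ → ℝ, (∀ k, 0 ≤ c k) ∧
      continuant a b m s = ∑ k ∈ range n.succ, C (c k) * newton x k := by
  have hinj : Function.Injective fun i : Fin m => (⟨s + i, by omega⟩ : Fin n) := by
    intro i j h
    simpa [Fin.ext_iff] using h
  obtain ⟨y, hy, hyx⟩ := cauchy_interlacing (jacobi a b n 0) (jacobi_transpose a b n 0)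
    (fun i : Fin m => (⟨s + i, by omega⟩ : Fin n)) hinj (fun i => x i)
    (fun i j h => hx h) (by
      rw [charpoly_jacobi a b hb, hn, newton, Finset.prod_range])
  have hsub : (jacobi a b n 0).submatrix (fun i : Fin m => (⟨s + i, by omega⟩ : Fin n))
      (fun i : Fin m => (⟨s + i, by omega⟩ : Fin n)) = jacobi a b m s := by
    ext i j
    simp only [submatrix_apply, jacobi, zero_add, add_assoc, Nat.add_left_cancel_iff]
  rw [hsub, charpoly_jacobi a b hb] at hy
  obtain ⟨c, hc, hcm, hsum⟩ := newton_expansion_nonneg x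
    (fun l => if h : l < m then y ⟨l, h⟩ else 0) hx m (by
      intro l hl
      simpa [hl] using hyx l (by omega) hl)
  refine ⟨c, hc, ?_⟩
  have : continuant a b m s = newton (fun l => if h : l < m then y ⟨l, h⟩ else 0) m := by
    rw [hy, newton, Finset.prod_range]
    simp
  rw [this, hsum]
  refine Finset.sum_subset (Finset.range_mono (by omega)) fun k _ hk => ?_
  rw [hcm k (by simpa using hk)]; simp

/-- A row `W` satisfying the columns `1, …, d` of `W (X - P) = 0` for a tridiagonal `P`, normalized
at `d`, is the row of trailing characteristic polynomials times products of `up`. -/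
theorem eq_continuant_of_recurrence (d : ℕ) (a up dn : ℕ → ℝ) (W : ℕ → ℝ[X])
    (hup : ∀ k < d, up k ≠ 0)
    (hcol : ∀ k < d, W k * C (up k) + W (k + 1) * C (a (k + 1)) + W (k + 2) * C (dn (k + 1))
      = X * W (k + 1))
    (hout : W (d + 1) = 0) (hlast : W d = C (∏ l ∈ range d, up l)) :
    ∀ m s : ℕ, s + m = d →
      W s = C (∏ l ∈ range s, up l) * continuant a (fun k => up k * dn k) m (s + 1)
  | 0, s, h => by
    obtain rfl : s = d := by omega
    simp [continuant, hlast]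
  | 1, s, h => by
    obtain rfl : d = s + 1 := by omega
    have h1 := hcol s (by omega)
    have hC : C (up s) ≠ 0 := by simpa using hup s (by omega)
    apply mul_right_cancel₀ hC
    rw [hout, hlast, prod_range_succ] at h1
    simp only [continuant, C_mul] at h1 ⊢
    linear_combination h1
  | m + 2, s, h => by
    have h1 := hcol s (by omega)
    have hC : C (up s) ≠ 0 := by simpa using hup s (by omega)
    apply mul_right_cancel₀ hC
    rw [eq_continuant_of_recurrence d a up dn W hup hcol hout hlast (m + 1) (s + 1) (by omega),
      eq_continuant_of_recurrence d a up dn W hup hcol hout hlast m (s + 2) (by omega),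
      prod_range_succ _ (s + 1), prod_range_succ] at h1
    simp only [continuant, C_mul] at h1 ⊢
    linear_combination h1

theorem sum_range_three {R : Type*} [AddCommMonoid R] (d k : ℕ) (hk : k < d) (F : ℕ → R)
    (hout : ∀ i, d < i → F i = 0) (htri : ∀ i, (i + 1 < k + 1 ∨ k + 1 + 1 < i) → F i = 0) :
    ∑ i ∈ range (d + 1), F i = F k + F (k + 1) + F (k + 2) := by
  have h1 : ∑ i ∈ range (d + 1), F i = ∑ i ∈ range (d + 2), F i := by
    rw [Finset.sum_range_succ _ (d + 1), hout (d + 1) (by omega), add_zero]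
  have h2 : ∑ i ∈ ({k, k + 1, k + 2} : Finset ℕ), F i = ∑ i ∈ range (d + 2), F i := by
    refine Finset.sum_subset ?_ ?_
    · intro i hi
      simp at hi ⊢
      omega
    · intro i _ hi
      simp at hi
      exact htri i (by omega)
  rw [h1, ← h2, Finset.sum_insert (by simp), Finset.sum_insert (by simp), Finset.sum_singleton,
    add_assoc]

/-! ### Spectral polynomials and their positivity -/

/-- The spectral polynomial `(P - θ 0) (P - θ 1) ⋯ (P - θ (i - 1))`. -/
noncomputable def spectralProd {n : ℕ} (P : Matrix (Fin n) (Fin n) ℝ) (θ : ℕ → ℝ) :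
    ℕ → Matrix (Fin n) (Fin n) ℝ
  | 0 => 1
  | i + 1 => spectralProd P θ i * (P - θ i • (1 : Matrix (Fin n) (Fin n) ℝ))

theorem spectralProd_mul {n : ℕ} (P : Matrix (Fin n) (Fin n) ℝ) (θ : ℕ → ℝ) (i : ℕ) :
    spectralProd P θ i * P = spectralProd P θ (i + 1) + θ i • spectralProd P θ i := by
  simp [spectralProd, Matrix.mul_sub]

/-- Cayley–Hamilton, the eigenvalues being used in increasing order. -/
theorem spectralProd_eq_zero {d : ℕ} (P : Matrix (Fin (d + 1)) (Fin (d + 1)) ℝ) (x : ℕ → ℝ)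
    (hchar : P.charpoly = newton x (d + 1)) :
    spectralProd P (fun i => x (d - i)) (d + 1) = 0 := by
  have key : ∀ i ≤ d + 1, spectralProd P (fun i => x (d - i)) i * aeval P (newton x (d + 1 - i))
      = aeval P (newton x (d + 1)) := by
    intro i
    induction i with
    | zero => simp [spectralProd]
    | succ i ih =>
      intro hi
      rw [← ih (by omega), show d + 1 - i = (d - i) + 1 by omega, newton_succ, mul_comm (newton _ _),
        map_mul, spectralProd, Matrix.mul_assoc, show d + 1 - (i + 1) = d - i by omega]
      simp [Algebra.algebraMap_eq_smul_one]
  have := key (d + 1) le_rfl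
  rw [← hchar, Matrix.aeval_self_charpoly] at this
  simpa [newton] using this

theorem spectralProd_support {d : ℕ} (P : Matrix (Fin (d + 1)) (Fin (d + 1)) ℝ)
    (htri : ∀ i j : Fin (d + 1), ((i : ℕ) + 1 < (j : ℕ) ∨ (j : ℕ) + 1 < (i : ℕ)) → P i j = 0)
    (θ : ℕ → ℝ) (i : ℕ) : ∀ j : Fin (d + 1), i < j → spectralProd P θ i 0 j = 0 := by
  induction i with
  | zero =>
    intro j hj
    have : (0 : Fin (d + 1)) ≠ j := by rintro rfl; simp at hj
    simp [spectralProd, this]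
  | succ i ih =>
    intro j hj
    have h := congrFun (congrFun (spectralProd_mul P θ i) 0) j
    rw [Matrix.add_apply, Matrix.smul_apply, ih j (by omega), Matrix.mul_apply,
      Finset.sum_eq_zero] at h
    · simpa using h.symm
    · intro k _
      by_cases hk : i < k
      · simp [ih k hk]
      · simp [htri k j (by omega)]

theorem spectralProd_diag {d : ℕ} (P : Matrix (Fin (d + 1)) (Fin (d + 1)) ℝ)
    (htri : ∀ i j : Fin (d + 1), ((i : ℕ) + 1 < (j : ℕ) ∨ (j : ℕ) + 1 < (i : ℕ)) → P i j = 0)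
    (θ : ℕ → ℝ) (up : ℕ → ℝ) (hup : ∀ i j : Fin (d + 1), (j : ℕ) = i + 1 → P i j = up i)
    (i : ℕ) : ∀ hi : i < d + 1, spectralProd P θ i 0 ⟨i, hi⟩ = ∏ l ∈ range i, up l := by
  induction i with
  | zero => intro _; simp only [range_zero, prod_empty]; exact Matrix.one_apply_eq _
  | succ i ih =>
    intro hi
    have h := congrFun (congrFun (spectralProd_mul P θ i) 0) ⟨i + 1, hi⟩
    rw [Matrix.add_apply, Matrix.smul_apply, spectralProd_support P htri θ i ⟨i + 1, hi⟩ (by simp),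
      Matrix.mul_apply, Finset.sum_eq_single ⟨i, by omega⟩, ih, hup _ _ (by simp)] at h
    · rw [prod_range_succ]
      simpa using h.symm
    · intro k _ hk
      by_cases hki : i < k
      · simp [spectralProd_support P htri θ i k hki]
      · have : (k : ℕ) ≠ i := fun h => hk (Fin.ext h)
        simp [htri k ⟨i + 1, hi⟩ (by simp; omega)]
    · simp

/-- With `v i` the zeroth row of the `i`-th spectral polynomial, the polynomial row
`w = ∑ k, v (d - k) N_k` satisfies `w P = X w` in every column but the zeroth. The sum telescopes
because `v i P = v (i + 1) + x (d - i) v i` and `X N_k = N_{k+1} + x k N_k`; the boundary terms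
are `v (d + 1) = 0` and `v 0`, which is the zeroth unit vector. -/
theorem newton_sum_mul {d : ℕ} (P : Matrix (Fin (d + 1)) (Fin (d + 1)) ℝ) (x : ℕ → ℝ)
    (hchar : P.charpoly = newton x (d + 1)) (j : Fin (d + 1)) (hj : j ≠ 0) :
    ∑ i, (∑ k ∈ range (d + 1), C (spectralProd P (fun i => x (d - i)) (d - k) 0 i) * newton x k)
        * C (P i j)
      = X * ∑ k ∈ range (d + 1), C (spectralProd P (fun i => x (d - i)) (d - k) 0 j)
        * newton x k := by
  set V := spectralProd P (fun i => x (d - i)) with hV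
  set f : ℕ → ℝ[X] := fun k => C (V (d + 1 - k) 0 j) * newton x k with hf
  have htel := Finset.sum_range_sub' f (d + 1)
  have hf0 : f 0 = 0 := by simp [hf, hV, spectralProd_eq_zero P x hchar]
  have hfd : f (d + 1) = 0 := by simp [hf, hV, spectralProd, hj.symm]
  rw [hf0, hfd, sub_zero] at htel
  have hk : ∀ k ∈ range (d + 1), ∑ i, C (V (d - k) 0 i) * newton x k * C (P i j)
      = X * (C (V (d - k) 0 j) * newton x k) + (f k - f (k + 1)) := by
    intro k hk
    have hkd : k ≤ d := by simp at hk; omega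
    have h := congrFun (congrFun (spectralProd_mul P (fun i => x (d - i)) (d - k)) 0) j
    rw [← hV, Matrix.add_apply, Matrix.smul_apply, Matrix.mul_apply, Nat.sub_sub_self hkd] at h
    have h' := congrArg (C : ℝ → ℝ[X]) h
    simp only [map_sum, C_mul, C_add, smul_eq_mul] at h'
    calc ∑ i, C (V (d - k) 0 i) * newton x k * C (P i j)
        = (∑ i, C (V (d - k) 0 i) * C (P i j)) * newton x k := by
          rw [Finset.sum_mul]; exact Finset.sum_congr rfl fun i _ => by ring
      _ = _ := by
          rw [h']
          simp only [hf, newton_succ, show d + 1 - k = d - k + 1 by omega,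
            show d + 1 - (k + 1) = d - k by omega]
          ring
  simp only [Finset.sum_mul]
  rw [Finset.sum_comm, Finset.sum_congr rfl hk, Finset.sum_add_distrib, htel, add_zero,
    Finset.mul_sum]

/-- The Micchelli–Willoughby positivity: the zeroth rows of the spectral polynomials of a
nonnegative tridiagonal matrix, with the eigenvalues taken in increasing order, are nonnegative. -/
theorem spectralProd_nonneg {d : ℕ} (P : Matrix (Fin (d + 1)) (Fin (d + 1)) ℝ)
    (hnonneg : ∀ i j, 0 ≤ P i j)
    (htri : ∀ i j : Fin (d + 1), ((i : ℕ) + 1 < (j : ℕ) ∨ (j : ℕ) + 1 < (i : ℕ)) → P i j = 0)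
    (hsuper : ∀ i j : Fin (d + 1), (j : ℕ) = (i : ℕ) + 1 → 0 < P i j)
    (x : ℕ → ℝ) (hx : Antitone x) (hchar : P.charpoly = newton x (d + 1))
    (i : ℕ) (hi : i ≤ d) (j : Fin (d + 1)) :
    0 ≤ spectralProd P (fun i => x (d - i)) i 0 j := by
  set V := spectralProd P (fun i => x (d - i)) with hV
  -- extension of `P` by zero to all pairs of naturals
  set p : ℕ → ℕ → ℝ := fun i j =>
    if h : i < d + 1 ∧ j < d + 1 then P ⟨i, h.1⟩ ⟨j, h.2⟩ else 0 with hp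
  have hpP : ∀ i j : Fin (d + 1), p i j = P i j := fun i j => dif_pos ⟨i.2, j.2⟩
  have hp0 : ∀ i j, 0 ≤ p i j := by
    intro i j; simp only [hp]; split_ifs <;> simp [hnonneg]
  have hptri : ∀ i j, (i + 1 < j ∨ j + 1 < i) → p i j = 0 := by
    intro i j h
    simp only [hp]; split_ifs with h'
    · exact htri _ _ (by simpa using h)
    · rfl
  have hpup : ∀ k < d, 0 < p k (k + 1) := by
    intro k hk
    have h' : k < d + 1 ∧ k + 1 < d + 1 := by omega
    simp only [hp, h', dif_pos, and_self]
    exact hsuper _ _ (by simp)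
  set W : ℕ → ℝ[X] := fun s => if h : s < d + 1 then
    ∑ k ∈ range (d + 1), C (V (d - k) 0 ⟨s, h⟩) * newton x k else 0 with hW
  have hcont := eq_continuant_of_recurrence d (fun k => p k k) (fun k => p k (k + 1))
    (fun k => p (k + 1) k) W (fun k hk => (hpup k hk).ne') (by
      intro k hk
      have h1 := newton_sum_mul P x hchar ⟨k + 1, by omega⟩ (by simp [Fin.ext_iff])
      have h2 := sum_range_three d k hk (fun i => W i * C (p i (k + 1)))
        (fun i hi => by simp only [hW]; rw [dif_neg (by omega), zero_mul])
        (fun i hi => by simp [hptri i (k + 1) hi])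
      rw [← h2, Finset.sum_range]
      simp only [hW, Fin.is_lt, dif_pos, show k + 1 < d + 1 by omega, ← hV] at h1 ⊢
      rw [← h1]
      refine Finset.sum_congr rfl fun i _ => ?_
      rw [← hpP i ⟨k + 1, by omega⟩])
    (by simp [hW]) (by
      have hd : d < d + 1 := by omega
      simp only [hW, hd, dif_pos]
      rw [Finset.sum_eq_single 0, Nat.sub_zero, hV,
        spectralProd_diag P htri _ (fun k => p k (k + 1))]
      · simp [newton]
      · intro i j h
        rw [← hpP, h]
      · intro k hk hk0
        have hk' : k < d + 1 := by simpa using hk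
        rw [hV, spectralProd_support P htri _ _ _ (by simp; omega)]
        simp
      · simp) (d - j) j (by omega)
  have hn : continuant (fun k => p k k) (fun k => p k (k + 1) * p (k + 1) k) (d + 1) 0
      = newton x (d + 1) := by
    rw [← hchar]
    refine (charpoly_eq_continuant _ _ _ _ P htri ?_ ?_).symm
    · intro i; simp [← hpP]
    · intro i j h; simp [← hpP, h]
  obtain ⟨c, hc, hsum⟩ := continuant_newton_nonneg _ _
    (fun k => mul_nonneg (hp0 k (k + 1)) (hp0 (k + 1) k)) (d + 1) x hx hn (d - j) (j + 1) (by omega)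
  rw [hsum] at hcont
  simp only [hW, Fin.is_lt, dif_pos, Finset.mul_sum, ← mul_assoc, ← C_mul] at hcont
  have hcoef := newton_coeff_unique x (d + 2)
    (fun k => if k < d + 1 then V (d - k) 0 j else 0)
    (fun k => (∏ l ∈ range j, p l (l + 1)) * c k) (by
      rw [Finset.sum_range_succ, if_neg (by omega), C_0, zero_mul, add_zero]
      rw [← hcont]
      refine Finset.sum_congr rfl fun k hk => ?_
      rw [if_pos (by simpa using hk)]) (d - i) (by omega)
  rw [if_pos (by omega), Nat.sub_sub_self hi] at hcoef
  rw [hcoef]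
  exact mul_nonneg (Finset.prod_nonneg fun l _ => hp0 _ _) (hc _)

/-! ### The intertwining link -/

theorem spectralProd_rowsum {n : ℕ} (P : Matrix (Fin n) (Fin n) ℝ)
    (hrowsum : ∀ i, ∑ j, P i j = 1) (θ : ℕ → ℝ) (i : ℕ) (r : Fin n) :
    ∑ j, spectralProd P θ i r j = ∏ l ∈ range i, (1 - θ l) := by
  have hP : P *ᵥ 1 = 1 := by
    ext i; simpa [mulVec, dotProduct] using hrowsum i
  have key : spectralProd P θ i *ᵥ 1 = (∏ l ∈ range i, (1 - θ l)) • (1 : Fin n → ℝ) := by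
    induction i with
    | zero => simp [spectralProd]
    | succ i ih =>
      have h1 : (P - θ i • (1 : Matrix (Fin n) (Fin n) ℝ)) *ᵥ 1 = (1 - θ i) • (1 : Fin n → ℝ) := by
        rw [sub_mulVec, hP, smul_mulVec, one_mulVec, sub_smul, one_smul]
      rw [spectralProd, ← mulVec_mulVec, h1, mulVec_smul, ih, smul_smul, prod_range_succ, mul_comm]
  simpa [mulVec, dotProduct] using congrFun key r

/-- A lower triangular stochastic link `L` intertwining `P` with a nonnegative `Q` makes the zeroth
row of `Q ^ t` dominate that of `P ^ t`: the latter is the mixture, with weights `Q ^ t 0 i`, of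
the rows `L i`, each carried by `{0, …, i}`. -/
theorem tail_le_of_link {n : ℕ} (P Q L : Matrix (Fin (n + 1)) (Fin (n + 1)) ℝ)
    (hQ : ∀ i j, 0 ≤ Q i j) (hL : ∀ i j, 0 ≤ L i j) (hLsum : ∀ i, ∑ j, L i j = 1)
    (hLtri : ∀ i j, i < j → L i j = 0) (hinter : L * P = Q * L) (t : ℕ) (m : Fin (n + 1)) :
    ∑ j ∈ Finset.Ici m, (P ^ t) 0 j ≤ ∑ j ∈ Finset.Ici m, (Q ^ t) 0 j := by
  have hpow : L * P ^ t = Q ^ t * L := by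
    induction t with
    | zero => simp
    | succ t ih => rw [pow_succ, ← Matrix.mul_assoc, ih, Matrix.mul_assoc, hinter,
        ← Matrix.mul_assoc, ← pow_succ]
  have hQt : ∀ i j, 0 ≤ (Q ^ t) i j := by
    clear hpow
    induction t with
    | zero => intro i j; simp only [pow_zero, Matrix.one_apply]; split_ifs <;> simp
    | succ t ih =>
      intro i j
      rw [pow_succ, Matrix.mul_apply]
      exact Finset.sum_nonneg fun k _ => mul_nonneg (ih i k) (hQ k j)
  have hL0 : ∀ j, L 0 j = if j = 0 then 1 else 0 := by
    have h0 : ∀ j, j ≠ 0 → L 0 j = 0 := fun j hj => hLtri 0 j (Fin.pos_of_ne_zero hj)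
    intro j
    split_ifs with h
    · subst h
      rw [← hLsum 0, Finset.sum_eq_single 0 (fun j _ hj => h0 j hj) (by simp)]
    · exact h0 j h
  have hrow : ∀ j, (P ^ t) 0 j = ∑ i, (Q ^ t) 0 i * L i j := by
    intro j
    rw [← Matrix.mul_apply, ← hpow, Matrix.mul_apply]
    simp [hL0]
  simp only [hrow]
  rw [Finset.sum_comm]
  simp only [← Finset.mul_sum]
  rw [← Finset.sum_subset (Finset.subset_univ (Finset.Ici m))]
  · refine Finset.sum_le_sum fun i _ => ?_
    refine mul_le_of_le_one_right (hQt 0 i) ?_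
    rw [← hLsum i]
    exact Finset.sum_le_sum_of_subset_of_nonneg (Finset.subset_univ _) fun j _ _ => hL i j
  · intro i _ hi
    rw [Finset.sum_eq_zero, mul_zero]
    intro j hj
    exact hLtri i j (lt_of_lt_of_le (by simpa using hi) (by simpa using hj))

/-- For an absorbing birth-and-death kernel `P` with nonnegative
eigenvalues, the row `P̂^t(0,·)` of the pure-birth spectral kernel stochastically dominates
`P^t(0,·)` at every epoch `t`: `Σ_{j≥m} P^t(0,j) ≤ Σ_{j≥m} P̂^t(0,j)` for all `t, m`. -/
theorem stmt13 (d : ℕ) (hd : 1 ≤ d)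
    (P : Matrix (Fin (d + 1)) (Fin (d + 1)) ℝ)
    (hnonneg : ∀ i j, 0 ≤ P i j)
    (hrowsum : ∀ i, ∑ j, P i j = 1)
    (htridiag : ∀ i j : Fin (d + 1), ((i : ℕ) + 1 < (j : ℕ) ∨ (j : ℕ) + 1 < (i : ℕ)) →
        P i j = 0)
    (hsuper : ∀ i j : Fin (d + 1), (j : ℕ) = (i : ℕ) + 1 → 0 < P i j)
    (habs : ∀ j, P (Fin.last d) j = if j = Fin.last d then 1 else 0)
    (θ : Fin (d + 1) → ℝ)
    (hmono : Monotone θ)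
    (hθ0 : ∀ j : Fin d, 0 ≤ θ j.castSucc)
    (hθ1 : ∀ j : Fin d, θ j.castSucc < 1)
    (hθlast : θ (Fin.last d) = 1)
    (hcharpoly : P.charpoly = (X - 1) * ∏ j : Fin d, (X - C (θ j.castSucc)))
    (Phat : Matrix (Fin (d + 1)) (Fin (d + 1)) ℝ)
    (hPhat : ∀ i j, Phat i j =
        if j = i then θ i else if (j : ℕ) = (i : ℕ) + 1 then 1 - θ i else 0) :
    ∀ t : ℕ, ∀ m : Fin (d + 1),
      ∑ j ∈ Finset.Ici m, (P ^ t) 0 j ≤ ∑ j ∈ Finset.Ici m, (Phat ^ t) 0 j := by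
  -- the eigenvalues in decreasing order; truncated subtraction keeps `x` antitone beyond `d`
  set x : ℕ → ℝ := fun k => θ ⟨d - k, by omega⟩ with hxdef
  have hx : Antitone x := fun k l h => hmono (by rw [Fin.le_def]; simp; omega)
  have hxθ : ∀ i : Fin (d + 1), x (d - i) = θ i := by
    intro i
    simp only [hxdef]; congr 1; ext; simp; omega
  have hchar : P.charpoly = newton x (d + 1) := by
    rw [hcharpoly, newton, Finset.prod_range,
      ← Equiv.prod_comp Fin.revPerm (fun i : Fin (d + 1) => X - C (x i)), Fin.prod_univ_castSucc]
    have h1 : ∀ i : Fin (d + 1), x (Fin.revPerm i : Fin (d + 1)) = θ i := by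
      intro i
      rw [← hxθ i]; simp [Fin.val_rev]
    simp only [h1, hθlast]
    rw [mul_comm]; simp
  have hθle : ∀ i, θ i ≤ 1 := fun i => hθlast ▸ hmono (Fin.le_last i)
  have hθnn : ∀ i, 0 ≤ θ i := by
    intro i
    induction i using Fin.lastCases with
    | last => simp [hθlast]
    | cast i => exact hθ0 i
  set V := spectralProd P (fun i => x (d - i)) with hV
  set D : ℕ → ℝ := fun i => ∏ l ∈ range i, (1 - x (d - l)) with hD
  have hDpos : ∀ i ≤ d, 0 < D i := by
    intro i hi
    refine Finset.prod_pos fun l hl => ?_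
    have hl' : l < d := by simp at hl; omega
    have h1 := hxθ (Fin.castSucc ⟨l, hl'⟩)
    have h2 := hθ1 ⟨l, hl'⟩
    rw [← h1] at h2
    simpa using h2
  -- the link: zeroth rows of the spectral polynomials, normalized to total mass one
  set L : Matrix (Fin (d + 1)) (Fin (d + 1)) ℝ := Matrix.of fun i j => V i 0 j / D i with hL
  have hLij : ∀ i j, L i j = V i 0 j / D i := fun i j => rfl
  refine tail_le_of_link P Phat L ?_ ?_ ?_ ?_ ?_
  · intro i j
    rw [hPhat]
    split_ifs
    · exact hθnn i
    · linarith [hθle i]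
    · exact le_rfl
  · intro i j
    exact div_nonneg (spectralProd_nonneg P hnonneg htridiag hsuper x hx hchar i (by omega) j)
      (hDpos i (by omega)).le
  · intro i
    simp only [hLij]
    rw [← Finset.sum_div, hV, spectralProd_rowsum P hrowsum, div_self (hDpos i (by omega)).ne']
  · intro i j hij
    rw [hLij, hV, spectralProd_support P htridiag _ _ j hij, zero_div]
  · ext i j
    have h := congrFun (congrFun (spectralProd_mul P (fun i => x (d - i)) i) 0) j
    rw [← hV, Matrix.add_apply, Matrix.smul_apply, Matrix.mul_apply, hxθ] at h
    have hl : (L * P) i j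
        = (V (i + 1) 0 j + θ i * V i 0 j) / D i := by
      rw [Matrix.mul_apply, ← smul_eq_mul (θ i), ← h, Finset.sum_div]
      exact Finset.sum_congr rfl fun k _ => by rw [hLij]; ring
    rw [hl, Matrix.mul_apply]
    induction i using Fin.lastCases with
    | last =>
      rw [Finset.sum_eq_single (Fin.last d)]
      · simp [hPhat, hLij, hV, spectralProd_eq_zero P x hchar, hθlast]
      · intro k _ hk
        have : (k : ℕ) ≠ d + 1 := by omega
        simp [hPhat, hk, this]
      · simp
    | cast i =>
      rw [Finset.sum_eq_add i.castSucc i.succ (Fin.castSucc_lt_succ).ne]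
      · have hne : i.succ ≠ i.castSucc := (Fin.castSucc_lt_succ).ne'
        have hDs : D (i + 1) = D i * (1 - θ i.castSucc) := by
          rw [← hxθ i.castSucc, hD]; simp [prod_range_succ]
        have h1 : D i ≠ 0 := (hDpos i (by omega)).ne'
        have h2 : (1 - θ i.castSucc) ≠ 0 := by linarith [hθ1 i]
        simp only [hPhat, hLij, if_true, hne, if_false, Fin.val_succ, Fin.val_castSucc, hDs]
        field_simp
        ring
      · intro k _ hk
        have h1 : k ≠ i.castSucc := hk.1
        have h2 : (k : ℕ) ≠ i + 1 := fun h => hk.2 (Fin.ext (by simpa using h))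
        simp [hPhat, h1, h2]
      · simp
      · simp
end

section
/- If the time-reversal P̃ is stochastically monotone, then for every integer t ≥ 0 the ratio x ↦ P^t(0,x)/π(x) is minimized over x ∈ {0,…,d} at x = d; that is, P^t(0,x)/π(x) ≥ P^t(0,d)/π(d) for every x and every t ≥ 0. Consequently the separation from stationarity of the chain started at 0, s(t) := max_{x} (1 − P^t(0,x)/π(x)), equals 1 − P^t(0,d)/π(d). -/
/-!
Write `f t x = P^t(0,x) / π x`. Then `f (t+1) x = ∑ y, P̃(x,y) * f t y`, so the reversal acts on
these densities. A stochastically monotone kernel with constant row sums preserves antitone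
functions (`sum_mul_le_of_tails_nonneg`, a form of Abel summation, applied to differences of rows),
and `f 0` is antitone since it is a nonnegative multiple of the indicator of the least state. Hence
every `f t` is antitone, and is in particular smallest at `d`.
-/

open Matrix Finset

/-- Abel summation inequality: pairing a sequence with nonnegative tail sums against an antitone
function is at most its total mass times the largest value of the function. The tail sums are
written with an indicator so that they shift well under `Fin.succ`. -/
lemma sum_mul_le_of_tails_nonneg : ∀ (n : ℕ) (c f : Fin (n + 1) → ℝ), Antitone f →
    (∀ m, 0 ≤ ∑ y, if m ≤ y then c y else 0) → ∑ y, c y * f y ≤ f 0 * ∑ y, c y := by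
  intro n
  induction n with
  | zero => intro c f _ _; simp [mul_comm]
  | succ n ih =>
    intro c f hf hc
    have htail : ∀ m : Fin (n + 1), 0 ≤ ∑ y : Fin (n + 1), if m ≤ y then c y.succ else 0 := by
      intro m
      have h := hc m.succ
      rw [Fin.sum_univ_succ] at h
      simpa [Fin.succ_le_succ_iff] using h
    have h1 := ih (fun y => c y.succ) (fun y => f y.succ)
      (fun a b hab => hf (Fin.succ_le_succ_iff.2 hab)) htail
    have h2 : 0 ≤ ∑ y : Fin (n + 1), c y.succ := by simpa using htail 0
    have h3 : f (Fin.succ 0) ≤ f 0 := hf (Fin.zero_le _)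
    rw [Fin.sum_univ_succ, Fin.sum_univ_succ (f := c)]
    nlinarith [mul_le_mul_of_nonneg_right h3 h2]

/-- If the time-reversal `P̃(x,y) = π(y)P(y,x)/π(x)` of `P` is
stochastically monotone, then for every `t` the ratio `x ↦ P^t(0,x)/π(x)` is minimized at
`x = d`, and consequently the separation from stationarity
`s(t) = max_x (1 - P^t(0,x)/π(x))` equals `1 - P^t(0,d)/π(d)`. -/
theorem stmt15 (d : ℕ) (hd : 1 ≤ d)
    (P : Matrix (Fin (d + 1)) (Fin (d + 1)) ℝ)
    (hnonneg : ∀ i j, 0 ≤ P i j)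
    (hrowsum : ∀ i, ∑ j, P i j = 1)
    (π : Fin (d + 1) → ℝ)
    (hπpos : ∀ x, 0 < π x)
    (hπsum : ∑ x, π x = 1)
    (hπstat : ∀ y, ∑ x, π x * P x y = π y)
    (Prev : Matrix (Fin (d + 1)) (Fin (d + 1)) ℝ)
    (hPrev : ∀ x y, Prev x y = π y * P y x / π x)
    (hmono : ∀ x x' : Fin (d + 1), x ≤ x' → ∀ m : Fin (d + 1),
        ∑ y ∈ Finset.Ici m, Prev x y ≤ ∑ y ∈ Finset.Ici m, Prev x' y) :
    (∀ t : ℕ, ∀ x : Fin (d + 1),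
        (P ^ t) 0 (Fin.last d) / π (Fin.last d) ≤ (P ^ t) 0 x / π x)
    ∧ ∀ t : ℕ,
        (⨆ x : Fin (d + 1), (1 - (P ^ t) 0 x / π x))
          = 1 - (P ^ t) 0 (Fin.last d) / π (Fin.last d) := by
  have hrow : ∀ x, ∑ y, Prev x y = 1 := by
    intro x
    simp only [hPrev]
    rw [← Finset.sum_div, hπstat, div_self (hπpos x).ne']
  have hanti : ∀ t : ℕ, Antitone fun x => (P ^ t) 0 x / π x := by
    intro t
    induction t with
    | zero =>
      intro x x' hxx
      rcases eq_or_ne x' 0 with h | h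
      · have hx : x = 0 := Fin.le_zero_iff.1 (h ▸ hxx)
        rw [h, hx]
      · simp only [pow_zero, Matrix.one_apply_ne h.symm, zero_div]
        refine div_nonneg ?_ (hπpos x).le
        rw [Matrix.one_apply]
        split_ifs <;> norm_num
    | succ t ih =>
      have hstep : ∀ x, (P ^ (t + 1)) 0 x / π x = ∑ y, Prev x y * ((P ^ t) 0 y / π y) := by
        intro x
        rw [pow_succ, Matrix.mul_apply, Finset.sum_div]
        refine Finset.sum_congr rfl fun y _ => ?_
        have hx := (hπpos x).ne'
        have hy := (hπpos y).ne'
        rw [hPrev]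
        field_simp
      intro x x' hxx
      simp only [hstep]
      have h := sum_mul_le_of_tails_nonneg d (fun y => Prev x' y - Prev x y) _ ih (by
        intro m
        have hm := hmono x x' hxx m
        have hIci : Finset.Ici m = Finset.univ.filter (fun y => m ≤ y) := by ext; simp
        rw [← Finset.sum_filter, Finset.sum_sub_distrib, ← hIci]
        linarith)
      simp only [sub_mul, Finset.sum_sub_distrib, hrow, sub_self, mul_zero] at h
      linarith
  have hmin : ∀ t : ℕ, ∀ x : Fin (d + 1),
      (P ^ t) 0 (Fin.last d) / π (Fin.last d) ≤ (P ^ t) 0 x / π x :=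
    fun t x => hanti t (Fin.le_last x)
  refine ⟨hmin, fun t => le_antisymm (ciSup_le fun x => sub_le_sub_left (hmin t x) 1) ?_⟩
  exact le_ciSup (f := fun x => 1 - (P ^ t) 0 x / π x) (Set.finite_range _).bddAbove (Fin.last d)
end

section
/- The matrix Λ defined by Λ(i,j) := Q_i(0,j) satisfies Λ(d,d) = π(d), and for every integer t ≥ 0, P^t(0,d) = π(d)·P̂^t(0,d). Consequently, for every complex u with |u| < 1, (1−u)·((I − u·P)^{−1})(0,d) = π(d)·∏_{j=0}^{d−1} (1−θ_j)u/(1−θ_j u). (When the time-reversal of P is stochastically monotone, P̂^t(0,d) = P^t(0,d)/π(d) is the distribution function of a fastest strong stationary time of the chain started at 0, which therefore has probability generating function ∏_{j=0}^{d−1} (1−θ_j)u/(1−θ_j u).) -/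
/-!
Write `A` for `P` over `ℂ` and `f = ∏_{j<d} (X - θ_j)`, so that `charpoly A = (X - 1) f`.

Positivity of some power of `P` makes the left fixed vectors of `A` one-dimensional
(`left_fixed_eq_smul`), so any `B` with `B * A = B` and all row sums equal to `s` has every row equal
to `s π` (`fixed_rows`). By Cayley–Hamilton this applies to `f(A)` with `s = f(1)`. If `f(1)` were
`0`, then `f(A) = 0`, and reducing `X ^ n` modulo `f` would express every `(A ^ n)(0, d)` through
powers below `d`, which vanish at `(0, d)` because `P` is skip-free; this contradicts positivity.
Hence `θ_j ≠ 1` for `j < d`, the `Q_k` have row sums `1`, and `Q_d` (a multiple of `f(A)`) has all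
rows equal to `π`.

The relation `Q_k A = θ_k Q_k + (1 - θ_k) Q_{k+1}` says `Λ A = P̂ Λ`. Column `d` of `Λ` is supported
at row `d` by skip-freeness, and row `0` of `Λ` is `e_0`, so evaluating `Λ A ^ t = P̂ ^ t Λ` at `(0, d)`
gives the formula for powers. For the generating function, the same relation multiplied by the
resolvent `(1 - u A)⁻¹` is a first-order recursion in `k` for `(Q_k (1 - u A)⁻¹)(0, d)`.
-/

open Matrix Polynomial

/-! ### Left fixed vectors of a primitive matrix -/

/-- Subtracting from `v` the largest multiple of `π` below it leaves a nonnegative fixed vector with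
a zero entry; positivity of a power of `P` forces it to vanish. -/
theorem left_fixed_eq_smul_real {n : ℕ} (P : Matrix (Fin (n + 1)) (Fin (n + 1)) ℝ)
    (t : ℕ) (ht : ∀ i j, 0 < (P ^ t) i j)
    (π : Fin (n + 1) → ℝ) (hπpos : ∀ x, 0 < π x) (hπ : π ᵥ* P = π)
    (v : Fin (n + 1) → ℝ) (hv : v ᵥ* P = v) : ∃ c : ℝ, ∀ x, v x = c * π x := by
  obtain ⟨y, -, hy⟩ := Finset.exists_min_image Finset.univ (fun x => v x / π x)
    Finset.univ_nonempty
  have hw : ∀ w : Fin (n + 1) → ℝ, w ᵥ* P = w → ∀ s : ℕ, w ᵥ* (P ^ s) = w := by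
    intro w hw s
    induction s with
    | zero => simp
    | succ s ih => rw [pow_succ, ← Matrix.vecMul_vecMul, ih, hw]
  refine ⟨v y / π y, fun x => ?_⟩
  set w : Fin (n + 1) → ℝ := v - (v y / π y) • π with hwdef
  have hfix : w ᵥ* P = w := by
    rw [hwdef, Matrix.sub_vecMul, Matrix.smul_vecMul, hv, hπ]
  have hnn : ∀ x, 0 ≤ w x := by
    intro x
    have := hy x (Finset.mem_univ x)
    rw [le_div_iff₀ (hπpos x)] at this
    simp [hwdef]
    linarith
  have hwy : w y = 0 := by
    have := (hπpos y).ne'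
    simp [hwdef]
    field_simp
    simp
  have hsum : ∑ x, w x * (P ^ t) x y = 0 := by
    have := congrFun (hw w hfix t) y
    rw [hwy] at this
    simpa [Matrix.vecMul, dotProduct] using this
  have h0 := (Finset.sum_eq_zero_iff_of_nonneg
    (fun x _ => mul_nonneg (hnn x) (ht x y).le)).1 hsum x (Finset.mem_univ x)
  have hwx : w x = 0 := by
    rcases mul_eq_zero.1 h0 with h | h
    · exact h
    · exact absurd h (ht x y).ne'
  have : v x - v y / π y * π x = 0 := by simpa [hwdef] using hwx
  linarith

theorem left_fixed_eq_smul {n : ℕ} (P : Matrix (Fin (n + 1)) (Fin (n + 1)) ℝ)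
    (t : ℕ) (ht : ∀ i j, 0 < (P ^ t) i j)
    (π : Fin (n + 1) → ℝ) (hπpos : ∀ x, 0 < π x) (hπ : π ᵥ* P = π)
    (v : Fin (n + 1) → ℂ) (hv : v ᵥ* (P.map (algebraMap ℝ ℂ)) = v) :
    ∃ c : ℂ, ∀ x, v x = c * π x := by
  have hre : (fun x => (v x).re) ᵥ* P = fun x => (v x).re := by
    funext y
    have := congrArg Complex.re (congrFun hv y)
    simpa [Matrix.vecMul, dotProduct] using this
  have him : (fun x => (v x).im) ᵥ* P = fun x => (v x).im := by
    funext y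
    have := congrArg Complex.im (congrFun hv y)
    simpa [Matrix.vecMul, dotProduct] using this
  obtain ⟨a, ha⟩ := left_fixed_eq_smul_real P t ht π hπpos hπ _ hre
  obtain ⟨b, hb⟩ := left_fixed_eq_smul_real P t ht π hπpos hπ _ him
  refine ⟨⟨a, b⟩, fun x => ?_⟩
  apply Complex.ext
  · simpa using ha x
  · simpa using hb x

theorem fixed_rows {n : ℕ} (P : Matrix (Fin (n + 1)) (Fin (n + 1)) ℝ)
    (t : ℕ) (ht : ∀ i j, 0 < (P ^ t) i j)
    (π : Fin (n + 1) → ℝ) (hπpos : ∀ x, 0 < π x) (hπ : π ᵥ* P = π) (hπsum : ∑ x, π x = 1)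
    (B : Matrix (Fin (n + 1)) (Fin (n + 1)) ℂ) (hB : B * P.map (algebraMap ℝ ℂ) = B)
    (s : ℂ) (hs : ∀ i, ∑ j, B i j = s) (i j : Fin (n + 1)) : B i j = s * π j := by
  have hv : B i ᵥ* (P.map (algebraMap ℝ ℂ)) = B i := by
    funext y
    exact congrFun (congrFun hB i) y
  obtain ⟨c, hc⟩ := left_fixed_eq_smul P t ht π hπpos hπ (B i) hv
  have hcs : c = s := by
    rw [← hs i, Finset.sum_congr rfl (fun j _ => hc j), ← Finset.mul_sum, ← Complex.ofReal_sum,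
      hπsum]
    simp
  rw [hc j, hcs]

/-! ### Polynomials in a skip-free matrix -/

theorem pow_skipfree {n : ℕ} (A : Matrix (Fin (n + 1)) (Fin (n + 1)) ℂ)
    (hA : ∀ i j : Fin (n + 1), (i : ℕ) + 1 < (j : ℕ) → A i j = 0) (k : ℕ) :
    ∀ i j : Fin (n + 1), (i : ℕ) + k < (j : ℕ) → (A ^ k) i j = 0 := by
  induction k with
  | zero =>
    intro i j h
    rw [pow_zero, Matrix.one_apply_ne]
    rintro rfl
    simp at h
  | succ k ih =>
    intro i j h
    rw [pow_succ, Matrix.mul_apply]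
    refine Finset.sum_eq_zero fun x _ => ?_
    by_cases hx : (i : ℕ) + k < (x : ℕ)
    · rw [ih i x hx, zero_mul]
    · rw [hA x j (by omega), mul_zero]

/-- If a monic polynomial of degree `n` annihilates a skip-free matrix of size `n + 1`, then all of
its powers vanish in the top right corner. -/
theorem pow_corner_eq_zero {n : ℕ} (A : Matrix (Fin (n + 1)) (Fin (n + 1)) ℂ)
    (hA : ∀ i j : Fin (n + 1), (i : ℕ) + 1 < (j : ℕ) → A i j = 0)
    (f : ℂ[X]) (hf : f.Monic) (hdeg : f.natDegree = n) (hfA : aeval A f = 0) (t : ℕ) :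
    (A ^ t) 0 (Fin.last n) = 0 := by
  have h1 : A ^ t = aeval A ((X : ℂ[X]) ^ t %ₘ f) := by
    have := congrArg (aeval A) (modByMonic_add_div ((X : ℂ[X]) ^ t) f)
    rw [map_add, map_mul, hfA, zero_mul, add_zero] at this
    rw [this]
    simp
  rw [h1, aeval_eq_sum_range, Matrix.sum_apply]
  refine Finset.sum_eq_zero fun k _ => ?_
  rw [Matrix.smul_apply]
  by_cases hk : k < n
  · rw [pow_skipfree A hA k 0 (Fin.last n) (by simpa using hk), smul_zero]
  · rw [coeff_eq_zero_of_degree_lt, zero_smul]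
    refine (degree_modByMonic_lt _ hf).trans_le ?_
    rw [degree_eq_natDegree hf.ne_zero, hdeg]
    exact_mod_cast not_lt.1 hk

/-! ### Row sums and diagonal dominance -/

theorem aeval_rowsum {n : ℕ} (A : Matrix (Fin (n + 1)) (Fin (n + 1)) ℂ)
    (hA : A *ᵥ 1 = 1) (g : ℂ[X]) : (aeval A g) *ᵥ 1 = g.eval 1 • (1 : Fin (n + 1) → ℂ) := by
  have hpow : ∀ k : ℕ, (A ^ k) *ᵥ 1 = 1 := by
    intro k
    induction k with
    | zero => simp
    | succ k ih => rw [pow_succ, ← Matrix.mulVec_mulVec, hA, ih]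
  induction g using Polynomial.induction_on' with
  | add p q hp hq => rw [map_add, Matrix.add_mulVec, hp, hq, eval_add, add_smul]
  | monomial k a =>
    rw [aeval_monomial, ← Algebra.smul_def, Matrix.smul_mulVec, hpow]
    simp

/-- `1 - u P` is strictly diagonally dominant for `|u| < 1`. -/
theorem det_one_sub_smul_ne_zero {n : ℕ} (P : Matrix (Fin (n + 1)) (Fin (n + 1)) ℝ)
    (hnonneg : ∀ i j, 0 ≤ P i j) (hrowsum : ∀ i, ∑ j, P i j = 1) (u : ℂ) (hu : ‖u‖ < 1) :
    (1 - u • P.map (algebraMap ℝ ℂ)).det ≠ 0 := by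
  refine det_ne_zero_of_sum_row_lt_diag fun k => ?_
  have h1 : ∑ j ∈ Finset.univ.erase k, ‖(1 - u • P.map (algebraMap ℝ ℂ)) k j‖
      = ‖u‖ * (1 - P k k) := by
    rw [← hrowsum k, ← Finset.add_sum_erase _ _ (Finset.mem_univ k), add_sub_cancel_left,
      Finset.mul_sum]
    refine Finset.sum_congr rfl fun j hj => ?_
    have hkj : k ≠ j := (Finset.ne_of_mem_erase hj).symm
    simp [Matrix.one_apply_ne hkj, abs_of_nonneg (hnonneg k j)]
  have h2 : 1 - ‖u‖ * P k k ≤ ‖(1 - u • P.map (algebraMap ℝ ℂ)) k k‖ := by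
    have := norm_sub_norm_le (1 : ℂ) (u * (P k k : ℂ))
    simpa [abs_of_nonneg (hnonneg k k)] using this
  rw [h1]
  linarith

/-! ### The intertwining and its consequences -/

/-- For an ergodic upward skip-free kernel `P` with stationary law `π`:
`Λ(d,d) = π(d)`, `P^t(0,d) = π(d)·P̂^t(0,d)` for all `t`, and consequently for `|u| < 1`,
`(1-u)·(I-uP)⁻¹(0,d) = π(d)·∏_{j<d} (1-θ_j)u/(1-θ_j u)` (so a fastest strong stationary
time from state `0` has p.g.f. `∏_{j<d} (1-θ_j)u/(1-θ_j u)`). -/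
theorem stmt16 (d : ℕ) (hd : 1 ≤ d)
    (P : Matrix (Fin (d + 1)) (Fin (d + 1)) ℝ)
    (hnonneg : ∀ i j, 0 ≤ P i j)
    (hrowsum : ∀ i, ∑ j, P i j = 1)
    (hskipfree : ∀ i j : Fin (d + 1), (i : ℕ) + 1 < (j : ℕ) → P i j = 0)
    -- ergodicity (irreducible and aperiodic ⟺ primitive)
    (hergodic : ∃ t : ℕ, ∀ i j, 0 < (P ^ t) i j)
    (π : Fin (d + 1) → ℝ)
    (hπpos : ∀ x, 0 < π x)
    (hπsum : ∑ x, π x = 1)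
    (hπstat : ∀ y, ∑ x, π x * P x y = π y)
    (θ : Fin (d + 1) → ℂ)
    (hθlast : θ (Fin.last d) = 1)
    (hcharpoly : (P.map (algebraMap ℝ ℂ)).charpoly
        = (X - 1) * ∏ j : Fin d, (X - C (θ j.castSucc)))
    (Phat : Matrix (Fin (d + 1)) (Fin (d + 1)) ℂ)
    (hPhat : ∀ i j, Phat i j =
        if j = i then θ i else if (j : ℕ) = (i : ℕ) + 1 then 1 - θ i else 0)
    (Q : Fin (d + 1) → Matrix (Fin (d + 1)) (Fin (d + 1)) ℂ)
    (hQ0 : Q 0 = 1)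
    (hQsucc : ∀ k : Fin d, Q k.succ = Q k.castSucc *
        ((1 - θ k.castSucc)⁻¹ • (P.map (algebraMap ℝ ℂ) - θ k.castSucc • 1)))
    (Λ : Matrix (Fin (d + 1)) (Fin (d + 1)) ℂ)
    (hΛ : ∀ i j, Λ i j = Q i 0 j) :
    Λ (Fin.last d) (Fin.last d) = (π (Fin.last d) : ℂ)
    ∧ (∀ t : ℕ, (((P ^ t) 0 (Fin.last d) : ℝ) : ℂ)
        = (π (Fin.last d) : ℂ) * (Phat ^ t) 0 (Fin.last d))
    ∧ ∀ u : ℂ, ‖u‖ < 1 →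
        (1 - u) * (1 - u • P.map (algebraMap ℝ ℂ))⁻¹ 0 (Fin.last d)
          = (π (Fin.last d) : ℂ)
              * ∏ j : Fin d, ((1 - θ j.castSucc) * u / (1 - θ j.castSucc * u)) := by
  obtain ⟨t₀, ht₀⟩ := hergodic
  have hπ : π ᵥ* P = π := by
    funext y
    simpa [Matrix.vecMul, dotProduct] using hπstat y
  set A : Matrix (Fin (d + 1)) (Fin (d + 1)) ℂ := P.map (algebraMap ℝ ℂ) with hAdef
  have hApow : ∀ t : ℕ, A ^ t = (P ^ t).map (algebraMap ℝ ℂ) := fun t =>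
    (Matrix.map_pow P (algebraMap ℝ ℂ) t).symm
  have hA1 : A *ᵥ 1 = 1 := by
    funext i
    have : ∑ j, (P i j : ℂ) = 1 := by rw [← Complex.ofReal_sum, hrowsum i]; simp
    simpa [Matrix.mulVec, dotProduct, hAdef] using this
  have hAskip : ∀ i j : Fin (d + 1), (i : ℕ) + 1 < (j : ℕ) → A i j = 0 := by
    intro i j h
    simp [hAdef, hskipfree i j h]
  set f : ℂ[X] := ∏ j : Fin d, (X - C (θ j.castSucc)) with hf
  have hmonic : f.Monic := monic_prod_of_monic _ _ fun j _ => monic_X_sub_C _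
  have hdeg : f.natDegree = d := by
    rw [hf, natDegree_prod_of_monic _ _ fun j _ => monic_X_sub_C _]
    simp
  have hfA : aeval A f * A = aeval A f := by
    have h := Matrix.aeval_self_charpoly A
    rw [hcharpoly, mul_comm, map_mul, map_sub, aeval_X, map_one, mul_sub, mul_one,
      sub_eq_zero] at h
    exact h
  have hf1 : f.eval 1 ≠ 0 := by
    intro h0
    have hz : aeval A f = 0 := by
      ext i j
      rw [fixed_rows P t₀ ht₀ π hπpos hπ hπsum _ hfA 0 ?_ i j, zero_mul, Matrix.zero_apply]
      intro i
      have := congrFun (aeval_rowsum A hA1 f) i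
      rw [h0] at this
      simpa [Matrix.mulVec, dotProduct] using this
    have := pow_corner_eq_zero A hAskip f hmonic hdeg hz t₀
    rw [hApow] at this
    exact (ht₀ 0 (Fin.last d)).ne' (by simpa using this)
  have hθ : ∀ k : Fin d, 1 - θ k.castSucc ≠ 0 := by
    intro k hk
    apply hf1
    rw [hf, eval_prod]
    exact Finset.prod_eq_zero (Finset.mem_univ k) (by simpa using hk)
  have hstep : ∀ k : Fin d, Q k.castSucc * A
      = θ k.castSucc • Q k.castSucc + (1 - θ k.castSucc) • Q k.succ := by
    intro k
    rw [hQsucc k, Matrix.mul_smul, smul_smul, mul_inv_cancel₀ (hθ k), one_smul, mul_sub,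
      Matrix.mul_smul, mul_one]
    abel
  have hQ1 : ∀ k, Q k *ᵥ 1 = 1 := by
    intro k
    induction k using Fin.induction with
    | zero => rw [hQ0, Matrix.one_mulVec]
    | succ k ih =>
      rw [hQsucc k, ← Matrix.mulVec_mulVec, Matrix.smul_mulVec, Matrix.sub_mulVec, hA1,
        Matrix.smul_mulVec, Matrix.one_mulVec]
      have : (1 - θ k.castSucc)⁻¹ • ((1 : Fin (d + 1) → ℂ) - θ k.castSucc • 1) = 1 := by
        funext x
        simpa using inv_mul_cancel₀ (hθ k)
      rw [this, ih]
  have hQskip : ∀ k i j : Fin (d + 1), (i : ℕ) + (k : ℕ) < (j : ℕ) → Q k i j = 0 := by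
    intro k
    induction k using Fin.induction with
    | zero =>
      intro i j h
      rw [hQ0, Matrix.one_apply_ne]
      rintro rfl
      simp at h
    | succ k ih =>
      intro i j h
      rw [Fin.val_succ] at h
      rw [hQsucc k, Matrix.mul_apply]
      refine Finset.sum_eq_zero fun x _ => ?_
      by_cases hx : (i : ℕ) + (k : ℕ) < (x : ℕ)
      · rw [ih i x (by simpa using hx), zero_mul]
      · have hne : x ≠ j := by
          rintro rfl
          omega
        simp [hAskip x j (by omega), Matrix.one_apply_ne hne]
  have hQpoly : ∀ k : Fin (d + 1), ∃ c : ℂ,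
      Q k = c • aeval A (∏ j ∈ Finset.univ.filter (fun j : Fin d => (j : ℕ) < (k : ℕ)),
        (X - C (θ j.castSucc))) := by
    intro k
    induction k using Fin.induction with
    | zero => exact ⟨1, by simp [hQ0]⟩
    | succ k ih =>
      obtain ⟨c, hc⟩ := ih
      refine ⟨c * (1 - θ k.castSucc)⁻¹, ?_⟩
      have hset : (Finset.univ.filter fun j : Fin d => (j : ℕ) < (k.succ : ℕ))
          = insert k (Finset.univ.filter fun j : Fin d => (j : ℕ) < (k.castSucc : ℕ)) := by
        ext j
        simp [Fin.ext_iff]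
        omega
      rw [hQsucc k, hc, hset, Finset.prod_insert (by simp), mul_comm (X - C _), map_mul,
        map_sub, aeval_X, aeval_C, Algebra.algebraMap_eq_smul_one, Matrix.smul_mul,
        Matrix.mul_smul, smul_smul]
  have hQlastA : Q (Fin.last d) * A = Q (Fin.last d) := by
    obtain ⟨c, hc⟩ := hQpoly (Fin.last d)
    have : (Finset.univ.filter fun j : Fin d => (j : ℕ) < (Fin.last d : ℕ)) = Finset.univ := by
      ext j
      simp
    rw [this, ← hf] at hc
    rw [hc, Matrix.smul_mul, hfA]
  have hQlast : Q (Fin.last d) 0 (Fin.last d) = (π (Fin.last d) : ℂ) := by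
    rw [fixed_rows P t₀ ht₀ π hπpos hπ hπsum _ hQlastA 1 ?_, one_mul]
    intro i
    simpa [Matrix.mulVec, dotProduct] using congrFun (hQ1 (Fin.last d)) i
  refine ⟨by rw [hΛ, hQlast], ?_, ?_⟩
  · have hrow : ∀ i j, (Λ * A) i j = (Q i * A) 0 j := by
      intro i j
      simp [Matrix.mul_apply, hΛ]
    have hinter : Λ * A = Phat * Λ := by
      ext i j
      rw [hrow, Matrix.mul_apply (M := Phat)]
      induction i using Fin.lastCases with
      | last =>
        rw [hQlastA, Finset.sum_eq_single (Fin.last d), hPhat, if_pos rfl, hθlast, one_mul, hΛ]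
        · intro x _ hx
          have : (x : ℕ) ≠ (Fin.last d : ℕ) + 1 := by
            have := x.isLt
            simp only [Fin.val_last]
            omega
          rw [hPhat, if_neg hx, if_neg this, zero_mul]
        · simp
      | cast k =>
        have hne : k.castSucc ≠ k.succ := Fin.castSucc_lt_succ.ne
        rw [hstep k, Finset.sum_eq_add k.castSucc k.succ hne]
        · simp [hPhat, hΛ, hne.symm]
        · rintro x - ⟨hx1, hx2⟩
          have : (x : ℕ) ≠ (k.castSucc : ℕ) + 1 := fun h => hx2 (Fin.ext (by simpa using h))
          rw [hPhat, if_neg hx1, if_neg this, zero_mul]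
        · simp
        · simp
    have hinterpow : ∀ t : ℕ, Λ * A ^ t = Phat ^ t * Λ := by
      intro t
      induction t with
      | zero => simp
      | succ t ih =>
        rw [pow_succ, ← Matrix.mul_assoc, ih, Matrix.mul_assoc, hinter, ← Matrix.mul_assoc,
          ← pow_succ]
    intro t
    have h := congrFun (congrFun (hinterpow t) 0) (Fin.last d)
    rw [Matrix.mul_apply, Matrix.mul_apply, Finset.sum_eq_single (0 : Fin (d + 1)),
      Finset.sum_eq_single (Fin.last d), hΛ, hΛ, hQ0, hQlast, hApow] at h
    · rw [mul_comm]
      simpa using h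
    · intro x _ hx
      have hlt : (x : ℕ) < d := Fin.lt_last_iff_ne_last.2 hx
      rw [hΛ, hQskip x 0 (Fin.last d) (by simpa using hlt), mul_zero]
    · simp
    · intro x _ hx
      rw [hΛ, hQ0, Matrix.one_apply_ne hx.symm, zero_mul]
    · simp
  · intro u hu
    have hdet := det_one_sub_smul_ne_zero P hnonneg hrowsum u hu
    rw [← hAdef] at hdet
    set R := (1 - u • A)⁻¹ with hR
    have hinv : (1 - u • A) * R = 1 := Matrix.mul_nonsing_inv _ (isUnit_iff_ne_zero.2 hdet)
    have h1u : 1 - u ≠ 0 := by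
      intro h
      rw [← sub_eq_zero.1 h] at hu
      simp at hu
    -- If `θ_k = 1 / u`, then `θ_k` is an eigenvalue of `A` and `1 - u A` is singular.
    have hθu : ∀ k : Fin d, 1 - θ k.castSucc * u ≠ 0 := by
      intro k hk
      have hu0 : u ≠ 0 := by
        rintro rfl
        simp at hk
      have hroot : A.charpoly.eval (θ k.castSucc) = 0 := by
        rw [hcharpoly, eval_mul, hf, eval_prod,
          Finset.prod_eq_zero (Finset.mem_univ k) (by simp), mul_zero]
      rw [Matrix.eval_charpoly] at hroot
      have heq : 1 - u • A = u • (Matrix.scalar (Fin (d + 1)) (θ k.castSucc) - A) := by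
        have : u * θ k.castSucc = 1 := by linear_combination -hk
        rw [smul_sub, Matrix.scalar_apply, ← Matrix.smul_one_eq_diagonal, smul_smul, this, one_smul]
      rw [heq, Matrix.det_smul, hroot, mul_zero] at hdet
      exact hdet rfl
    have hAR : u • (A * R) = R - 1 := by
      rw [sub_mul, one_mul, Matrix.smul_mul] at hinv
      rw [← hinv]
      abel
    have hlastR : (1 - u) * (Q (Fin.last d) * R) 0 (Fin.last d) = (π (Fin.last d) : ℂ) := by
      have h : (1 - u) • (Q (Fin.last d) * R) = Q (Fin.last d) := by
        calc (1 - u) • (Q (Fin.last d) * R)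
            = Q (Fin.last d) * R - u • (Q (Fin.last d) * A * R) := by
              rw [hQlastA, sub_smul, one_smul]
          _ = Q (Fin.last d) := by
              rw [Matrix.mul_assoc, ← Matrix.mul_smul, hAR, mul_sub, mul_one]
              abel
      rw [← hQlast]
      exact congrFun (congrFun h 0) (Fin.last d)
    have hrec : ∀ k : Fin d, (Q k.castSucc * R) 0 (Fin.last d)
        = (1 - θ k.castSucc) * u / (1 - θ k.castSucc * u) * (Q k.succ * R) 0 (Fin.last d) := by
      intro k
      have h : Q k.castSucc * R - Q k.castSucc
          = u • (θ k.castSucc • (Q k.castSucc * R) + (1 - θ k.castSucc) • (Q k.succ * R)) := by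
        rw [← Matrix.smul_mul, ← Matrix.smul_mul, ← add_mul, ← hstep k, Matrix.mul_assoc,
          ← Matrix.mul_smul, hAR, mul_sub, mul_one]
      have h' := congrFun (congrFun h 0) (Fin.last d)
      simp only [Matrix.sub_apply, Matrix.smul_apply, Matrix.add_apply, smul_eq_mul] at h'
      rw [hQskip k.castSucc 0 (Fin.last d) (by simp)] at h'
      rw [div_mul_eq_mul_div, eq_div_iff (hθu k)]
      linear_combination h'
    have hprod : ∀ k : Fin (d + 1), R 0 (Fin.last d)
        = (∏ j ∈ Finset.univ.filter (fun j : Fin d => (j : ℕ) < (k : ℕ)),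
            ((1 - θ j.castSucc) * u / (1 - θ j.castSucc * u))) * (Q k * R) 0 (Fin.last d) := by
      intro k
      induction k using Fin.induction with
      | zero => simp [hQ0]
      | succ k ih =>
        have hset : (Finset.univ.filter fun j : Fin d => (j : ℕ) < (k.succ : ℕ))
            = insert k (Finset.univ.filter fun j : Fin d => (j : ℕ) < (k.castSucc : ℕ)) := by
          ext j
          simp [Fin.ext_iff]
          omega
        rw [ih, hrec k, hset, Finset.prod_insert (by simp)]
        ring
    have hfull : (Finset.univ.filter fun j : Fin d => (j : ℕ) < (Fin.last d : ℕ))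
        = Finset.univ := by
      ext j
      simp
    have h := hprod (Fin.last d)
    rw [hfull] at h
    rw [h, ← hlastR]
    ring
end
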